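/- arXiv:1607.08463 — 2 statements merged into one kernel-verified Lean document; each statement's English description precedes it below -/
import Mathlib

section
/- Let Γ : [0,1] → ℝ³ be a minimizing geodesic joining two points P and Q of ℝ³, and let [a,b] ⊂ [0,1] be an interval such that γ := Π(Γ) avoids p₋ and p₊ for all t ∈ (a,b). Then Γ restricted to (a,b) is smooth and admissible, and γ satisfies on (a,b) the Euler–Lagrange system −(F(γ) γ'/|γ'|)' + |γ'| ∇F(γ) = −λ (γ')^⊥ for some constant λ, where (x,y)^⊥ := (−y,x). Moreover, if Γ contains no vertical line segment over p₋ or p₊, then this system holds with the same constant λ on every such arc of Γ. -/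
open MeasureTheory Set Filter Topology
open scoped ENNReal

noncomputable section

/-- The Euclidean norm of a vector in `ℝ × ℝ`. -/
def enorm2 (v : ℝ × ℝ) : ℝ := Real.sqrt (v.1 ^ 2 + v.2 ^ 2)

/-- The degenerate length `E(γ) = ∫ₐᵇ F(γ(t)) |γ'(t)| dt` of a planar curve. -/
def degLen (F : ℝ × ℝ → ℝ) (a b : ℝ) (γ : ℝ → ℝ × ℝ) : ℝ :=
  ∫ t in a..b, F (γ t) * enorm2 (deriv γ t)

/-- The signed area `𝒜(γ) = ∫ₐᵇ γ¹(t) (γ²)'(t) dt` of a planar curve. -/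
def sArea (a b : ℝ) (γ : ℝ → ℝ × ℝ) : ℝ :=
  ∫ t in a..b, (γ t).1 * deriv (fun s => (γ s).2) t

/-- A locally Lipschitz curve on `[a,b]` joining `p` to `q`. -/
def IsCurve (a b : ℝ) (γ : ℝ → ℝ × ℝ) (p q : ℝ × ℝ) : Prop :=
  a ≤ b ∧ LocallyLipschitz γ ∧ γ a = p ∧ γ b = q

/-- The standing hypotheses on the potential `W`: smooth, nonnegative, vanishing exactly at the
two distinct wells `pm` and `pp`, with positive definite Hessians there, and bounded away from
zero near infinity (`liminf_{|p|→∞} W(p) > 0`). -/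
structure TwoWell (W : ℝ × ℝ → ℝ) (pm pp : ℝ × ℝ) : Prop where
  smooth : ContDiff ℝ (⊤ : ℕ∞) W
  nonneg : ∀ p, 0 ≤ W p
  wells_ne : pm ≠ pp
  zeroSet : ∀ p, W p = 0 ↔ p = pm ∨ p = pp
  hess_m : ∀ v : ℝ × ℝ, v ≠ 0 → 0 < iteratedFDeriv ℝ 2 W pm ![v, v]
  hess_p : ∀ v : ℝ × ℝ, v ≠ 0 → 0 < iteratedFDeriv ℝ 2 W pp ![v, v]
  coercive : ∃ c > 0, ∃ R : ℝ, ∀ p : ℝ × ℝ, R ≤ ‖p‖ → c ≤ W p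

/-- The singular Carnot–Carathéodory distance on `ℝ³` induced by the conformal factor `F`:
the infimum of degenerate lengths of locally Lipschitz planar curves joining the planar
projections of `P` and `Q` whose signed area equals the difference of third coordinates. -/
def dCC (F : ℝ × ℝ → ℝ) (P Q : ℝ × ℝ × ℝ) : ℝ :=
  sInf { x | ∃ a b γ, IsCurve a b γ (P.1, P.2.1) (Q.1, Q.2.1) ∧
      sArea a b γ = Q.2.2 - P.2.2 ∧ degLen F a b γ = x }

/-- The length of a curve in `ℝ³` with respect to the metric `dCC F`: the supremum over
finite partitions of the sums of distances of consecutive sample points. -/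
def pathLen (F : ℝ × ℝ → ℝ) (a b : ℝ) (Γ : ℝ → ℝ × ℝ × ℝ) : ℝ :=
  sSup { x | ∃ (n : ℕ) (t : Fin (n + 1) → ℝ), Monotone t ∧ t 0 = a ∧ t (Fin.last n) = b ∧
      x = ∑ i : Fin n, dCC F (Γ (t i.castSucc)) (Γ (t i.succ)) }

/-- A curve `Γ = (Γ¹,Γ²,Γ³) : ℝ → ℝ³` is admissible on `[a,b]` if
`(Γ³)'(t) = Γ¹(t) (Γ²)'(t)` for a.e. `t ∈ (a,b)`. -/
def Admissible (a b : ℝ) (Γ : ℝ → ℝ × ℝ × ℝ) : Prop :=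
  ∀ᵐ t : ℝ ∂volume, t ∈ Set.Ioo a b →
    deriv (fun s => (Γ s).2.2) t = (Γ t).1 * deriv (fun s => (Γ s).2.1) t

/-- The planar projection `Π(Γ) = (Γ¹,Γ²)` of a curve in `ℝ³`. -/
def projCurve (Γ : ℝ → ℝ × ℝ × ℝ) : ℝ → ℝ × ℝ := fun t => ((Γ t).1, (Γ t).2.1)

/-- `Γ : [0,1] → ℝ³` is a minimizing geodesic from `P` to `Q`: it joins `P` to `Q`, each of its
sub-arcs is length minimizing, and it is the uniform limit (in the metric `dCC F`) of admissible
locally Lipschitz curves joining `P` to `Q`, parametrized with constant degenerate speed, whose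
degenerate lengths converge to `dCC F P Q`. -/
def IsMinGeodesic (F : ℝ × ℝ → ℝ) (P Q : ℝ × ℝ × ℝ) (Γ : ℝ → ℝ × ℝ × ℝ) : Prop :=
  Γ 0 = P ∧ Γ 1 = Q ∧
  (∀ s t : ℝ, 0 ≤ s → s ≤ t → t ≤ 1 → pathLen F s t Γ = dCC F (Γ s) (Γ t)) ∧
  ∃ Γseq : ℕ → ℝ → ℝ × ℝ × ℝ,
    (∀ j, LocallyLipschitz (Γseq j) ∧ Admissible 0 1 (Γseq j) ∧
      Γseq j 0 = P ∧ Γseq j 1 = Q ∧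
      (∀ᵐ t : ℝ ∂volume, t ∈ Set.Ioo (0:ℝ) 1 →
        F (projCurve (Γseq j) t) * enorm2 (deriv (projCurve (Γseq j)) t)
          = degLen F 0 1 (projCurve (Γseq j)))) ∧
    Tendsto (fun j => degLen F 0 1 (projCurve (Γseq j))) atTop (𝓝 (dCC F P Q)) ∧
    (∀ ε > 0, ∃ N : ℕ, ∀ j ≥ N, ∀ t ∈ Set.Icc (0:ℝ) 1, dCC F (Γseq j t) (Γ t) < ε)

/-- The planar gradient of `F`, computed through the Fréchet derivative. -/
def grad2 (F : ℝ × ℝ → ℝ) (p : ℝ × ℝ) : ℝ × ℝ := (fderiv ℝ F p (1, 0), fderiv ℝ F p (0, 1))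

/-- The rotation `(x,y)^⊥ = (−y,x)`. -/
def perp (v : ℝ × ℝ) : ℝ × ℝ := (-v.2, v.1)

/-- The Euler–Lagrange system `−(F(γ) γ'/|γ'|)' + |γ'| ∇F(γ) = −λ (γ')^⊥` at time `t`. -/
def ELeq (F : ℝ × ℝ → ℝ) (lam : ℝ) (γ : ℝ → ℝ × ℝ) (t : ℝ) : Prop :=
  -(deriv (fun s => (F (γ s) / enorm2 (deriv γ s)) • deriv γ s) t)
      + enorm2 (deriv γ t) • grad2 F (γ t)
    = -(lam • perp (deriv γ t))



def Lip (f : ℝ → ℝ) : Prop := ∃ K, LipschitzWith K f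

lemma Lip.continuous {f : ℝ → ℝ} (h : Lip f) : Continuous f := h.choose_spec.continuous

lemma Lip.ae {f : ℝ → ℝ} (h : Lip f) : ∀ᵐ t : ℝ, DifferentiableAt ℝ f t :=
  h.choose_spec.ae_differentiableAt

lemma Lip.bdd {f : ℝ → ℝ} (h : Lip f) : ∃ C, 0 ≤ C ∧ ∀ t, |deriv f t| ≤ C := by
  obtain ⟨K, hK⟩ := h
  exact ⟨K, K.2, fun t => norm_deriv_le_of_lipschitz hK⟩

lemma Lip.ac {f : ℝ → ℝ} (h : Lip f) (a b : ℝ) : AbsolutelyContinuousOnInterval f a b :=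
  (h.choose_spec.lipschitzOnWith).absolutelyContinuousOnInterval

lemma Lip.ftc {f : ℝ → ℝ} (h : Lip f) (a b : ℝ) : ∫ t in a..b, deriv f t = f b - f a :=
  (h.ac a b).integral_deriv_eq_sub

lemma Lip.add {f g : ℝ → ℝ} (hf : Lip f) (hg : Lip g) : Lip (fun t => f t + g t) := by
  obtain ⟨K, hK⟩ := hf
  obtain ⟨K', hK'⟩ := hg
  exact ⟨_, hK.add hK'⟩

lemma Lip.const (c : ℝ) : Lip (fun _ => c) := ⟨0, LipschitzWith.const c⟩

lemma Lip.const_mul {f : ℝ → ℝ} (hf : Lip f) (c : ℝ) : Lip (fun t => c * f t) := by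
  obtain ⟨K, hK⟩ := hf
  refine ⟨Real.nnabs c * K, LipschitzWith.of_dist_le_mul fun x y => ?_⟩
  have := hK.dist_le_mul x y
  rw [Real.dist_eq, ← mul_sub, abs_mul]
  rw [Real.dist_eq] at this
  rw [NNReal.coe_mul, Real.coe_nnabs, mul_assoc]
  exact mul_le_mul_of_nonneg_left this (abs_nonneg c)

lemma Lip.comp {f g : ℝ → ℝ} (hf : Lip f) (hg : Lip g) : Lip (fun t => f (g t)) := by
  obtain ⟨K, hK⟩ := hf
  obtain ⟨K', hK'⟩ := hg
  exact ⟨_, hK.comp hK'⟩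

def clp (a b u : ℝ) : ℝ := max a (min b u)

lemma clp_lipw (a b : ℝ) : LipschitzWith 1 (clp a b) :=
  (LipschitzWith.id.const_min b).const_max a

lemma clp_lip (a b : ℝ) : Lip (clp a b) := ⟨1, clp_lipw a b⟩

lemma clp_mem {a b : ℝ} (h : a ≤ b) (u : ℝ) : clp a b u ∈ Icc a b := by
  unfold clp; exact ⟨le_max_left _ _, max_le h (min_le_left _ _)⟩

lemma clp_eq {a b u : ℝ} (h : u ∈ Icc a b) : clp a b u = u := by
  unfold clp; rw [min_eq_right h.2, max_eq_right h.1]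

lemma clp_le {a b u : ℝ} (hab : a ≤ b) (h : u ≤ a) : clp a b u = a := by
  unfold clp; rw [min_eq_right (h.trans hab), max_eq_left h]

lemma clp_ge {a b u : ℝ} (hab : a ≤ b) (h : b ≤ u) : clp a b u = b := by
  unfold clp; rw [min_eq_left h, max_eq_right hab]

lemma clp_ev {E : Type*} {a b u : ℝ} (f : ℝ → E) (h : u ∈ Ioo a b) :
    (fun t => f (clp a b t)) =ᶠ[𝓝 u] f := by
  filter_upwards [Ioo_mem_nhds h.1 h.2] with t ht
  rw [clp_eq ⟨ht.1.le, ht.2.le⟩]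

lemma lip_clp_of {a b : ℝ} (hab : a ≤ b) {K} {f : ℝ → ℝ} (hf : LipschitzOnWith K f (Icc a b)) :
    Lip (fun t => f (clp a b t)) := by
  refine ⟨K, LipschitzWith.of_dist_le_mul fun x y => ?_⟩
  refine (hf.dist_le_mul _ (clp_mem hab x) _ (clp_mem hab y)).trans ?_
  have := (clp_lipw a b).dist_le_mul x y
  simp only [NNReal.coe_one, one_mul] at this
  exact mul_le_mul_of_nonneg_left this K.2

lemma int_congr_Ioo {a b : ℝ} (hab : a ≤ b) {f g : ℝ → ℝ} (h : ∀ᵐ t : ℝ, t ∈ Ioo a b → f t = g t) :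
    ∫ t in a..b, f t = ∫ t in a..b, g t := by
  apply intervalIntegral.integral_congr_ae
  have : ∀ᵐ t : ℝ, t ≠ b := by
    simp [ae_iff, measure_singleton]
  filter_upwards [h, this] with t ht htb hm
  rw [uIoc_of_le hab] at hm
  exact ht ⟨hm.1, lt_of_le_of_ne hm.2 htb⟩

lemma ii_bdd {a b : ℝ} {f : ℝ → ℝ} (hm : Measurable f) {C : ℝ} (hC : ∀ u ∈ uIcc a b, |f u| ≤ C) :
    IntervalIntegrable f volume a b := by
  rw [intervalIntegrable_iff]
  refine Measure.integrableOn_of_bounded (M := C) (by simp) hm.aestronglyMeasurable ?_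
  rw [ae_restrict_iff' measurableSet_uIoc]
  exact Eventually.of_forall fun u hu => hC u (uIoc_subset_uIcc hu)

/-- degenerate length for scalar curves -/
def lenXY (F : ℝ × ℝ → ℝ) (a b : ℝ) (X Y : ℝ → ℝ) : ℝ :=
  ∫ t in a..b, F (X t, Y t) * Real.sqrt (deriv X t ^ 2 + deriv Y t ^ 2)

def arXY (a b : ℝ) (X Y : ℝ → ℝ) : ℝ := ∫ t in a..b, X t * deriv Y t

def Rch (F : ℝ × ℝ → ℝ) (P Q : ℝ × ℝ × ℝ) (x : ℝ) (a b : ℝ) (X Y : ℝ → ℝ) : Prop :=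
  a ≤ b ∧ Lip X ∧ Lip Y ∧ X a = P.1 ∧ Y a = P.2.1 ∧ X b = Q.1 ∧ Y b = Q.2.1 ∧
    arXY a b X Y = Q.2.2 - P.2.2 ∧ lenXY F a b X Y = x

def Reach (F : ℝ × ℝ → ℝ) (P Q : ℝ × ℝ × ℝ) (x : ℝ) : Prop := ∃ a b X Y, Rch F P Q x a b X Y

lemma deriv_pair_fst {γ : ℝ → ℝ × ℝ} {t : ℝ} (h1 : DifferentiableAt ℝ (fun s => (γ s).1) t)
    (h2 : DifferentiableAt ℝ (fun s => (γ s).2) t) :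
    deriv γ t = (deriv (fun s => (γ s).1) t, deriv (fun s => (γ s).2) t) :=
  (h1.hasDerivAt.prodMk h2.hasDerivAt).deriv

lemma dCC_eq (F : ℝ × ℝ → ℝ) (P Q : ℝ × ℝ × ℝ) : dCC F P Q = sInf {x | Reach F P Q x} := by
  unfold dCC
  congr 1
  ext x
  constructor
  · rintro ⟨a, b, γ, ⟨hab, hl, ha, hb⟩, hA, hE⟩
    obtain ⟨K, hK⟩ := (hl.locallyLipschitzOn (s := Icc a b)).exists_lipschitzOnWith_of_compact
      isCompact_Icc
    have hK1 : LipschitzOnWith K (fun s => (γ s).1) (Icc a b) := by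
      have := LipschitzWith.prod_fst.comp_lipschitzOnWith hK
      rwa [one_mul] at this
    have hK2 : LipschitzOnWith K (fun s => (γ s).2) (Icc a b) := by
      have := LipschitzWith.prod_snd.comp_lipschitzOnWith hK
      rwa [one_mul] at this
    have L1 := lip_clp_of hab hK1
    have L2 := lip_clp_of hab hK2
    refine ⟨a, b, _, _, hab, L1, L2, ?_, ?_, ?_, ?_, ?_, ?_⟩
    · simp only [clp_eq (left_mem_Icc.2 hab), ha]
    · simp only [clp_eq (left_mem_Icc.2 hab), ha]
    · simp only [clp_eq (right_mem_Icc.2 hab), hb]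
    · simp only [clp_eq (right_mem_Icc.2 hab), hb]
    · rw [← hA]
      apply int_congr_Ioo hab
      refine Eventually.of_forall fun t ht => ?_
      simp only [(clp_ev (fun s => (γ s).2) ht).deriv_eq, clp_eq (Ioo_subset_Icc_self ht)]
    · rw [← hE]
      apply int_congr_Ioo hab
      filter_upwards [L1.ae, L2.ae] with t h1 h2 ht
      have e1 := clp_ev (fun s => (γ s).1) ht
      have e2 := clp_ev (fun s => (γ s).2) ht
      rw [e1.differentiableAt_iff] at h1
      rw [e2.differentiableAt_iff] at h2
      rw [e1.deriv_eq, e2.deriv_eq, deriv_pair_fst h1 h2]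
      simp only [clp_eq (Ioo_subset_Icc_self ht), enorm2]
  · rintro ⟨a, b, X, Y, hab, ⟨K1, hX⟩, ⟨K2, hY⟩, h1, h2, h3, h4, hA, hE⟩
    refine ⟨a, b, fun t => (X t, Y t), ⟨hab, (hX.prodMk hY).locallyLipschitz, ?_, ?_⟩, hA, ?_⟩
    · simp [h1, h2]
    · simp [h3, h4]
    · rw [← hE]
      apply int_congr_Ioo hab
      filter_upwards [hX.ae_differentiableAt, hY.ae_differentiableAt] with t t1 t2 _
      rw [deriv_pair_fst (γ := fun t => (X t, Y t)) t1 t2]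
      rfl

lemma Reach.nonneg {F : ℝ × ℝ → ℝ} (hF : ∀ p, 0 ≤ F p) {P Q x} (h : Reach F P Q x) : 0 ≤ x := by
  obtain ⟨a, b, X, Y, hab, -, -, -, -, -, -, -, rfl⟩ := h
  exact intervalIntegral.integral_nonneg hab fun u _ => mul_nonneg (hF _) (Real.sqrt_nonneg _)

lemma dCC_le {F : ℝ × ℝ → ℝ} (hF : ∀ p, 0 ≤ F p) {P Q x} (h : Reach F P Q x) :
    dCC F P Q ≤ x := by
  rw [dCC_eq]
  exact csInf_le ⟨0, fun y hy => Reach.nonneg hF hy⟩ h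

lemma dCC_nonneg {F : ℝ × ℝ → ℝ} (hF : ∀ p, 0 ≤ F p) (P Q) : 0 ≤ dCC F P Q := by
  rw [dCC_eq]
  exact Real.sInf_nonneg fun y hy => Reach.nonneg hF hy

lemma reach_exists (F : ℝ × ℝ → ℝ) (P Q : ℝ × ℝ × ℝ) : ∃ x, Reach F P Q x := by
  obtain ⟨p1, p2, p3⟩ := P
  obtain ⟨q1, q2, q3⟩ := Q
  -- area without wiggle
  obtain ⟨B, hB⟩ : ∃ B : ℝ, (p1 * (q2 - p2) + (q1 - p1) * (q2 - p2) / 2 + (q2 - p2) / 6)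
    - B / 30 = q3 - p3 := ⟨30 * ((p1 * (q2 - p2) + (q1 - p1) * (q2 - p2) / 2 + (q2 - p2) / 6)
    - (q3 - p3)), by ring⟩
  let X : ℝ → ℝ := fun u => p1 + u * (q1 - p1) + u * (1 - u)
  let Y : ℝ → ℝ := fun u => p2 + u * (q2 - p2) + B * (u * (1 - u) * (1 - 2 * u))
  have hX : ContDiff ℝ 1 X := by fun_prop
  have hY : ContDiff ℝ 1 Y := by fun_prop
  have h01 : (0:ℝ) ≤ 1 := zero_le_one
  obtain ⟨K1, hK1⟩ := (hX.locallyLipschitz.locallyLipschitzOn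
    (s := Icc 0 1)).exists_lipschitzOnWith_of_compact isCompact_Icc
  obtain ⟨K2, hK2⟩ := (hY.locallyLipschitz.locallyLipschitzOn
    (s := Icc 0 1)).exists_lipschitzOnWith_of_compact isCompact_Icc
  refine ⟨_, 0, 1, _, _, h01, lip_clp_of h01 hK1, lip_clp_of h01 hK2, ?_, ?_, ?_, ?_, ?_, rfl⟩
  · simp [clp_eq, X]
  · simp [clp_eq, Y]
  · simp [clp_eq, X]
  · simp [clp_eq, Y]
  · have hY' : ∀ u, HasDerivAt Y ((q2 - p2) + B * (1 - 6 * u + 6 * u ^ 2)) u := by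
      intro u
      have h1 : HasDerivAt (fun u : ℝ => p2 + u * (q2 - p2) + B * (u - 3 * u ^ 2 + 2 * u ^ 3))
        (0 + 1 * (q2 - p2) + B * (1 - 3 * (2 * u ^ (2 - 1) * 1) + 2 * (3 * u ^ (3 - 1) * 1))) u := by
        have hi := hasDerivAt_id u
        exact (((hasDerivAt_const u p2).add (hi.mul_const _)).add
          (((hi.sub ((hi.pow 2).const_mul 3)).add ((hi.pow 3).const_mul 2)).const_mul B))
      have h2 : Y = (fun u : ℝ => p2 + u * (q2 - p2) + B * (u - 3 * u ^ 2 + 2 * u ^ 3)) := by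
        funext u; simp only [Y]; ring
      rw [h2]
      convert h1 using 1
      norm_num; left; ring
    have e : arXY 0 1 (fun t => X (clp 0 1 t)) (fun t => Y (clp 0 1 t))
        = ∫ u in (0:ℝ)..1, X u * ((q2 - p2) + B * (1 - 6 * u + 6 * u ^ 2)) := by
      apply int_congr_Ioo h01
      refine Eventually.of_forall fun t ht => ?_
      simp only [(clp_ev Y ht).deriv_eq, clp_eq (Ioo_subset_Icc_self ht), (hY' t).deriv]
    rw [e]
    have e2 : ∀ u : ℝ, HasDerivAt (fun u : ℝ => p1 * (q2 - p2) * u + (p1 * B) * (u - 3 * u ^ 2 + 2 * u ^ 3)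
      + (q1 - p1 + 1) * ((q2 - p2) * (u ^ 2 / 2) + B * (u ^ 2 / 2 - 2 * u ^ 3 + 3 / 2 * u ^ 4))
      - ((q2 - p2) * (u ^ 3 / 3) + B * (u ^ 3 / 3 - 3 / 2 * u ^ 4 + 6 / 5 * u ^ 5)))
      (X u * ((q2 - p2) + B * (1 - 6 * u + 6 * u ^ 2))) u := by
      intro u
      have hi := hasDerivAt_id u
      have h2 := hi.pow 2
      have h3 := hi.pow 3
      have h4 := hi.pow 4
      have h5 := hi.pow 5
      have := (((hi.const_mul (p1 * (q2 - p2))).add (((hi.sub (h2.const_mul 3)).add (h3.const_mul 2)).const_mul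
        (p1 * B))).add ((((h2.div_const 2).const_mul (q2 - p2)).add ((((h2.div_const 2).sub (h3.const_mul 2)).add
          (h4.const_mul (3 / 2))).const_mul B)).const_mul (q1 - p1 + 1))).sub
          (((h3.div_const 3).const_mul (q2 - p2)).add ((((h3.div_const 3).sub (h4.const_mul (3 / 2))).add
          (h5.const_mul (6 / 5))).const_mul B))
      refine this.congr_deriv ?_
      simp only [X, id]
      norm_num
      ring
    rw [intervalIntegral.integral_eq_sub_of_hasDerivAt (fun u _ => e2 u)
      (Continuous.intervalIntegrable (by simp only [X]; fun_prop) _ _)]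
    rw [← hB]
    ring


lemma sqrt_le_bd {x y C D : ℝ} (hx : |x| ≤ C) (hy : |y| ≤ D) :
    |Real.sqrt (x ^ 2 + y ^ 2)| ≤ C + D := by
  rw [abs_of_nonneg (Real.sqrt_nonneg _)]
  have hC : 0 ≤ C := (abs_nonneg _).trans hx
  have hD : 0 ≤ D := (abs_nonneg _).trans hy
  apply Real.sqrt_le_iff.2
  refine ⟨by positivity, ?_⟩
  have h1 : x ^ 2 ≤ C ^ 2 := by rw [← sq_abs x]; gcongr
  have h2 : y ^ 2 ≤ D ^ 2 := by rw [← sq_abs y]; gcongr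
  nlinarith [mul_nonneg hC hD]

lemma ii_cont_mul {a b : ℝ} {f g : ℝ → ℝ} (hf : Continuous f) (hg : Measurable g) {C : ℝ}
    (hC : ∀ u, |g u| ≤ C) : IntervalIntegrable (fun t => f t * g t) volume a b :=
  IntervalIntegrable.continuousOn_mul (ii_bdd hg fun u _ => hC u) hf.continuousOn

lemma meas_speed (X Y : ℝ → ℝ) :
    Measurable fun t => Real.sqrt (deriv X t ^ 2 + deriv Y t ^ 2) :=
  (((measurable_deriv X).pow_const 2).add ((measurable_deriv Y).pow_const 2)).sqrt

lemma speed_bd {X Y : ℝ → ℝ} (hX : Lip X) (hY : Lip Y) :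
    ∃ C, ∀ t, |Real.sqrt (deriv X t ^ 2 + deriv Y t ^ 2)| ≤ C := by
  obtain ⟨C, -, hC⟩ := hX.bdd
  obtain ⟨D, -, hD⟩ := hY.bdd
  exact ⟨C + D, fun t => sqrt_le_bd (hC t) (hD t)⟩

lemma len_ii {F : ℝ × ℝ → ℝ} (hF : Continuous F) {X Y : ℝ → ℝ} (hX : Lip X) (hY : Lip Y) (a b : ℝ) :
    IntervalIntegrable (fun t => F (X t, Y t) * Real.sqrt (deriv X t ^ 2 + deriv Y t ^ 2))
      volume a b := by
  obtain ⟨C, hC⟩ := speed_bd hX hY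
  exact ii_cont_mul (hF.comp (hX.continuous.prodMk hY.continuous)) (meas_speed X Y) hC

lemma ar_ii {X Y : ℝ → ℝ} (hX : Lip X) (hY : Lip Y) (a b : ℝ) :
    IntervalIntegrable (fun t => X t * deriv Y t) volume a b := by
  obtain ⟨C, -, hC⟩ := hY.bdd
  exact ii_cont_mul hX.continuous (measurable_deriv Y) hC

lemma len_congr {F : ℝ × ℝ → ℝ} {a b : ℝ} (hab : a ≤ b) {X Y X' Y' : ℝ → ℝ}
    (h1 : ∀ t ∈ Ioo a b, X t = X' t) (h2 : ∀ t ∈ Ioo a b, Y t = Y' t) :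
    lenXY F a b X Y = lenXY F a b X' Y' ∧ arXY a b X Y = arXY a b X' Y' := by
  have d : ∀ {f g : ℝ → ℝ}, (∀ t ∈ Ioo a b, f t = g t) → ∀ t ∈ Ioo a b, deriv f t = deriv g t := by
    intro f g h t ht
    apply Filter.EventuallyEq.deriv_eq
    filter_upwards [Ioo_mem_nhds ht.1 ht.2] with u hu using h u hu
  constructor
  · refine int_congr_Ioo hab (Eventually.of_forall fun t ht => ?_)
    simp only [d h1 t ht, d h2 t ht, h1 t ht, h2 t ht]
  · refine int_congr_Ioo hab (Eventually.of_forall fun t ht => ?_)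
    simp only [d h2 t ht, h1 t ht]

lemma len_shift {F : ℝ × ℝ → ℝ} {a b c : ℝ} {X Y : ℝ → ℝ} :
    lenXY F (a + c) (b + c) (fun t => X (t - c)) (fun t => Y (t - c)) = lenXY F a b X Y ∧
    arXY (a + c) (b + c) (fun t => X (t - c)) (fun t => Y (t - c)) = arXY a b X Y := by
  unfold lenXY arXY
  simp only [deriv_comp_sub_const]
  constructor
  · rw [intervalIntegral.integral_comp_sub_right (fun t => F (X t, Y t) * Real.sqrt (deriv X t ^ 2 + deriv Y t ^ 2)) c]
    simp
  · rw [intervalIntegral.integral_comp_sub_right (fun t => X t * deriv Y t) c]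
    simp

lemma Reach.symm {F : ℝ × ℝ → ℝ} {P Q x} (h : Reach F P Q x) : Reach F Q P x := by
  obtain ⟨a, b, X, Y, hab, hX, hY, h1, h2, h3, h4, hA, hE⟩ := h
  have hn : Lip (fun t => -t) := ⟨1, LipschitzWith.id.neg⟩
  refine ⟨-b, -a, fun t => X (-t), fun t => Y (-t), by linarith, hX.comp hn, hY.comp hn,
    by simpa, by simpa, by simpa, by simpa, ?_, ?_⟩
  · have : Q.2.2 - P.2.2 = -(P.2.2 - Q.2.2) := by ring
    rw [this] at hA
    rw [← neg_neg (P.2.2 - Q.2.2), ← hA]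
    unfold arXY
    simp only [deriv_comp_neg]
    rw [intervalIntegral.integral_comp_neg (fun t => X t * -deriv Y t)]
    simp
  · rw [← hE]
    unfold lenXY
    simp only [deriv_comp_neg]
    rw [intervalIntegral.integral_comp_neg (fun t => F (X t, Y t) * Real.sqrt ((-deriv X t) ^ 2 + (-deriv Y t) ^ 2))]
    simp

lemma Reach.concat {F : ℝ × ℝ → ℝ} (hF : Continuous F) {P Q R x y} (h : Reach F P Q x)
    (h' : Reach F Q R y) : Reach F P R (x + y) := by
  obtain ⟨a, b, X, Y, hab, hX, hY, h1, h2, h3, h4, hA, hE⟩ := h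
  obtain ⟨c, d, X', Y', hcd, hX', hY', k1, k2, k3, k4, kA, kE⟩ := h'
  have hs : Lip (fun t => t - (b - c)) := ⟨1, by
    have := (LipschitzWith.id (α := ℝ)).sub (LipschitzWith.const (b - c))
    simpa using this⟩
  -- generic glue
  let G : (ℝ → ℝ) → (ℝ → ℝ) → ℝ → ℝ := fun f g t => f (clp a b t) + g (clp c d (t - (b - c))) + (- f b)
  have hGl : ∀ f g, Lip f → Lip g → Lip (G f g) := fun f g hf hg =>
    ((hf.comp (clp_lip a b)).add (hg.comp ((clp_lip c d).comp hs))).add (Lip.const _)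
  have G1 : ∀ f g : ℝ → ℝ, f b = g c → ∀ t ∈ Icc a b, G f g t = f t := by
    intro f g hfg t ht
    simp only [G]
    rw [clp_eq ht, clp_le hcd (by linarith [ht.2])]; linarith
  have G2 : ∀ f g : ℝ → ℝ, ∀ t ∈ Icc b (d + (b - c)), G f g t = g (t - (b - c)) := by
    intro f g t ht
    simp only [G]
    rw [clp_ge hab ht.1, clp_eq ⟨by linarith [ht.1], by linarith [ht.2]⟩]; ring
  have eX : X b = X' c := by rw [h3, k1]
  have eY : Y b = Y' c := by rw [h4, k2]
  have hbd : b ≤ d + (b - c) := by linarith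
  have c1 := len_congr (F := F) hab (fun t ht => G1 X X' eX t (Ioo_subset_Icc_self ht))
    (fun t ht => G1 Y Y' eY t (Ioo_subset_Icc_self ht))
  have c2 := len_congr (F := F) hbd (fun t ht => G2 X X' t (Ioo_subset_Icc_self ht))
    (fun t ht => G2 Y Y' t (Ioo_subset_Icc_self ht))
  have c3 := len_shift (F := F) (a := c) (b := d) (c := b - c) (X := X') (Y := Y')
  rw [add_sub_cancel] at c3
  have LX := hGl X X' hX hX'
  have LY := hGl Y Y' hY hY'
  refine ⟨a, d + (b - c), G X X', G Y Y', by linarith, LX, LY, ?_, ?_, ?_, ?_, ?_, ?_⟩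
  · rw [G1 _ _ eX a ⟨le_rfl, hab⟩, h1]
  · rw [G1 _ _ eY a ⟨le_rfl, hab⟩, h2]
  · rw [G2 _ _ _ ⟨hbd, le_rfl⟩, add_sub_cancel_right, k3]
  · rw [G2 _ _ _ ⟨hbd, le_rfl⟩, add_sub_cancel_right, k4]
  · have : arXY a (d + (b - c)) (G X X') (G Y Y') = arXY a b (G X X') (G Y Y') +
        arXY b (d + (b - c)) (G X X') (G Y Y') :=
      (intervalIntegral.integral_add_adjacent_intervals (ar_ii LX LY _ _) (ar_ii LX LY _ _)).symm
    rw [this, c1.2, c2.2, c3.2, hA, kA]; ring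
  · have : lenXY F a (d + (b - c)) (G X X') (G Y Y') = lenXY F a b (G X X') (G Y Y') +
        lenXY F b (d + (b - c)) (G X X') (G Y Y') :=
      (intervalIntegral.integral_add_adjacent_intervals (len_ii hF LX LY _ _) (len_ii hF LX LY _ _)).symm
    rw [this, c1.1, c2.1, c3.1, hE, kE]

lemma dCC_symm (F : ℝ × ℝ → ℝ) (P Q) : dCC F P Q = dCC F Q P := by
  rw [dCC_eq, dCC_eq]
  congr 1
  ext x
  exact ⟨Reach.symm, Reach.symm⟩

lemma dCC_lt {F : ℝ × ℝ → ℝ} {P Q c} (h : dCC F P Q < c) : ∃ x, x < c ∧ Reach F P Q x := by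
  rw [dCC_eq] at h
  obtain ⟨x, hx, hxc⟩ := exists_lt_of_csInf_lt (reach_exists F P Q) h
  exact ⟨x, hxc, hx⟩

lemma dCC_tri {F : ℝ × ℝ → ℝ} (hF : Continuous F) (h0 : ∀ p, 0 ≤ F p) (P Q R) :
    dCC F P R ≤ dCC F P Q + dCC F Q R := by
  refine le_of_forall_pos_le_add fun ε hε => ?_
  obtain ⟨x, hx, h1⟩ := dCC_lt (show dCC F P Q < dCC F P Q + ε / 2 by linarith)
  obtain ⟨y, hy, h2⟩ := dCC_lt (show dCC F Q R < dCC F Q R + ε / 2 by linarith)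
  have := dCC_le h0 (h1.concat hF h2)
  linarith

lemma dCC_shift (F : ℝ × ℝ → ℝ) (P Q : ℝ × ℝ × ℝ) (v : ℝ) :
    dCC F (P.1, P.2.1, P.2.2 + v) (Q.1, Q.2.1, Q.2.2 + v) = dCC F P Q := by
  unfold dCC
  simp only [add_sub_add_right_eq_sub]


lemma dCC_le_curve {F : ℝ × ℝ → ℝ} (hF : ∀ p, 0 ≤ F p) {P Q : ℝ × ℝ × ℝ} {a b : ℝ} {γ : ℝ → ℝ × ℝ}
    (h : IsCurve a b γ (P.1, P.2.1) (Q.1, Q.2.1)) (hA : sArea a b γ = Q.2.2 - P.2.2) :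
    dCC F P Q ≤ degLen F a b γ := by
  refine csInf_le ⟨0, ?_⟩ ⟨a, b, γ, h, hA, rfl⟩
  rintro x ⟨a, b, γ, h, -, rfl⟩
  exact intervalIntegral.integral_nonneg h.1 fun u _ => mul_nonneg (hF _) (Real.sqrt_nonneg _)

lemma lip_proj (n : ℝ × ℝ × ℝ → ℝ) (hn : LipschitzWith 1 n) {Γ : ℝ → ℝ × ℝ × ℝ}
    (h : LocallyLipschitz Γ) (a b : ℝ) : ∃ K, LipschitzOnWith K (fun s => n (Γ s)) (uIcc a b) := by
  obtain ⟨K, hK⟩ := (h.locallyLipschitzOn (s := uIcc a b)).exists_lipschitzOnWith_of_compact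
    isCompact_uIcc
  exact ⟨_, hn.comp_lipschitzOnWith hK⟩

lemma lw1 : LipschitzWith 1 (fun p : ℝ × ℝ × ℝ => p.1) := LipschitzWith.prod_fst
lemma lw2 : LipschitzWith 1 (fun p : ℝ × ℝ × ℝ => p.2.1) := by
  have := (LipschitzWith.prod_fst (α := ℝ) (β := ℝ)).comp (LipschitzWith.prod_snd (α := ℝ) (β := ℝ × ℝ))
  rw [one_mul] at this
  exact this
lemma lw3 : LipschitzWith 1 (fun p : ℝ × ℝ × ℝ => p.2.2) := by
  have := (LipschitzWith.prod_snd (α := ℝ) (β := ℝ)).comp (LipschitzWith.prod_snd (α := ℝ) (β := ℝ × ℝ))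
  rw [one_mul] at this
  exact this

lemma seq_dist {F : ℝ × ℝ → ℝ} (hF : ∀ p, 0 ≤ F p) {Γ : ℝ → ℝ × ℝ × ℝ} {L : ℝ}
    (hl : LocallyLipschitz Γ) (ha : Admissible 0 1 Γ)
    (hs : ∀ᵐ t : ℝ ∂volume, t ∈ Set.Ioo (0:ℝ) 1 →
        F (projCurve Γ t) * enorm2 (deriv (projCurve Γ) t) = L)
    {s t : ℝ} (h0 : 0 ≤ s) (hst : s ≤ t) (h1 : t ≤ 1) :
    dCC F (Γ s) (Γ t) ≤ (t - s) * L := by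
  have hsub : Ioo s t ⊆ Ioo 0 1 := Ioo_subset_Ioo h0 h1
  have e : degLen F s t (projCurve Γ) = (t - s) * L := by
    unfold degLen
    rw [int_congr_Ioo hst (g := fun _ => L)]
    · simp
    · filter_upwards [hs] with u hu hu' using hu (hsub hu')
  rw [← e]
  apply dCC_le_curve hF
  · refine ⟨hst, ?_, rfl, rfl⟩
    intro u
    obtain ⟨K, V, hV, hK⟩ := hl u
    exact ⟨_, V, hV, (lw1.prodMk lw2).comp_lipschitzOnWith hK⟩
  · obtain ⟨K, hK⟩ := lip_proj _ lw3 hl s t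
    rw [← hK.absolutelyContinuousOnInterval.integral_deriv_eq_sub]
    apply int_congr_Ioo hst
    filter_upwards [ha] with u hu hu'
    rw [hu (hsub hu')]
    rfl

lemma geod_dist {F : ℝ × ℝ → ℝ} (hF : Continuous F) (h0 : ∀ p, 0 ≤ F p) {P Q Γ}
    (hΓ : IsMinGeodesic F P Q Γ) {s t : ℝ} (hs : 0 ≤ s) (hst : s ≤ t) (ht : t ≤ 1) :
    dCC F (Γ s) (Γ t) = (t - s) * dCC F P Q := by
  obtain ⟨hP, hQ, -, Γj, hj, hL, hc⟩ := hΓ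
  have up : ∀ {s t : ℝ}, 0 ≤ s → s ≤ t → t ≤ 1 → dCC F (Γ s) (Γ t) ≤ (t - s) * dCC F P Q := by
    intro s t hs hst ht
    refine le_of_forall_pos_le_add fun ε hε => ?_
    obtain ⟨N, hN⟩ := hc (ε / 3) (by linarith)
    have hL' : Tendsto (fun j => (t - s) * degLen F 0 1 (projCurve (Γj j))) atTop
      (𝓝 ((t - s) * dCC F P Q)) := hL.const_mul _
    obtain ⟨j, hj1, hj2⟩ := ((hL'.eventually (gt_mem_nhds
      (show (t - s) * dCC F P Q < (t - s) * dCC F P Q + ε / 3 by linarith))).and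
      (eventually_ge_atTop N)).exists
    have a1 := hN j hj2 s ⟨hs, hst.trans ht⟩
    have a2 := hN j hj2 t ⟨hs.trans hst, ht⟩
    obtain ⟨b1, b2, -, -, b5⟩ := hj j
    have a3 := seq_dist h0 b1 b2 b5 hs hst ht
    have a4 := dCC_tri hF h0 (Γ s) (Γj j s) (Γ t)
    have a5 := dCC_tri hF h0 (Γj j s) (Γj j t) (Γ t)
    rw [dCC_symm F (Γ s) (Γj j s)] at a4
    linarith
  have a1 := up le_rfl hs (hst.trans ht)
  have a2 := up hs hst ht
  have a3 := up (hs.trans hst) ht le_rfl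
  have a4 := dCC_tri hF h0 (Γ 0) (Γ s) (Γ 1)
  have a5 := dCC_tri hF h0 (Γ s) (Γ t) (Γ 1)
  rw [hP, hQ] at *
  linarith

lemma planar_le {X Y : ℝ → ℝ} (hX : Lip X) (hY : Lip Y) {a t : ℝ} (hat : a ≤ t) :
    Real.sqrt ((X t - X a) ^ 2 + (Y t - Y a) ^ 2) ≤
      ∫ u in a..t, Real.sqrt (deriv X u ^ 2 + deriv Y u ^ 2) := by
  set N := Real.sqrt ((X t - X a) ^ 2 + (Y t - Y a) ^ 2) with hN
  obtain ⟨C, hC⟩ := speed_bd hX hY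
  obtain ⟨CX, -, hCX⟩ := hX.bdd
  obtain ⟨CY, -, hCY⟩ := hY.bdd
  have hi := ii_bdd (a := a) (b := t) (meas_speed X Y) fun u _ => hC u
  have hiX := ii_bdd (a := a) (b := t) (measurable_deriv X) fun u _ => hCX u
  have hiY := ii_bdd (a := a) (b := t) (measurable_deriv Y) fun u _ => hCY u
  have hN0 : 0 ≤ N := Real.sqrt_nonneg _
  have hNN : N ^ 2 = (X t - X a) ^ 2 + (Y t - Y a) ^ 2 := Real.sq_sqrt (by positivity)
  have key : N ^ 2 ≤ N * ∫ u in a..t, Real.sqrt (deriv X u ^ 2 + deriv Y u ^ 2) := by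
    rw [← intervalIntegral.integral_const_mul]
    have : N ^ 2 = ∫ u in a..t, ((X t - X a) * deriv X u + (Y t - Y a) * deriv Y u) := by
      rw [intervalIntegral.integral_add (hiX.const_mul _) (hiY.const_mul _),
        intervalIntegral.integral_const_mul, intervalIntegral.integral_const_mul, hX.ftc, hY.ftc, hNN]
      ring
    rw [this]
    apply intervalIntegral.integral_mono_on hat ((hiX.const_mul _).add (hiY.const_mul _))
      (hi.const_mul _)
    intro u _
    rw [hN, ← Real.sqrt_mul (by positivity)]
    apply Real.le_sqrt_of_sq_le
    nlinarith [sq_nonneg ((X t - X a) * deriv Y u - (Y t - Y a) * deriv X u)]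
  rcases hN0.eq_or_lt with h | h
  · rw [← h]; exact intervalIntegral.integral_nonneg hat fun u _ => Real.sqrt_nonneg _
  · nlinarith

lemma abs_le_sqrt_l (x y : ℝ) : |x| ≤ Real.sqrt (x ^ 2 + y ^ 2) := by
  apply Real.le_sqrt_of_sq_le; rw [sq_abs]; nlinarith [sq_nonneg y]

lemma abs_le_sqrt_r (x y : ℝ) : |y| ≤ Real.sqrt (x ^ 2 + y ^ 2) := by
  apply Real.le_sqrt_of_sq_le; rw [sq_abs]; nlinarith [sq_nonneg x]

lemma reach_local {F : ℝ × ℝ → ℝ} (hF : Continuous F) (h0 : ∀ p, 0 ≤ F p) {P Q : ℝ × ℝ × ℝ}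
    {c r x : ℝ} (hc : 0 < c) (hr : 0 < r)
    (hlow : ∀ p : ℝ × ℝ, |p.1 - P.1| ≤ r → |p.2 - P.2.1| ≤ r → c ≤ F p)
    (h : Reach F P Q x) (hx : x < c * r) :
    Real.sqrt ((Q.1 - P.1) ^ 2 + (Q.2.1 - P.2.1) ^ 2) ≤ x / c ∧
    |Q.2.2 - P.2.2 - P.1 * (Q.2.1 - P.2.1)| ≤ (x / c) ^ 2 := by
  obtain ⟨a, b, X, Y, hab, hX, hY, h1, h2, h3, h4, hA, hE⟩ := h
  obtain ⟨C, hC⟩ := speed_bd hX hY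
  have hi : ∀ a b : ℝ, IntervalIntegrable (fun u => Real.sqrt (deriv X u ^ 2 + deriv Y u ^ 2)) volume a b :=
    fun a b => ii_bdd (meas_speed X Y) fun u _ => hC u
  set S : ℝ → ℝ := fun t => ∫ u in a..t, Real.sqrt (deriv X u ^ 2 + deriv Y u ^ 2) with hS
  have Scont : Continuous S := intervalIntegral.continuous_primitive hi a
  have Smono : ∀ u t, a ≤ u → u ≤ t → S u ≤ S t := by
    intro u t _ hut
    have := intervalIntegral.integral_add_adjacent_intervals (hi a u) (hi u t)
    have h2 : 0 ≤ ∫ v in u..t, Real.sqrt (deriv X v ^ 2 + deriv Y v ^ 2) :=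
      intervalIntegral.integral_nonneg hut fun u _ => Real.sqrt_nonneg _
    simp only [hS]; linarith
  have hpl : ∀ t, a ≤ t → Real.sqrt ((X t - X a) ^ 2 + (Y t - Y a) ^ 2) ≤ S t :=
    fun t ht => planar_le hX hY ht
  have hcost : ∀ t ∈ Icc a b, S t ≤ r → c * S t ≤ x := by
    intro t ht hSt
    have e1 : c * S t ≤ ∫ u in a..t, F (X u, Y u) * Real.sqrt (deriv X u ^ 2 + deriv Y u ^ 2) := by
      rw [hS, ← intervalIntegral.integral_const_mul]
      apply intervalIntegral.integral_mono_on ht.1 ((hi a t).const_mul _) (len_ii hF hX hY _ _)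
      intro u hu
      apply mul_le_mul_of_nonneg_right _ (Real.sqrt_nonneg _)
      have := (hpl u hu.1).trans ((Smono u t hu.1 hu.2).trans hSt)
      apply hlow
      · rw [← h1]; exact (abs_le_sqrt_l _ _).trans this
      · rw [← h2]; exact (abs_le_sqrt_r _ _).trans this
    have e2 := intervalIntegral.integral_add_adjacent_intervals (len_ii hF hX hY a t) (len_ii hF hX hY t b)
    have e3 : 0 ≤ ∫ u in t..b, F (X u, Y u) * Real.sqrt (deriv X u ^ 2 + deriv Y u ^ 2) :=
      intervalIntegral.integral_nonneg ht.2 fun u _ => mul_nonneg (h0 _) (Real.sqrt_nonneg _)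
    rw [← hE, lenXY]
    linarith
  have hSb : S b ≤ r := by
    by_contra hcon
    push Not at hcon
    have : r ∈ Icc (S a) (S b) := ⟨by simp [hS]; exact hr.le, hcon.le⟩
    obtain ⟨t, ht, hSt⟩ := intermediate_value_Icc hab Scont.continuousOn this
    have := hcost t ht hSt.le
    rw [hSt] at this
    linarith
  have hSx : S b ≤ x / c := by
    rw [le_div_iff₀ hc, mul_comm]; exact hcost b ⟨hab, le_rfl⟩ hSb
  have hS0 : 0 ≤ S b := intervalIntegral.integral_nonneg hab fun u _ => Real.sqrt_nonneg _
  constructor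
  · rw [← h1, ← h2, ← h3, ← h4]; exact (hpl b hab).trans hSx
  · obtain ⟨CY, -, hCY⟩ := hY.bdd
    have hiY := ii_bdd (a := a) (b := b) (measurable_deriv Y) fun u _ => hCY u
    have e : Q.2.2 - P.2.2 - P.1 * (Q.2.1 - P.2.1) = ∫ u in a..b, (X u - X a) * deriv Y u := by
      simp only [sub_mul]
      rw [intervalIntegral.integral_sub (ar_ii hX hY a b) (hiY.const_mul _), ← hA,
        intervalIntegral.integral_const_mul, hY.ftc, h1, h2, h4]
      rfl
    rw [e]
    have : |∫ u in a..b, (X u - X a) * deriv Y u| ≤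
        ∫ u in a..b, S b * Real.sqrt (deriv X u ^ 2 + deriv Y u ^ 2) := by
      rw [← Real.norm_eq_abs]
      apply intervalIntegral.norm_integral_le_of_norm_le hab _ ((hi a b).const_mul _)
      refine Eventually.of_forall fun u hu => ?_
      rw [Real.norm_eq_abs, abs_mul]
      apply mul_le_mul _ (abs_le_sqrt_r _ _) (abs_nonneg _) hS0
      exact (abs_le_sqrt_l _ _).trans ((hpl u hu.1.le).trans (Smono u b hu.1.le hu.2))
    rw [intervalIntegral.integral_const_mul] at this
    refine this.trans ?_
    change S b * S b ≤ _
    nlinarith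

lemma dCC_local {F : ℝ × ℝ → ℝ} (hF : Continuous F) (h0 : ∀ p, 0 ≤ F p) {P Q : ℝ × ℝ × ℝ}
    {c r : ℝ} (hc : 0 < c) (hr : 0 < r)
    (hlow : ∀ p : ℝ × ℝ, |p.1 - P.1| ≤ r → |p.2 - P.2.1| ≤ r → c ≤ F p)
    (hx : dCC F P Q < c * r) :
    Real.sqrt ((Q.1 - P.1) ^ 2 + (Q.2.1 - P.2.1) ^ 2) ≤ dCC F P Q / c ∧
    |Q.2.2 - P.2.2 - P.1 * (Q.2.1 - P.2.1)| ≤ (dCC F P Q / c) ^ 2 := by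
  have key : ∀ y, dCC F P Q < y → y < c * r →
    Real.sqrt ((Q.1 - P.1) ^ 2 + (Q.2.1 - P.2.1) ^ 2) ≤ y / c ∧
    |Q.2.2 - P.2.2 - P.1 * (Q.2.1 - P.2.1)| ≤ (y / c) ^ 2 := by
    intro y hy hy'
    obtain ⟨x, hx, hR⟩ := dCC_lt hy
    obtain ⟨k1, k2⟩ := reach_local hF h0 hc hr hlow hR (hx.trans hy')
    have hx0 := hR.nonneg h0
    exact ⟨k1.trans (by gcongr), k2.trans (by gcongr)⟩
  have lim : ∀ (f : ℝ → ℝ), Continuous f → ∀ A : ℝ, (∀ y, dCC F P Q < y → y < c * r → A ≤ f y) →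
      A ≤ f (dCC F P Q) := by
    intro f hf A hA
    refine ge_of_tendsto (hf.continuousAt.mono_left nhdsWithin_le_nhds : Tendsto f (𝓝[>] (dCC F P Q)) _) ?_
    filter_upwards [Ioo_mem_nhdsGT hx] with y hy using hA y hy.1 hy.2
  exact ⟨lim (fun y => y / c) (by fun_prop) _ fun y a b => (key y a b).1,
    lim (fun y => (y / c) ^ 2) (by fun_prop) _ fun y a b => (key y a b).2⟩


lemma box_exists {F : ℝ × ℝ → ℝ} (hF : Continuous F) {p : ℝ × ℝ} {c : ℝ} (hc : c < F p) :
    ∃ r > 0, ∀ q : ℝ × ℝ, |q.1 - p.1| ≤ r → |q.2 - p.2| ≤ r → c ≤ F q := by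
  have : {q | c < F q} ∈ 𝓝 p := (hF.continuousAt (x := p)).eventually (lt_mem_nhds hc)
  obtain ⟨r, hr, hb⟩ := Metric.mem_nhds_iff.1 this
  refine ⟨r / 2, by positivity, fun q h1 h2 => le_of_lt (hb ?_)⟩
  rw [Metric.mem_ball, Prod.dist_eq, Real.dist_eq, Real.dist_eq]
  exact lt_of_le_of_lt (max_le h1 h2) (by linarith)

/-- Unit-speed-type metric property of the geodesic. -/
def ConstSp (F : ℝ × ℝ → ℝ) (Γ : ℝ → ℝ × ℝ × ℝ) (l : ℝ) : Prop :=
  0 ≤ l ∧ ∀ s t : ℝ, 0 ≤ s → s ≤ t → t ≤ 1 → dCC F (Γ s) (Γ t) = (t - s) * l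

lemma ConstSp.abs {F Γ l} (h : ConstSp F Γ l) {s t : ℝ} (hs : s ∈ Icc (0:ℝ) 1) (ht : t ∈ Icc (0:ℝ) 1) :
    dCC F (Γ s) (Γ t) = |t - s| * l := by
  rcases le_total s t with hst | hst
  · rw [h.2 s t hs.1 hst ht.2, abs_of_nonneg (by linarith)]
  · rw [dCC_symm, h.2 t s ht.1 hst hs.2, abs_of_nonpos (by linarith)]; ring

lemma local_lip {F : ℝ × ℝ → ℝ} (hF : Continuous F) (h0 : ∀ p, 0 ≤ F p) {Γ l} (h : ConstSp F Γ l)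
    {t0 : ℝ} (ht0 : t0 ∈ Ioo (0:ℝ) 1) (hpos : 0 < F (projCurve Γ t0)) :
    ∃ δ > 0, ∃ c > 0, Icc (t0 - δ) (t0 + δ) ⊆ Icc 0 1 ∧
      (∀ s ∈ Icc (t0 - δ) (t0 + δ), c ≤ F (projCurve Γ s)) ∧
      ∀ s ∈ Icc (t0 - δ) (t0 + δ), ∀ t ∈ Icc (t0 - δ) (t0 + δ),
        Real.sqrt (((Γ t).1 - (Γ s).1) ^ 2 + ((Γ t).2.1 - (Γ s).2.1) ^ 2) ≤ |t - s| * l / c ∧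
        |(Γ t).2.2 - (Γ s).2.2 - (Γ s).1 * ((Γ t).2.1 - (Γ s).2.1)| ≤ (|t - s| * l / c) ^ 2 := by
  set c := F (projCurve Γ t0) / 2 with hcdef
  have hc : 0 < c := by positivity
  obtain ⟨r, hr, hbox⟩ := box_exists hF (show c < F (projCurve Γ t0) by rw [hcdef]; linarith)
  have hl := h.1
  obtain ⟨δ, hδ, hδ1, hδ2, hδ3⟩ : ∃ δ > 0, δ ≤ t0 ∧ δ ≤ 1 - t0 ∧ 2 * δ * l < c * (r / 2) := by
    refine ⟨min (min t0 (1 - t0)) (c * (r / 2) / (4 * (l + 1))), ?_, ?_, ?_, ?_⟩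
    · have := ht0.1; have := ht0.2
      refine lt_min (lt_min ht0.1 (by linarith)) (by positivity)
    · exact (min_le_left _ _).trans (min_le_left _ _)
    · exact (min_le_left _ _).trans (min_le_right _ _)
    · have h1 : min (min t0 (1 - t0)) (c * (r / 2) / (4 * (l + 1))) ≤ c * (r / 2) / (4 * (l + 1)) :=
        min_le_right _ _
      rw [le_div_iff₀ (by positivity)] at h1
      have h2 : 0 < c * (r / 2) := by positivity
      have h3 : 0 ≤ min (min t0 (1 - t0)) (c * (r / 2) / (4 * (l + 1))) :=
        le_min (le_min ht0.1.le (by linarith [ht0.2])) (by positivity)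
      nlinarith
  have hsub : Icc (t0 - δ) (t0 + δ) ⊆ Icc 0 1 := Icc_subset_Icc (by linarith) (by linarith)
  have hnear : ∀ s ∈ Icc (t0 - δ) (t0 + δ), |(Γ s).1 - (Γ t0).1| ≤ r / 2 ∧ |(Γ s).2.1 - (Γ t0).2.1| ≤ r / 2 := by
    intro s hs
    have hd := h.abs (Ioo_subset_Icc_self ht0) (hsub hs)
    have hab : |s - t0| ≤ δ := abs_le.2 ⟨by linarith [hs.1], by linarith [hs.2]⟩
    have hlt : dCC F (Γ t0) (Γ s) < c * (r / 2) := by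
      rw [hd]; nlinarith [abs_nonneg (s - t0)]
    have := (dCC_local hF h0 hc (by positivity : 0 < r / 2) (fun p a b => hbox p
      (a.trans (by linarith)) (b.trans (by linarith))) hlt).1
    have h2 : dCC F (Γ t0) (Γ s) / c ≤ r / 2 := by rw [div_le_iff₀ hc]; linarith
    exact ⟨(abs_le_sqrt_l _ _).trans (this.trans h2), (abs_le_sqrt_r _ _).trans (this.trans h2)⟩
  refine ⟨δ, hδ, c, hc, hsub, ?_, ?_⟩
  · intro s hs
    obtain ⟨a, b⟩ := hnear s hs
    exact hbox _ (a.trans (by linarith)) (b.trans (by linarith))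
  · intro s hs t ht
    have hd := h.abs (hsub hs) (hsub ht)
    have hab : |t - s| ≤ 2 * δ := abs_le.2 ⟨by linarith [hs.2, ht.1], by linarith [hs.1, ht.2]⟩
    have hlt : dCC F (Γ s) (Γ t) < c * (r / 2) := by
      rw [hd]; nlinarith [abs_nonneg (t - s)]
    obtain ⟨n1, n2⟩ := hnear s hs
    have := (dCC_local hF h0 hc (by positivity : 0 < r / 2) (fun p a b => hbox p ?_ ?_) hlt)
    · rwa [hd] at this
    · have := abs_sub_le p.1 (Γ s).1 (Γ t0).1
      exact this.trans (by linarith)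
    · have := abs_sub_le p.2 (Γ s).2.1 (Γ t0).2.1
      exact this.trans (by linarith)

lemma speed_le {F : ℝ × ℝ → ℝ} (hF : Continuous F) (h0 : ∀ p, 0 ≤ F p) {Γ l} (h : ConstSp F Γ l)
    {t : ℝ} (ht : t ∈ Ioo (0:ℝ) 1) {x y : ℝ} (hx : HasDerivAt (fun s => (Γ s).1) x t)
    (hy : HasDerivAt (fun s => (Γ s).2.1) y t) :
    F (projCurve Γ t) * Real.sqrt (x ^ 2 + y ^ 2) ≤ l := by
  have key : ∀ c, 0 < c → c < F (projCurve Γ t) → c * Real.sqrt (x ^ 2 + y ^ 2) ≤ l := by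
    intro c hc hcF
    obtain ⟨r, hr, hbox⟩ := box_exists hF hcF
    have T := ((hx.tendsto_slope_zero_right.pow 2).add (hy.tendsto_slope_zero_right.pow 2)).sqrt
    rw [mul_comm, ← le_div_iff₀ hc]
    refine le_of_tendsto T ?_
    have hl := h.1
    have e : (0:ℝ) < min (1 - t) (c * r / (l + 1)) := lt_min (by linarith [ht.2]) (by positivity)
    filter_upwards [Ioo_mem_nhdsGT e] with u hu
    have hu1 : u < 1 - t := hu.2.trans_le (min_le_left _ _)
    have hu2 : u < c * r / (l + 1) := hu.2.trans_le (min_le_right _ _)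
    rw [lt_div_iff₀ (by positivity)] at hu2
    have hu0 := hu.1
    have hd := h.2 t (t + u) ht.1.le (by linarith) (by linarith)
    rw [add_sub_cancel_left] at hd
    have hlt : dCC F (Γ t) (Γ (t + u)) < c * r := by rw [hd]; nlinarith
    have := (dCC_local hF h0 hc hr hbox hlt).1
    rw [hd] at this
    simp only [smul_eq_mul, mul_pow]
    rw [← mul_add, Real.sqrt_mul (by positivity), Real.sqrt_sq (by positivity), inv_mul_le_iff₀ hu0]
    rwa [← mul_div_assoc]
  rcases (h0 (projCurve Γ t)).eq_or_lt with hz | hpos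
  · rw [← hz, zero_mul]; exact h.1
  · have T : Tendsto (fun c => c * Real.sqrt (x ^ 2 + y ^ 2)) (𝓝[<] (F (projCurve Γ t)))
      (𝓝 (F (projCurve Γ t) * Real.sqrt (x ^ 2 + y ^ 2))) :=
      (Continuous.tendsto (by fun_prop) _).mono_left nhdsWithin_le_nhds
    refine le_of_tendsto T ?_
    filter_upwards [Ioo_mem_nhdsLT hpos] with c hc using key c hc.1 hc.2

structure Good (F : ℝ × ℝ → ℝ) (Γ : ℝ → ℝ × ℝ × ℝ) (l s t : ℝ) (X Y : ℝ → ℝ) : Prop where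
  hst : s < t
  h0 : 0 ≤ s
  h1 : t ≤ 1
  lX : Lip X
  lY : Lip Y
  eX : ∀ u ∈ Icc s t, X u = (Γ u).1
  eY : ∀ u ∈ Icc s t, Y u = (Γ u).2.1
  pos : ∀ u ∈ Icc s t, 0 < F (X u, Y u)
  area : ∀ u v, s ≤ u → u ≤ v → v ≤ t → arXY u v X Y = (Γ v).2.2 - (Γ u).2.2
  speed : ∀ᵐ u : ℝ, u ∈ Ioo s t → F (X u, Y u) * Real.sqrt (deriv X u ^ 2 + deriv Y u ^ 2) ≤ l

lemma Good.mono {F Γ l s t X Y} (h : Good F Γ l s t X Y) {s' t' : ℝ} (hs : s ≤ s') (hst : s' < t')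
    (ht : t' ≤ t) : Good F Γ l s' t' X Y where
  hst := hst
  h0 := h.h0.trans hs
  h1 := ht.trans h.h1
  lX := h.lX
  lY := h.lY
  eX := fun u hu => h.eX u ⟨hs.trans hu.1, hu.2.trans ht⟩
  eY := fun u hu => h.eY u ⟨hs.trans hu.1, hu.2.trans ht⟩
  pos := fun u hu => h.pos u ⟨hs.trans hu.1, hu.2.trans ht⟩
  area := fun u v a b c => h.area u v (hs.trans a) b (c.trans ht)
  speed := by
    filter_upwards [h.speed] with u hu hu' using hu ⟨hs.trans_lt hu'.1, hu'.2.trans_le ht⟩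

lemma lipOn_of {f : ℝ → ℝ} {S : Set ℝ} {K : ℝ} (h : ∀ s ∈ S, ∀ t ∈ S, |f t - f s| ≤ |t - s| * K) :
    LipschitzOnWith (Real.nnabs K) f S := by
  refine LipschitzOnWith.of_dist_le_mul fun x hx y hy => ?_
  rw [Real.dist_eq, Real.dist_eq, Real.coe_nnabs]
  refine (h y hy x hx).trans ?_
  rw [mul_comm]
  exact mul_le_mul_of_nonneg_right (le_abs_self _) (abs_nonneg _)

lemma good_exists {F : ℝ × ℝ → ℝ} (hF : Continuous F) (h0 : ∀ p, 0 ≤ F p) {Γ l} (h : ConstSp F Γ l)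
    {t0 : ℝ} (ht0 : t0 ∈ Ioo (0:ℝ) 1) (hpos : 0 < F (projCurve Γ t0)) :
    ∃ δ > 0, ∃ X Y, Good F Γ l (t0 - δ) (t0 + δ) X Y := by
  obtain ⟨δ, hδ, c, hc, hsub, hFc, hest⟩ := local_lip hF h0 h ht0 hpos
  have hst : t0 - δ < t0 + δ := by linarith
  refine ⟨δ, hδ, ?_⟩
  clear hδ
  generalize t0 - δ = s at *
  generalize t0 + δ = t at *
  have L1 : LipschitzOnWith _ (fun u => (Γ u).1) (Icc s t) := lipOn_of (K := l / c) (by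
    intro u hu v hv
    rw [← mul_div_assoc]
    exact (abs_le_sqrt_l _ _).trans (hest u hu v hv).1)
  have L2 : LipschitzOnWith _ (fun u => (Γ u).2.1) (Icc s t) := lipOn_of (K := l / c) (by
    intro u hu v hv
    rw [← mul_div_assoc]
    exact (abs_le_sqrt_r _ _).trans (hest u hu v hv).1)
  obtain ⟨M, hM⟩ := isCompact_Icc.exists_bound_of_continuousOn L1.continuousOn
  have L3 : LipschitzOnWith _ (fun u => (Γ u).2.2) (Icc s t) :=
    lipOn_of (K := (l / c) ^ 2 * (t - s) + M * (l / c)) (by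
    intro u hu v hv
    have a1 := (hest u hu v hv).2
    have a2 := (abs_le_sqrt_r _ _).trans (hest u hu v hv).1
    have a3 := hM u hu
    rw [Real.norm_eq_abs] at a3
    have a4 : |v - u| ≤ t - s := abs_le.2 ⟨by linarith [hu.2, hv.1], by linarith [hu.1, hv.2]⟩
    have a5 := abs_add_le ((Γ v).2.2 - (Γ u).2.2 - (Γ u).1 * ((Γ v).2.1 - (Γ u).2.1))
      ((Γ u).1 * ((Γ v).2.1 - (Γ u).2.1))
    rw [sub_add_cancel, abs_mul] at a5
    have a6 : |(Γ u).1| * |(Γ v).2.1 - (Γ u).2.1| ≤ M * (|v - u| * l / c) :=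
      mul_le_mul a3 a2 (abs_nonneg _) ((abs_nonneg _).trans a3)
    have a7 : (|v - u| * l / c) ^ 2 ≤ |v - u| * ((l / c) ^ 2 * (t - s)) := by
      have : (|v - u| * l / c) ^ 2 = |v - u| * ((l / c) ^ 2 * |v - u|) := by ring
      rw [this]; gcongr
    have a8 : M * (|v - u| * l / c) = |v - u| * (M * (l / c)) := by ring
    rw [mul_add]
    linarith)
  have lX := lip_clp_of hst.le L1
  have lY := lip_clp_of hst.le L2
  have lZ := lip_clp_of hst.le L3
  have sub01 : Ioo s t ⊆ Ioo 0 1 := fun u hu =>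
    ⟨(hsub (left_mem_Icc.2 hst.le)).1.trans_lt hu.1, hu.2.trans_le (hsub (right_mem_Icc.2 hst.le)).2⟩
  refine ⟨fun u => (Γ (clp s t u)).1, fun u => (Γ (clp s t u)).2.1, hst, (hsub (left_mem_Icc.2 hst.le)).1, (hsub (right_mem_Icc.2 hst.le)).2,
    lX, lY, fun u hu => by simp only [clp_eq hu], fun u hu => by simp only [clp_eq hu], ?_, ?_, ?_⟩
  · intro u hu
    simp only [clp_eq hu]
    exact hc.trans_le (hFc u hu)
  · intro u v hu huv hv
    have e := lZ.ftc u v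
    simp only [clp_eq (show u ∈ Icc s t from ⟨hu, huv.trans hv⟩),
      clp_eq (show v ∈ Icc s t from ⟨hu.trans huv, hv⟩)] at e
    rw [← e]
    apply int_congr_Ioo huv
    filter_upwards [lY.ae] with w hw hw'
    have hwst : w ∈ Ioo s t := ⟨hu.trans_lt hw'.1, hw'.2.trans_le hv⟩
    have e2 := clp_ev (fun s => (Γ s).2.1) hwst
    have e3 := clp_ev (fun s => (Γ s).2.2) hwst
    rw [e2.differentiableAt_iff] at hw
    rw [e2.deriv_eq, e3.deriv_eq, clp_eq (Ioo_subset_Icc_self hwst)]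
    have hz : HasFDerivAt (fun v => (Γ v).2.2 - (Γ w).2.2 - (Γ w).1 * ((Γ v).2.1 - (Γ w).2.1))
        (0 : ℝ →L[ℝ] ℝ) w := by
      apply Asymptotics.IsBigO.hasFDerivAt (n := 2) _ (by norm_num)
      apply Asymptotics.IsBigO.of_bound ((l / c) ^ 2)
      filter_upwards [Ioo_mem_nhds hwst.1 hwst.2] with v hv
      have := (hest w (Ioo_subset_Icc_self hwst) v (Ioo_subset_Icc_self hv)).2
      rw [Real.norm_eq_abs]
      refine this.trans (le_of_eq ?_)
      rw [norm_pow, norm_norm, Real.norm_eq_abs]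
      ring
    have hz' := hz.hasDerivAt
    have := (hz'.add ((hw.hasDerivAt.sub_const (Γ w).2.1).const_mul (Γ w).1)).add_const (Γ w).2.2
    have fe : (fun v => (Γ v).2.2) = (fun v => (Γ v).2.2 - (Γ w).2.2 - (Γ w).1 * ((Γ v).2.1 - (Γ w).2.1)
      + (Γ w).1 * ((Γ v).2.1 - (Γ w).2.1) + (Γ w).2.2) := by funext v; ring
    rw [← HasDerivAt.deriv (f := fun v => (Γ v).2.2) (f' := (Γ w).1 * deriv (fun s => (Γ s).2.1) w)]
    rw [fe]
    refine this.congr_deriv ?_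
    simp
  · filter_upwards [lX.ae, lY.ae] with u h1 h2 hu
    have e1 := clp_ev (fun s => (Γ s).1) hu
    have e2 := clp_ev (fun s => (Γ s).2.1) hu
    rw [e1.differentiableAt_iff] at h1
    rw [e2.differentiableAt_iff] at h2
    rw [e1.deriv_eq, e2.deriv_eq]
    simp only [clp_eq (Ioo_subset_Icc_self hu)]
    exact speed_le hF h0 h (sub01 hu) h1.hasDerivAt h2.hasDerivAt


/-- First variation of the energy. -/
def gV (W : ℝ × ℝ → ℝ) (s t : ℝ) (X Y φ : ℝ → ℝ) (e1 e2 : ℝ) : ℝ :=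
  ∫ u in s..t, (2 * W (X u, Y u) * (deriv X u * e1 + deriv Y u * e2) * deriv φ u
    + fderiv ℝ W (X u, Y u) (e1, e2) * (deriv X u ^ 2 + deriv Y u ^ 2) * φ u)

/-- First variation of the area. -/
def aV (s t : ℝ) (X Y φ : ℝ → ℝ) (e1 e2 : ℝ) : ℝ :=
  ∫ u in s..t, (X u * e2 * deriv φ u + e1 * deriv Y u * φ u)

/-- Energy of the varied curve. -/
def enV (W : ℝ × ℝ → ℝ) (s t : ℝ) (X Y φ : ℝ → ℝ) (e1 e2 x : ℝ) : ℝ :=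
  ∫ u in s..t, W (X u + x * e1 * φ u, Y u + x * e2 * φ u) *
    ((deriv X u + x * e1 * deriv φ u) ^ 2 + (deriv Y u + x * e2 * deriv φ u) ^ 2)

lemma bdd5 {H : ℝ × ℝ × ℝ × ℝ × ℝ → ℝ} (hH : Continuous H) (s t C : ℝ) :
    ∃ M, ∀ u ∈ uIcc s t, ∀ x, |x| ≤ C → ∀ a, |a| ≤ C → ∀ b, |b| ≤ C → ∀ c, |c| ≤ C →
      |H (u, x, a, b, c)| ≤ M := by
  obtain ⟨M, hM⟩ := (isCompact_uIcc.prod (isCompact_Icc.prod (isCompact_Icc.prod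
    (isCompact_Icc.prod isCompact_Icc)))).exists_bound_of_continuousOn
    (s := uIcc s t ×ˢ Icc (-C) C ×ˢ Icc (-C) C ×ˢ Icc (-C) C ×ˢ Icc (-C) C) hH.continuousOn
  refine ⟨M, fun u hu x hx a ha b hb c hc => ?_⟩
  exact hM _ ⟨hu, abs_le.1 hx, abs_le.1 ha, abs_le.1 hb, abs_le.1 hc⟩

lemma meas5 {H : ℝ × ℝ × ℝ × ℝ × ℝ → ℝ} (hH : Continuous H) (X Y φ : ℝ → ℝ) (x : ℝ) :
    Measurable fun u => H (u, x, deriv X u, deriv Y u, deriv φ u) :=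
  hH.measurable.comp (measurable_id.prodMk (measurable_const.prodMk ((measurable_deriv X).prodMk
    ((measurable_deriv Y).prodMk (measurable_deriv φ)))))

lemma bd3 {X Y φ : ℝ → ℝ} (hX : Lip X) (hY : Lip Y) (hφ : Lip φ) (x : ℝ) :
    ∃ C, |x| ≤ C ∧ ∀ u, |deriv X u| ≤ C ∧ |deriv Y u| ≤ C ∧ |deriv φ u| ≤ C := by
  obtain ⟨A, a0, hA⟩ := hX.bdd
  obtain ⟨B, b0, hB⟩ := hY.bdd
  obtain ⟨D, d0, hD⟩ := hφ.bdd
  have := abs_nonneg x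
  exact ⟨A + B + D + |x|, by linarith, fun u => ⟨by linarith [hA u], by linarith [hB u], by linarith [hD u]⟩⟩

lemma ii5 {H : ℝ × ℝ × ℝ × ℝ × ℝ → ℝ} (hH : Continuous H) {X Y φ : ℝ → ℝ} (hX : Lip X) (hY : Lip Y)
    (hφ : Lip φ) (x s t : ℝ) :
    IntervalIntegrable (fun u => H (u, x, deriv X u, deriv Y u, deriv φ u)) volume s t := by
  obtain ⟨C, hx, hC⟩ := bd3 hX hY hφ x
  obtain ⟨M, hM⟩ := bdd5 hH s t C
  exact ii_bdd (meas5 hH X Y φ x) (C := M) fun u hu => hM u hu x hx _ (hC u).1 _ (hC u).2.1 _ (hC u).2.2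

lemma fderiv_app_cont {W : ℝ × ℝ → ℝ} (hW : ContDiff ℝ 1 W) (v : ℝ × ℝ) :
    Continuous fun p => fderiv ℝ W p v :=
  (hW.continuous_fderiv one_ne_zero).clm_apply continuous_const

lemma enV_deriv {W : ℝ × ℝ → ℝ} (hW : ContDiff ℝ 1 W) {X Y φ : ℝ → ℝ} (hX : Lip X) (hY : Lip Y)
    (hφ : Lip φ) (s t e1 e2 : ℝ) :
    HasDerivAt (enV W s t X Y φ e1 e2) (gV W s t X Y φ e1 e2) 0 := by
  have cX := hX.continuous
  have cY := hY.continuous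
  have cφ := hφ.continuous
  have cW := hW.continuous
  have cD := fderiv_app_cont hW (e1, e2)
  let H : ℝ × ℝ × ℝ × ℝ × ℝ → ℝ := fun z =>
    W (X z.1 + z.2.1 * e1 * φ z.1, Y z.1 + z.2.1 * e2 * φ z.1) *
    ((z.2.2.1 + z.2.1 * e1 * z.2.2.2.2) ^ 2 + (z.2.2.2.1 + z.2.1 * e2 * z.2.2.2.2) ^ 2)
  let H' : ℝ × ℝ × ℝ × ℝ × ℝ → ℝ := fun z =>
    fderiv ℝ W (X z.1 + z.2.1 * e1 * φ z.1, Y z.1 + z.2.1 * e2 * φ z.1) (e1, e2) * φ z.1 *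
    ((z.2.2.1 + z.2.1 * e1 * z.2.2.2.2) ^ 2 + (z.2.2.2.1 + z.2.1 * e2 * z.2.2.2.2) ^ 2)
    + W (X z.1 + z.2.1 * e1 * φ z.1, Y z.1 + z.2.1 * e2 * φ z.1) *
    (2 * (z.2.2.1 + z.2.1 * e1 * z.2.2.2.2) * (e1 * z.2.2.2.2)
      + 2 * (z.2.2.2.1 + z.2.1 * e2 * z.2.2.2.2) * (e2 * z.2.2.2.2))
  have hH : Continuous H := by
    refine Continuous.mul (cW.comp ?_) ?_ <;> fun_prop
  have hH' : Continuous H' := by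
    refine Continuous.add (Continuous.mul (Continuous.mul (cD.comp ?_) ?_) ?_)
      (Continuous.mul (cW.comp ?_) ?_) <;> fun_prop
  obtain ⟨C, hx, hC⟩ := bd3 hX hY hφ 1
  obtain ⟨M, hM⟩ := bdd5 hH' s t C
  have key := intervalIntegral.hasDerivAt_integral_of_dominated_loc_of_deriv_le (μ := volume)
    (a := s) (b := t)
    (F := fun x u => H (u, x, deriv X u, deriv Y u, deriv φ u))
    (F' := fun x u => H' (u, x, deriv X u, deriv Y u, deriv φ u)) (x₀ := (0:ℝ))
    (s := Metric.ball 0 1) (bound := fun _ => M)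
    (Metric.ball_mem_nhds _ one_pos)
    (Eventually.of_forall fun x => (meas5 hH X Y φ x).aestronglyMeasurable)
    (ii5 hH hX hY hφ 0 s t)
    (meas5 hH' X Y φ 0).aestronglyMeasurable
    (Eventually.of_forall fun u hu x hx' => by
      rw [mem_ball_zero_iff, Real.norm_eq_abs] at hx'
      rw [abs_one] at hx
      exact hM u (uIoc_subset_uIcc hu) x (hx'.le.trans hx) _ (hC u).1 _ (hC u).2.1 _ (hC u).2.2)
    intervalIntegrable_const
    (Eventually.of_forall fun u hu x hx' => by
      have l1 : HasDerivAt (fun x : ℝ => X u + x * e1 * φ u) (e1 * φ u) x := by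
        simpa using (((hasDerivAt_id x).mul_const e1).mul_const (φ u)).const_add (X u)
      have l2 : HasDerivAt (fun x : ℝ => Y u + x * e2 * φ u) (e2 * φ u) x := by
        simpa using (((hasDerivAt_id x).mul_const e2).mul_const (φ u)).const_add (Y u)
      have l3 : HasDerivAt (fun x : ℝ => deriv X u + x * e1 * deriv φ u) (e1 * deriv φ u) x := by
        simpa using (((hasDerivAt_id x).mul_const e1).mul_const (deriv φ u)).const_add (deriv X u)
      have l4 : HasDerivAt (fun x : ℝ => deriv Y u + x * e2 * deriv φ u) (e2 * deriv φ u) x := by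
        simpa using (((hasDerivAt_id x).mul_const e2).mul_const (deriv φ u)).const_add (deriv Y u)
      have w := ((hW.differentiable one_ne_zero).differentiableAt.hasFDerivAt
        (x := (X u + x * e1 * φ u, Y u + x * e2 * φ u))).comp_hasDerivAt x (l1.prodMk l2)
      have := w.mul ((l3.pow 2).add (l4.pow 2))
      refine this.congr_deriv ?_
      have : ((e1 * φ u, e2 * φ u) : ℝ × ℝ) = φ u • (e1, e2) := by
        simp [mul_comm]
      rw [this, map_smul]
      simp only [H', smul_eq_mul, Pi.add_apply, Pi.pow_apply, Function.comp_apply]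
      push_cast
      ring)
  have := key.2
  refine this.congr_deriv ?_
  unfold gV
  apply intervalIntegral.integral_congr
  intro u _
  simp [H']
  ring

lemma var_dist {W F : ℝ × ℝ → ℝ} (hW : Continuous W) (hW0 : ∀ p, 0 ≤ W p)
    (hF : F = fun p => Real.sqrt (W p)) {Γ : ℝ → ℝ × ℝ × ℝ} {l s t : ℝ} {X Y φ : ℝ → ℝ}
    (h : Good F Γ l s t X Y) (hl : 0 < l) (hφ : Lip φ) (hs : φ s = 0) (ht : φ t = 0)
    {e1 e2 : ℝ} (he : e1 * e2 = 0) (x : ℝ) :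
    dCC F (Γ s) ((Γ t).1, (Γ t).2.1, (Γ t).2.2 + aV s t X Y φ e1 e2 * x) ≤
      (enV W s t X Y φ e1 e2 x / l + l * (t - s)) / 2 := by
  have hFc : Continuous F := by rw [hF]; exact hW.sqrt
  have h0 : ∀ p, 0 ≤ F p := fun p => by rw [hF]; exact Real.sqrt_nonneg _
  have cX := h.lX.continuous
  have cY := h.lY.continuous
  have cφ := hφ.continuous
  have hst := h.hst.le
  have lX : Lip (fun u => X u + x * e1 * φ u) := h.lX.add (hφ.const_mul (x * e1))
  have lY : Lip (fun u => Y u + x * e2 * φ u) := h.lY.add (hφ.const_mul (x * e2))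
  have dd : ∀ᵐ u : ℝ, deriv (fun u => X u + x * e1 * φ u) u = deriv X u + x * e1 * deriv φ u ∧
      deriv (fun u => Y u + x * e2 * φ u) u = deriv Y u + x * e2 * deriv φ u := by
    filter_upwards [h.lX.ae, h.lY.ae, hφ.ae] with u h1 h2 h3
    exact ⟨(h1.hasDerivAt.add (h3.hasDerivAt.const_mul _)).deriv,
      (h2.hasDerivAt.add (h3.hasDerivAt.const_mul _)).deriv⟩
  have R : Reach F (Γ s) ((Γ t).1, (Γ t).2.1, (Γ t).2.2 + aV s t X Y φ e1 e2 * x)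
      (lenXY F s t (fun u => X u + x * e1 * φ u) (fun u => Y u + x * e2 * φ u)) := by
    refine ⟨s, t, _, _, hst, lX, lY, ?_, ?_, ?_, ?_, ?_, rfl⟩
    · simp [hs, h.eX s ⟨le_rfl, hst⟩]
    · simp [hs, h.eY s ⟨le_rfl, hst⟩]
    · simp [ht, h.eX t ⟨hst, le_rfl⟩]
    · simp [ht, h.eY t ⟨hst, le_rfl⟩]
    · have ha := h.area s t le_rfl hst le_rfl
      show _ = (Γ t).2.2 + aV s t X Y φ e1 e2 * x - (Γ s).2.2
      have : (Γ t).2.2 + aV s t X Y φ e1 e2 * x - (Γ s).2.2 =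
        arXY s t X Y + aV s t X Y φ e1 e2 * x := by rw [ha]; ring
      rw [this]
      unfold arXY aV
      rw [← intervalIntegral.integral_mul_const, ← intervalIntegral.integral_add]
      · apply intervalIntegral.integral_congr_ae
        filter_upwards [dd] with u hu _
        rw [hu.2]
        linear_combination x ^ 2 * φ u * deriv φ u * he
      · exact ar_ii h.lX h.lY s t
      · exact ii5 (H := fun z => (X z.1 * e2 * z.2.2.2.2 + e1 * z.2.2.2.1 * φ z.1) * z.2.1)
          (by fun_prop) h.lX h.lY hφ x s t
  refine (dCC_le h0 R).trans ?_
  have e : (enV W s t X Y φ e1 e2 x / l + l * (t - s)) / 2 = ∫ u in s..t,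
    ((W (X u + x * e1 * φ u, Y u + x * e2 * φ u) *
    ((deriv X u + x * e1 * deriv φ u) ^ 2 + (deriv Y u + x * e2 * deriv φ u) ^ 2)) / l + l) / 2 := by
    rw [intervalIntegral.integral_div, intervalIntegral.integral_add,
      intervalIntegral.integral_div, intervalIntegral.integral_const, smul_eq_mul, mul_comm l]
    · rfl
    · refine IntervalIntegrable.div_const ?_ l
      refine ii5 (H := fun z => W (X z.1 + z.2.1 * e1 * φ z.1, Y z.1 + z.2.1 * e2 * φ z.1) *
        ((z.2.2.1 + z.2.1 * e1 * z.2.2.2.2) ^ 2 + (z.2.2.2.1 + z.2.1 * e2 * z.2.2.2.2) ^ 2))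
        ?_ h.lX h.lY hφ x s t
      refine Continuous.mul (hW.comp ?_) ?_ <;> fun_prop
    · exact intervalIntegrable_const
  rw [e]
  apply intervalIntegral.integral_mono_ae hst (len_ii hFc lX lY s t)
  · refine ii5 (H := fun z => ((W (X z.1 + z.2.1 * e1 * φ z.1, Y z.1 + z.2.1 * e2 * φ z.1) *
        ((z.2.2.1 + z.2.1 * e1 * z.2.2.2.2) ^ 2 + (z.2.2.2.1 + z.2.1 * e2 * z.2.2.2.2) ^ 2)) / l + l) / 2)
        ?_ h.lX h.lY hφ x s t
    refine Continuous.div_const (Continuous.add (Continuous.div_const (Continuous.mul (hW.comp ?_) ?_) _) ?_) _ <;> fun_prop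
  · filter_upwards [dd] with u hu
    rw [hu.1, hu.2, hF]
    set A := W (X u + x * e1 * φ u, Y u + x * e2 * φ u) with hA
    set B := (deriv X u + x * e1 * deriv φ u) ^ 2 + (deriv Y u + x * e2 * deriv φ u) ^ 2 with hB
    have hA0 : 0 ≤ A := hW0 _
    have hB0 : 0 ≤ B := by positivity
    have e1 := Real.sq_sqrt hA0
    have e2 := Real.sq_sqrt hB0
    show √A * √B ≤ _
    rw [le_div_iff₀ two_pos]
    have : A * B / l + l - √A * √B * 2 = (√A * √B - l) ^ 2 / l := by
      field_simp
      have : A * B = √A ^ 2 * √B ^ 2 := by rw [e1, e2]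
      rw [this]; ring
    have h3 : 0 ≤ (√A * √B - l) ^ 2 / l := by positivity
    linarith

lemma int_mono_Ioo {a b : ℝ} (hab : a ≤ b) {f g : ℝ → ℝ} (hf : IntervalIntegrable f volume a b)
    (hg : IntervalIntegrable g volume a b) (h : ∀ᵐ t : ℝ, t ∈ Ioo a b → f t ≤ g t) :
    ∫ t in a..b, f t ≤ ∫ t in a..b, g t := by
  rw [intervalIntegral.integral_of_le hab, intervalIntegral.integral_of_le hab,
    integral_Ioc_eq_integral_Ioo, integral_Ioc_eq_integral_Ioo]
  apply setIntegral_mono_ae_restrict (hf.1.mono_set Ioo_subset_Ioc_self)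
    (hg.1.mono_set Ioo_subset_Ioc_self)
  rw [EventuallyLE, ae_restrict_iff' measurableSet_Ioo]
  exact h

lemma enV_zero {W F : ℝ × ℝ → ℝ} (hW : Continuous W) (hW0 : ∀ p, 0 ≤ W p)
    (hF : F = fun p => Real.sqrt (W p)) {Γ : ℝ → ℝ × ℝ × ℝ} {l s t : ℝ} {X Y φ : ℝ → ℝ}
    (h : Good F Γ l s t X Y) (hl : 0 < l) (e1 e2 : ℝ) :
    enV W s t X Y φ e1 e2 0 ≤ l ^ 2 * (t - s) := by
  have cX := h.lX.continuous
  have cY := h.lY.continuous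
  have : l ^ 2 * (t - s) = ∫ u in s..t, l ^ 2 := by
    rw [intervalIntegral.integral_const, smul_eq_mul, mul_comm]
  rw [this]
  unfold enV
  simp only [zero_mul, add_zero]
  apply int_mono_Ioo h.hst.le
  · refine ii5 (H := fun z => W (X z.1, Y z.1) * (z.2.2.1 ^ 2 + z.2.2.2.1 ^ 2)) ?_ h.lX h.lY h.lX 0 s t
    refine Continuous.mul (hW.comp ?_) ?_ <;> fun_prop
  · exact intervalIntegrable_const
  · filter_upwards [h.speed] with u hu hu'
    have hu := hu hu'
    rw [hF] at hu
    have hA0 := hW0 (X u, Y u)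
    have hB0 : 0 ≤ deriv X u ^ 2 + deriv Y u ^ 2 := by positivity
    rw [← Real.sq_sqrt hA0, ← Real.sq_sqrt hB0, ← mul_pow]
    exact pow_le_pow_left₀ (by positivity) hu 2

lemma two_int {W F : ℝ × ℝ → ℝ} (hW : ContDiff ℝ 1 W) (hW0 : ∀ p, 0 ≤ W p)
    (hF : F = fun p => Real.sqrt (W p)) {Γ : ℝ → ℝ × ℝ × ℝ} {l : ℝ} (hC : ConstSp F Γ l) (hl : 0 < l)
    {s1 t1 s2 t2 : ℝ} {X1 Y1 φ1 X2 Y2 φ2 : ℝ → ℝ}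
    (h1 : Good F Γ l s1 t1 X1 Y1) (h2 : Good F Γ l s2 t2 X2 Y2) (h12 : t1 ≤ s2)
    (hφ1 : Lip φ1) (hs1 : φ1 s1 = 0) (ht1 : φ1 t1 = 0)
    (hφ2 : Lip φ2) (hs2 : φ2 s2 = 0) (ht2 : φ2 t2 = 0)
    {e1 e2 e1' e2' : ℝ} (he : e1 * e2 = 0) (he' : e1' * e2' = 0) :
    gV W s1 t1 X1 Y1 φ1 e1 e2 * aV s2 t2 X2 Y2 φ2 e1' e2' =
    gV W s2 t2 X2 Y2 φ2 e1' e2' * aV s1 t1 X1 Y1 φ1 e1 e2 := by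
  have hFc : Continuous F := by rw [hF]; exact hW.continuous.sqrt
  have h0 : ∀ p, 0 ≤ F p := fun p => by rw [hF]; exact Real.sqrt_nonneg _
  set a1 := aV s1 t1 X1 Y1 φ1 e1 e2 with ha1
  set a2 := aV s2 t2 X2 Y2 φ2 e1' e2' with ha2
  let f : ℝ → ℝ := fun x => enV W s1 t1 X1 Y1 φ1 e1 e2 (a2 * x) + enV W s2 t2 X2 Y2 φ2 e1' e2' (-a1 * x)
  have hmin : ∀ x, f 0 ≤ f x := by
    intro x
    have z1 := enV_zero (φ := φ1) hW.continuous hW0 hF h1 hl e1 e2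
    have z2 := enV_zero (φ := φ2) hW.continuous hW0 hF h2 hl e1' e2'
    have v1 := var_dist hW.continuous hW0 hF h1 hl hφ1 hs1 ht1 he (a2 * x)
    have v2 := var_dist hW.continuous hW0 hF h2 hl hφ2 hs2 ht2 he' (-a1 * x)
    rw [← ha1] at v1
    rw [← ha2] at v2
    have d0 := hC.2 0 s1 le_rfl h1.h0 (by linarith [h1.hst, h1.h1])
    have d1 := hC.2 t1 s2 (by linarith [h1.hst, h1.h0]) h12 (by linarith [h2.hst, h2.h1])
    have d2 := hC.2 t2 1 (by linarith [h2.hst, h2.h0]) h2.h1 le_rfl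
    have d3 := hC.2 0 1 le_rfl zero_le_one le_rfl
    set v := a1 * (a2 * x) with hv
    have hv' : a2 * (-a1 * x) = -v := by rw [hv]; ring
    rw [hv', ← dCC_shift F _ _ v] at v2
    rw [← dCC_shift F _ _ v] at d1
    simp only [neg_add_cancel_right] at v2
    have q1 := dCC_tri hFc h0 (Γ 0) (Γ s1) (Γ 1)
    have q2 := dCC_tri hFc h0 (Γ s1) ((Γ t1).1, (Γ t1).2.1, (Γ t1).2.2 + v) (Γ 1)
    have q3 := dCC_tri hFc h0 ((Γ t1).1, (Γ t1).2.1, (Γ t1).2.2 + v) ((Γ s2).1, (Γ s2).2.1, (Γ s2).2.2 + v) (Γ 1)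
    have q4 := dCC_tri hFc h0 ((Γ s2).1, (Γ s2).2.1, (Γ s2).2.2 + v) ((Γ t2).1, (Γ t2).2.1, (Γ t2).2.2) (Γ 1)
    have q5 : dCC F ((Γ t2).1, (Γ t2).2.1, (Γ t2).2.2) (Γ 1) = (1 - t2) * l := d2
    have hf : l * ((t1 - s1) + (t2 - s2)) ≤ f x / l := by
      have : f x / l = enV W s1 t1 X1 Y1 φ1 e1 e2 (a2 * x) / l + enV W s2 t2 X2 Y2 φ2 e1' e2' (-a1 * x) / l := by
        simp only [f]; ring
      rw [this]
      nlinarith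
    rw [le_div_iff₀ hl] at hf
    simp only [f, mul_zero] at hf ⊢
    nlinarith
  have D : HasDerivAt f (gV W s1 t1 X1 Y1 φ1 e1 e2 * a2 + gV W s2 t2 X2 Y2 φ2 e1' e2' * (-a1)) 0 := by
    have g1 := enV_deriv hW h1.lX h1.lY hφ1 s1 t1 e1 e2
    have g2 := enV_deriv hW h2.lX h2.lY hφ2 s2 t2 e1' e2'
    have m1 : HasDerivAt (fun x => a2 * x) a2 0 := by simpa using (hasDerivAt_id (0:ℝ)).const_mul a2
    have m2 : HasDerivAt (fun x => -a1 * x) (-a1) 0 := by simpa using (hasDerivAt_id (0:ℝ)).const_mul (-a1)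
    exact (HasDerivAt.comp (0:ℝ) (by simpa using g1) m1).add (HasDerivAt.comp (0:ℝ) (by simpa using g2) m2)
  have := IsLocalMin.hasDerivAt_eq_zero (Eventually.of_forall hmin) D
  linarith


lemma lip_prim {s t : ℝ} (hst : s ≤ t) {V : ℝ → ℝ} (mV : Measurable V) {C : ℝ}
    (bV : ∀ u ∈ Icc s t, |V u| ≤ C) :
    Lip (fun u => ∫ v in s..clp s t u, V v) ∧
    ∀ᵐ u : ℝ, u ∈ Ioo s t → deriv (fun u => ∫ v in s..clp s t u, V v) u = V u := by
  have ii : ∀ a ∈ Icc s t, ∀ b ∈ Icc s t, IntervalIntegrable V volume a b := fun a ha b hb =>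
    ii_bdd mV fun u hu => bV u (uIcc_subset_Icc ha hb hu)
  have hs : s ∈ Icc s t := ⟨le_rfl, hst⟩
  constructor
  · apply lip_clp_of hst (f := fun u => ∫ v in s..u, V v) (K := Real.nnabs C)
    apply lipOn_of
    intro u hu v hv
    rw [intervalIntegral.integral_interval_sub_left (ii s hs v hv) (ii s hs u hu), mul_comm]
    have := intervalIntegral.norm_integral_le_of_norm_le_const (f := V) (C := C) (a := u) (b := v)
      fun x hx => bV x (uIcc_subset_Icc hu hv (uIoc_subset_uIcc hx))
    exact this
  · filter_upwards [(ii s hs t ⟨hst, le_rfl⟩).ae_hasDerivAt_integral] with u hu hu'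
    have e := clp_ev (fun u => ∫ v in s..u, V v) hu'
    rw [e.deriv_eq]
    rw [uIcc_of_le hst] at hu
    exact (hu (Ioo_subset_Icc_self hu') s hs).deriv

lemma dbr {s t : ℝ} (hst : s < t) {V Z : ℝ → ℝ} (mV : Measurable V) (mZ : Measurable Z) {C D : ℝ}
    (bV : ∀ u ∈ Icc s t, |V u| ≤ C) (bZ : ∀ u ∈ Icc s t, |Z u| ≤ D)
    (h : ∀ φ, Lip φ → φ s = 0 → φ t = 0 → ∫ u in s..t, (V u * deriv φ u + Z u * φ u) = 0) :
    ∃ c, ∀ᵐ u : ℝ, u ∈ Ioo s t → V u = c + ∫ v in s..u, Z v := by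
  obtain ⟨lH, dH⟩ := lip_prim hst.le mZ bZ
  have eH : ∀ u ∈ Icc s t, ∫ v in s..clp s t u, Z v = ∫ v in s..u, Z v := fun u hu => by
    rw [clp_eq hu]
  set H := fun u => ∫ v in s..clp s t u, Z v with hH
  obtain ⟨E, hE⟩ := isCompact_Icc.exists_bound_of_continuousOn (s := Icc s t) lH.continuous.continuousOn
  have ts : 0 < t - s := by linarith
  let c := (∫ u in s..t, (V u - H u)) / (t - s)
  let R := fun u => V u - H u - c
  have mR : Measurable R := (mV.sub lH.continuous.measurable).sub_const c
  have bR : ∀ u ∈ Icc s t, |R u| ≤ C + E + |c| := fun u hu => by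
    have h1 := bV u hu
    have h2 := hE u hu
    rw [Real.norm_eq_abs] at h2
    have h3 := abs_sub (V u - H u) c
    have h4 := abs_sub (V u) (H u)
    simp only [R]; linarith
  obtain ⟨lφ, dφ⟩ := lip_prim hst.le mR bR
  set φ := fun u => ∫ v in s..clp s t u, R v with hφ
  have iV : IntervalIntegrable V volume s t := ii_bdd mV (C := C) (by rwa [uIcc_of_le hst.le])
  have iZ : IntervalIntegrable Z volume s t := ii_bdd mZ (C := D) (by rwa [uIcc_of_le hst.le])
  have iH : IntervalIntegrable H volume s t := lH.continuous.intervalIntegrable _ _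
  have iR : IntervalIntegrable R volume s t := (iV.sub iH).sub intervalIntegrable_const
  have φs : φ s = 0 := by
    simp only [hφ]; rw [clp_eq ⟨le_rfl, hst.le⟩]; simp
  have φt : φ t = 0 := by
    simp only [hφ]; rw [clp_eq ⟨hst.le, le_rfl⟩]
    show ∫ v in s..t, (V v - H v - c) = 0
    rw [intervalIntegral.integral_sub (iV.sub iH) intervalIntegrable_const,
      intervalIntegral.integral_const, smul_eq_mul]
    simp only [c]; field_simp; simp
  have k1 := h φ lφ φs φt
  have k2 := (lH.ac s t).integral_mul_deriv_eq_deriv_mul (lφ.ac s t)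
  rw [φs, φt] at k2
  have k3 := lφ.ftc s t
  rw [φs, φt] at k3
  obtain ⟨B, -, hB⟩ := lφ.bdd
  have mφ := measurable_deriv φ
  have iφ : IntervalIntegrable (deriv φ) volume s t := ii_bdd mφ (C := B) (fun u _ => hB u)
  have k4 : ∫ u in s..t, deriv H u * φ u = ∫ u in s..t, Z u * φ u := by
    apply int_congr_Ioo hst.le
    filter_upwards [dH] with u hu hu'
    rw [hu hu']
  have iVφ : IntervalIntegrable (fun u => V u * deriv φ u) volume s t := by
    refine ii_bdd (mV.mul mφ) (C := C * B) fun u hu => ?_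
    rw [uIcc_of_le hst.le] at hu
    rw [abs_mul]
    exact mul_le_mul (bV u hu) (hB u) (abs_nonneg _) ((abs_nonneg _).trans (bV u hu))
  have iHφ : IntervalIntegrable (fun u => H u * deriv φ u) volume s t :=
    ii_cont_mul lH.continuous mφ hB
  have iZφ : IntervalIntegrable (fun u => Z u * φ u) volume s t :=
    iZ.mul_continuousOn lφ.continuous.continuousOn
  rw [intervalIntegral.integral_add iVφ iZφ] at k1
  have k5 : ∫ u in s..t, R u * deriv φ u = 0 := by
    have : ∫ u in s..t, R u * deriv φ u = ∫ u in s..t, (V u * deriv φ u - H u * deriv φ u - c * deriv φ u) := by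
      apply intervalIntegral.integral_congr
      intro u _
      simp only [R]; ring
    rw [this, intervalIntegral.integral_sub (iVφ.sub iHφ) (iφ.const_mul c),
      intervalIntegral.integral_sub iVφ iHφ, intervalIntegral.integral_const_mul]
    linarith [k3, mul_comm c (∫ u in s..t, deriv φ u), show c * (∫ u in s..t, deriv φ u) = 0 by rw [k3]; ring]
  have k6 : ∫ u in s..t, R u ^ 2 = 0 := by
    rw [← k5]
    apply int_congr_Ioo hst.le
    filter_upwards [dφ] with u hu hu'
    rw [hu hu', sq]
  rw [intervalIntegral.integral_eq_zero_iff_of_nonneg_ae (Eventually.of_forall fun u => sq_nonneg _)] at k6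
  · refine ⟨c, ?_⟩
    rw [Ioc_eq_empty_of_le hst.le, union_empty, EventuallyEq,
      ae_restrict_iff' measurableSet_Ioc] at k6
    filter_upwards [k6] with u hu hu'
    have := hu (Ioo_subset_Ioc_self hu')
    have h2 : R u = 0 := by simpa using this
    simp only [R] at h2
    rw [← eH u (Ioo_subset_Icc_self hu')]
    linarith
  · refine ii_bdd (mR.pow_const 2) (C := (C + E + |c|) ^ 2) fun u hu => ?_
    rw [uIcc_of_le hst.le] at hu
    rw [abs_pow]
    exact pow_le_pow_left₀ (abs_nonneg _) (bR u hu) 2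

lemma eqOn_of_ae {s t : ℝ} {f g : ℝ → ℝ} (h : ∀ᵐ u : ℝ, u ∈ Ioo s t → f u = g u)
    (hf : ContinuousOn f (Ioo s t)) (hg : ContinuousOn g (Ioo s t)) : EqOn f g (Ioo s t) :=
  Measure.eqOn_Ioo_of_ae_eq volume ((ae_restrict_iff' measurableSet_Ioo).2 h) hf hg

lemma Good.dist_le {F : ℝ × ℝ → ℝ} (h0 : ∀ p, 0 ≤ F p) {Γ l s t X Y} (h : Good F Γ l s t X Y) :
    dCC F (Γ s) (Γ t) ≤ lenXY F s t X Y := by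
  have hst := h.hst.le
  refine dCC_le h0 ⟨s, t, X, Y, hst, h.lX, h.lY, ?_, ?_, ?_, ?_, ?_, rfl⟩
  · exact h.eX s ⟨le_rfl, hst⟩
  · exact h.eY s ⟨le_rfl, hst⟩
  · exact h.eX t ⟨hst, le_rfl⟩
  · exact h.eY t ⟨hst, le_rfl⟩
  · exact h.area s t le_rfl hst le_rfl

lemma aV_ne {F : ℝ × ℝ → ℝ} (h0 : ∀ p, 0 ≤ F p) {Γ l} (hC : ConstSp F Γ l) (hl : 0 < l)
    {s t X Y} (h : Good F Γ l s t X Y) :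
    ∃ φ, Lip φ ∧ φ s = 0 ∧ φ t = 0 ∧ ∃ e1 e2 : ℝ, e1 * e2 = 0 ∧ aV s t X Y φ e1 e2 ≠ 0 := by
  by_contra hcon
  push Not at hcon
  have cX := h.lX.continuous
  have cY := h.lY.continuous
  obtain ⟨E, hE⟩ := isCompact_Icc.exists_bound_of_continuousOn (s := Icc s t) cX.continuousOn
  obtain ⟨B, -, hB⟩ := h.lY.bdd
  obtain ⟨c1, hc1⟩ := dbr h.hst (V := X) (Z := fun _ => 0) cX.measurable measurable_const
    (C := E) (D := 0) hE (by simp) (fun φ l1 l2 l3 => by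
      have := hcon φ l1 l2 l3 0 1 (by simp)
      simpa [aV] using this)
  obtain ⟨c2, hc2⟩ := dbr h.hst (V := fun _ => 0) (Z := deriv Y) measurable_const (measurable_deriv Y)
    (C := 0) (D := B) (by simp) (fun u _ => hB u) (fun φ l1 l2 l3 => by
      have := hcon φ l1 l2 l3 1 0 (by simp)
      simpa [aV] using this)
  have x1 : EqOn X (fun _ => c1) (Ioo s t) := by
    apply eqOn_of_ae _ cX.continuousOn continuousOn_const
    filter_upwards [hc1] with u hu hu'
    simpa using hu hu'
  have x2 : EqOn Y (fun _ => Y s - c2) (Ioo s t) := by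
    apply eqOn_of_ae _ cY.continuousOn continuousOn_const
    filter_upwards [hc2] with u hu hu'
    have := hu hu'
    rw [h.lY.ftc] at this
    linarith
  have := h.dist_le h0
  rw [hC.2 s t h.h0 h.hst.le h.h1, (len_congr h.hst.le x1 x2).1] at this
  simp only [lenXY, deriv_const] at this
  have h2 : 0 < (t - s) * l := mul_pos (by linarith [h.hst]) hl
  simp at this
  linarith

lemma mu_exists {W F : ℝ × ℝ → ℝ} (hW : ContDiff ℝ 1 W) (hW0 : ∀ p, 0 ≤ W p)
    (hF : F = fun p => Real.sqrt (W p)) {Γ : ℝ → ℝ × ℝ × ℝ} {l : ℝ} (hC : ConstSp F Γ l) (hl : 0 < l) :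
    ∃ μ : ℝ, ∀ t0 ∈ Ioo (0:ℝ) 1, 0 < F (projCurve Γ t0) → ∃ δ > 0, ∃ X Y,
      Good F Γ l (t0 - δ) (t0 + δ) X Y ∧ ∀ φ, Lip φ → φ (t0 - δ) = 0 → φ (t0 + δ) = 0 →
        ∀ e1 e2 : ℝ, e1 * e2 = 0 →
        gV W (t0 - δ) (t0 + δ) X Y φ e1 e2 = μ * aV (t0 - δ) (t0 + δ) X Y φ e1 e2 := by
  have hFc : Continuous F := by rw [hF]; exact hW.continuous.sqrt
  have h0 : ∀ p, 0 ≤ F p := fun p => by rw [hF]; exact Real.sqrt_nonneg _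
  by_cases hex : ∃ τ ∈ Ioo (0:ℝ) 1, 0 < F (projCurve Γ τ)
  swap
  · exact ⟨0, fun t0 ht0 hp => absurd ⟨t0, ht0, hp⟩ hex⟩
  obtain ⟨τ, hτ, hpτ⟩ := hex
  obtain ⟨d, hd, X, Y, hG⟩ := good_exists hFc h0 hC hτ hpτ
  have G1 := hG.mono (s' := τ - d) (t' := τ - d / 2) le_rfl (by linarith) (by linarith)
  have G2 := hG.mono (s' := τ + d / 2) (t' := τ + d) (by linarith) (by linarith) le_rfl
  obtain ⟨φ1, l1, s1, t1, e1, f1, he1, hα1⟩ := aV_ne h0 hC hl G1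
  obtain ⟨φ2, l2, s2, t2, e2, f2, he2, hα2⟩ := aV_ne h0 hC hl G2
  have T := two_int hW hW0 hF hC hl G1 G2 (by linarith) l1 s1 t1 l2 s2 t2 he1 he2
  refine ⟨gV W (τ - d) (τ - d / 2) X Y φ1 e1 f1 / aV (τ - d) (τ - d / 2) X Y φ1 e1 f1, ?_⟩
  intro t0 ht0 hp0
  obtain ⟨δ, hδ, X', Y', hG'⟩ := good_exists hFc h0 hC ht0 hp0
  set ρ := min δ (d / 2) with hρ
  have hρ0 : 0 < ρ := lt_min hδ (by linarith)
  have r1 : ρ ≤ δ := min_le_left _ _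
  have r2 : ρ ≤ d / 2 := min_le_right _ _
  have G := hG'.mono (s' := t0 - ρ) (t' := t0 + ρ) (by linarith) (by linarith) (by linarith)
  refine ⟨ρ, hρ0, X', Y', G, ?_⟩
  intro φ lφ φs φt a b hab
  rcases le_total τ t0 with hh | hh
  · have := two_int hW hW0 hF hC hl G1 G (by linarith) l1 s1 t1 lφ φs φt he1 hab
    rw [div_mul_eq_mul_div, eq_div_iff (by assumption)]
    linarith
  · have := two_int hW hW0 hF hC hl G G2 (by linarith) lφ φs φt l2 s2 t2 hab he2
    have e : gV W (τ - d) (τ - d / 2) X Y φ1 e1 f1 / aV (τ - d) (τ - d / 2) X Y φ1 e1 f1 =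
      gV W (τ + d / 2) (τ + d) X Y φ2 e2 f2 / aV (τ + d / 2) (τ + d) X Y φ2 e2 f2 := by
      rw [div_eq_div_iff hα1 hα2, T]
    rw [e]
    rw [div_mul_eq_mul_div, eq_div_iff (by assumption)]
    linarith


lemma prim_deriv {s t c : ℝ} {Z z : ℝ → ℝ} (hz : ContinuousOn z (Icc s t))
    (h : ∀ᵐ u : ℝ, u ∈ Ioo s t → Z u = z u) {u : ℝ} (hu : u ∈ Ioo s t) :
    HasDerivAt (fun u => c + ∫ v in s..u, Z v) (z u) u := by
  have e : (fun u => c + ∫ v in s..u, Z v) =ᶠ[𝓝 u] fun u => c + ∫ v in s..u, z v := by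
    filter_upwards [Ioo_mem_nhds hu.1 hu.2] with w hw
    rw [int_congr_Ioo hw.1.le]
    filter_upwards [h] with x hx hx' using hx ⟨hx'.1, hx'.2.trans hw.2⟩
  refine HasDerivAt.congr_of_eventuallyEq ?_ e
  refine HasDerivAt.const_add c ?_
  have hn : Icc s t ∈ 𝓝 u := Icc_mem_nhds hu.1 hu.2
  apply intervalIntegral.integral_hasDerivAt_right
  · apply ContinuousOn.intervalIntegrable
    rw [uIcc_of_le hu.1.le]
    exact hz.mono (Icc_subset_Icc_right hu.2.le)
  · exact ContinuousOn.stronglyMeasurableAtFilter isOpen_Ioo (hz.mono Ioo_subset_Icc_self) u hu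
  · exact hz.continuousAt hn

lemma get_p {s t c D : ℝ} (hst : s < t) {ω U Z : ℝ → ℝ} (hω : Continuous ω) (hpos : ∀ u ∈ Icc s t, 0 < ω u)
    (hU : Lip U) (mZ : Measurable Z) (bZ : ∀ u ∈ Icc s t, |Z u| ≤ D)
    (h : ∀ᵐ u : ℝ, u ∈ Ioo s t → 2 * ω u * deriv U u = c + ∫ v in s..u, Z v) :
    ∃ p : ℝ → ℝ, Continuous p ∧ (∀ u ∈ Ioo s t, HasDerivAt U (p u) u) ∧
      ∀ u ∈ Ioo s t, 2 * ω u * p u = c + ∫ v in s..u, Z v := by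
  obtain ⟨lH, -⟩ := lip_prim hst.le mZ bZ
  let p : ℝ → ℝ := fun u => (c + ∫ v in s..clp s t u, Z v) / (2 * ω (clp s t u))
  have cp : Continuous p := by
    refine (continuous_const.add lH.continuous).div
      (continuous_const.mul (hω.comp (clp_lip s t).continuous)) fun u => ?_
    have := hpos _ (clp_mem hst.le u)
    positivity
  have ep : ∀ u ∈ Ioo s t, 2 * ω u * p u = c + ∫ v in s..u, Z v := by
    intro u hu
    have := hpos u (Ioo_subset_Icc_self hu)
    simp only [p]
    rw [clp_eq (Ioo_subset_Icc_self hu)]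
    field_simp
  refine ⟨p, cp, ?_, ep⟩
  intro u hu
  have : U = fun u => U s + ∫ v in s..u, deriv U v := by
    funext w; rw [hU.ftc]; ring
  rw [this]
  apply prim_deriv cp.continuousOn _ hu
  filter_upwards [h] with w hw hw'
  have h1 := hw hw'
  rw [← ep w hw'] at h1
  have := hpos w (Ioo_subset_Icc_self hw')
  exact mul_left_cancel₀ (by positivity) h1

/-- The regular system satisfied by the planar projection. -/
structure Reg (W F : ℝ × ℝ → ℝ) (Γ : ℝ → ℝ × ℝ × ℝ) (l μ s t : ℝ) (X Y p q : ℝ → ℝ) : Prop where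
  cX : Continuous X
  cY : Continuous Y
  cp : Continuous p
  cq : Continuous q
  eX : ∀ u ∈ Ioo s t, (Γ u).1 = X u
  eY : ∀ u ∈ Ioo s t, (Γ u).2.1 = Y u
  pos : ∀ u ∈ Ioo s t, 0 < W (X u, Y u)
  dX : ∀ u ∈ Ioo s t, HasDerivAt X (p u) u
  dY : ∀ u ∈ Ioo s t, HasDerivAt Y (q u) u
  dZ : ∀ u ∈ Ioo s t, HasDerivAt (fun v => (Γ v).2.2) (X u * q u) u
  d1 : ∀ u ∈ Ioo s t, HasDerivAt (fun v => 2 * W (X v, Y v) * p v)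
    (fderiv ℝ W (X u, Y u) (1, 0) * (p u ^ 2 + q u ^ 2) - μ * q u) u
  d2 : ∀ u ∈ Ioo s t, HasDerivAt (fun v => 2 * W (X v, Y v) * q v)
    (fderiv ℝ W (X u, Y u) (0, 1) * (p u ^ 2 + q u ^ 2) + μ * p u) u
  sp : ∀ u ∈ Ioo s t, F (X u, Y u) * Real.sqrt (p u ^ 2 + q u ^ 2) = l

lemma reg_exists {W F : ℝ × ℝ → ℝ} (hW : ContDiff ℝ 1 W) (hW0 : ∀ p, 0 ≤ W p)
    (hF : F = fun p => Real.sqrt (W p)) {Γ : ℝ → ℝ × ℝ × ℝ} {l μ : ℝ} (hC : ConstSp F Γ l)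
    {s t : ℝ} {X Y : ℝ → ℝ} (h : Good F Γ l s t X Y)
    (hμ : ∀ φ, Lip φ → φ s = 0 → φ t = 0 → ∀ e1 e2 : ℝ, e1 * e2 = 0 →
        gV W s t X Y φ e1 e2 = μ * aV s t X Y φ e1 e2) :
    ∃ p q, Reg W F Γ l μ s t X Y p q := by
  have hFc : Continuous F := by rw [hF]; exact hW.continuous.sqrt
  have h0 : ∀ p, 0 ≤ F p := fun p => by rw [hF]; exact Real.sqrt_nonneg _
  have hst := h.hst
  have cX := h.lX.continuous
  have cY := h.lY.continuous
  have cW := hW.continuous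
  have cXY : Continuous fun u => (X u, Y u) := cX.prodMk cY
  have cω : Continuous fun u => W (X u, Y u) := cW.comp cXY
  have cD1 : Continuous fun u => fderiv ℝ W (X u, Y u) (1, 0) := (fderiv_app_cont hW (1, 0)).comp cXY
  have cD2 : Continuous fun u => fderiv ℝ W (X u, Y u) (0, 1) := (fderiv_app_cont hW (0, 1)).comp cXY
  have pos : ∀ u ∈ Icc s t, 0 < W (X u, Y u) := by
    intro u hu
    have := h.pos u hu
    rw [hF] at this
    exact Real.sqrt_pos.1 this
  obtain ⟨C, -, hbC⟩ := bd3 h.lX h.lY h.lX 0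
  have hC0 : |(0:ℝ)| ≤ C := by
    rw [abs_zero]; exact (abs_nonneg _).trans (hbC 0).1
  have B : ∀ {H : ℝ × ℝ × ℝ × ℝ × ℝ → ℝ}, Continuous H → ∃ M, ∀ u ∈ Icc s t,
      |H (u, 0, deriv X u, deriv Y u, deriv X u)| ≤ M := by
    intro H hH
    obtain ⟨M, hM⟩ := bdd5 hH s t C
    rw [uIcc_of_le hst.le] at hM
    exact ⟨M, fun u hu => hM u hu 0 hC0 _ (hbC u).1 _ (hbC u).2.1 _ (hbC u).2.2⟩
  let HV1 : ℝ × ℝ × ℝ × ℝ × ℝ → ℝ := fun z => 2 * W (X z.1, Y z.1) * z.2.2.1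
  let HV2 : ℝ × ℝ × ℝ × ℝ × ℝ → ℝ := fun z => 2 * W (X z.1, Y z.1) * z.2.2.2.1
  let HZ1 : ℝ × ℝ × ℝ × ℝ × ℝ → ℝ := fun z => fderiv ℝ W (X z.1, Y z.1) (1, 0) *
    (z.2.2.1 ^ 2 + z.2.2.2.1 ^ 2) - μ * z.2.2.2.1
  let HZ2 : ℝ × ℝ × ℝ × ℝ × ℝ → ℝ := fun z => fderiv ℝ W (X z.1, Y z.1) (0, 1) *
    (z.2.2.1 ^ 2 + z.2.2.2.1 ^ 2) + μ * z.2.2.1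
  have cV1 : Continuous HV1 := (continuous_const.mul (cω.comp continuous_fst)).mul (by fun_prop)
  have cV2 : Continuous HV2 := (continuous_const.mul (cω.comp continuous_fst)).mul (by fun_prop)
  have cZ1 : Continuous HZ1 := ((cD1.comp continuous_fst).mul (by fun_prop)).sub (by fun_prop)
  have cZ2 : Continuous HZ2 := ((cD2.comp continuous_fst).mul (by fun_prop)).add (by fun_prop)
  obtain ⟨M1, hM1⟩ := B cV1
  obtain ⟨M2, hM2⟩ := B cV2
  obtain ⟨N1, hN1⟩ := B cZ1
  obtain ⟨N2, hN2⟩ := B cZ2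
  have mV1 := meas5 cV1 X Y X 0
  have mV2 := meas5 cV2 X Y X 0
  have mZ1 := meas5 cZ1 X Y X 0
  have mZ2 := meas5 cZ2 X Y X 0
  obtain ⟨c1, hc1⟩ := dbr hst mV1 mZ1 hM1 hN1 (by
    intro φ lφ φs φt
    have cφ := lφ.continuous
    have k := hμ φ lφ φs φt 1 0 (by simp)
    unfold gV aV at k
    rw [← intervalIntegral.integral_const_mul, ← sub_eq_zero, ← intervalIntegral.integral_sub] at k
    · rw [← k]
      apply intervalIntegral.integral_congr
      intro u _
      simp only [HV1, HZ1]; ring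
    · refine ii5 (H := fun z => 2 * W (X z.1, Y z.1) * (z.2.2.1 * 1 + z.2.2.2.1 * 0) * z.2.2.2.2 +
        fderiv ℝ W (X z.1, Y z.1) (1, 0) * (z.2.2.1 ^ 2 + z.2.2.2.1 ^ 2) * φ z.1) ?_ h.lX h.lY lφ 0 s t
      exact (((continuous_const.mul (cω.comp continuous_fst)).mul (by fun_prop)).mul (by fun_prop)).add
        (((cD1.comp continuous_fst).mul (by fun_prop)).mul (by fun_prop))
    · exact ii5 (H := fun z => μ * (X z.1 * 0 * z.2.2.2.2 + 1 * z.2.2.2.1 * φ z.1)) (by fun_prop)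
        h.lX h.lY lφ 0 s t)
  obtain ⟨c2, hc2⟩ := dbr hst mV2 mZ2 hM2 hN2 (by
    intro φ lφ φs φt
    have cφ := lφ.continuous
    have k := hμ φ lφ φs φt 0 1 (by simp)
    have parts := (h.lX.ac s t).integral_mul_deriv_eq_deriv_mul (lφ.ac s t)
    rw [φs, φt] at parts
    have ea : aV s t X Y φ 0 1 = - ∫ u in s..t, deriv X u * φ u := by
      unfold aV
      simp only [mul_one, zero_mul, add_zero]
      rw [parts]; ring
    rw [ea] at k
    unfold gV at k
    rw [mul_neg, ← intervalIntegral.integral_const_mul, ← sub_eq_zero, sub_neg_eq_add,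
      ← intervalIntegral.integral_add] at k
    · rw [← k]
      apply intervalIntegral.integral_congr
      intro u _
      simp only [HV2, HZ2]; ring
    · refine ii5 (H := fun z => 2 * W (X z.1, Y z.1) * (z.2.2.1 * 0 + z.2.2.2.1 * 1) * z.2.2.2.2 +
        fderiv ℝ W (X z.1, Y z.1) (0, 1) * (z.2.2.1 ^ 2 + z.2.2.2.1 ^ 2) * φ z.1) ?_ h.lX h.lY lφ 0 s t
      exact (((continuous_const.mul (cω.comp continuous_fst)).mul (by fun_prop)).mul (by fun_prop)).add
        (((cD2.comp continuous_fst).mul (by fun_prop)).mul (by fun_prop))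
    · exact ii5 (H := fun z => μ * (z.2.2.1 * φ z.1)) (by fun_prop)
        h.lX h.lY lφ 0 s t)
  obtain ⟨p, cp, dX, ep⟩ := get_p hst cω pos h.lX mZ1 hN1 hc1
  obtain ⟨q, cq, dY, eq⟩ := get_p hst cω pos h.lY mZ2 hN2 hc2
  refine ⟨p, q, cX, cY, cp, cq, fun u hu => (h.eX u (Ioo_subset_Icc_self hu)).symm,
    fun u hu => (h.eY u (Ioo_subset_Icc_self hu)).symm, fun u hu => pos u (Ioo_subset_Icc_self hu),
    dX, dY, ?_, ?_, ?_, ?_⟩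
  · intro u hu
    have e : (fun v => (Γ v).2.2) =ᶠ[𝓝 u] fun v => (Γ s).2.2 + ∫ w in s..v, X w * deriv Y w := by
      filter_upwards [Ioo_mem_nhds hu.1 hu.2] with v hv
      have := h.area s v le_rfl hv.1.le hv.2.le
      unfold arXY at this
      rw [this]; ring
    refine HasDerivAt.congr_of_eventuallyEq ?_ e
    refine prim_deriv (z := fun u => X u * q u) (cX.mul cq).continuousOn ?_ hu
    exact Eventually.of_forall fun w hw => by rw [(dY w hw).deriv]
  · intro u hu
    have e : (fun v => 2 * W (X v, Y v) * p v) =ᶠ[𝓝 u] _ :=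
      (Ioo_mem_nhds hu.1 hu.2 : Ioo s t ∈ 𝓝 u) |> fun hh => by
        filter_upwards [hh] with v hv using ep v hv
    refine HasDerivAt.congr_of_eventuallyEq ?_ e
    refine prim_deriv (z := fun u => fderiv ℝ W (X u, Y u) (1, 0) * (p u ^ 2 + q u ^ 2) - μ * q u) ?_ ?_ hu
    · exact ((cD1.mul (by fun_prop)).sub (by fun_prop)).continuousOn
    · exact Eventually.of_forall fun w hw => by
        simp only [HZ1]; rw [(dX w hw).deriv, (dY w hw).deriv]
  · intro u hu
    have e : (fun v => 2 * W (X v, Y v) * q v) =ᶠ[𝓝 u] _ :=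
      (Ioo_mem_nhds hu.1 hu.2 : Ioo s t ∈ 𝓝 u) |> fun hh => by
        filter_upwards [hh] with v hv using eq v hv
    refine HasDerivAt.congr_of_eventuallyEq ?_ e
    refine prim_deriv (z := fun u => fderiv ℝ W (X u, Y u) (0, 1) * (p u ^ 2 + q u ^ 2) + μ * p u) ?_ ?_ hu
    · exact ((cD2.mul (by fun_prop)).add (by fun_prop)).continuousOn
    · exact Eventually.of_forall fun w hw => by
        simp only [HZ2]; rw [(dX w hw).deriv, (dY w hw).deriv]
  · have ig := len_ii hFc h.lX h.lY s t
    have dl := h.dist_le h0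
    rw [hC.2 s t h.h0 hst.le h.h1] at dl
    unfold lenXY at dl
    have nn : ∀ᵐ u : ℝ, u ∈ Ioc s t →
        0 ≤ l - F (X u, Y u) * Real.sqrt (deriv X u ^ 2 + deriv Y u ^ 2) := by
      have : ∀ᵐ u : ℝ, u ≠ t := by simp [ae_iff, measure_singleton]
      filter_upwards [h.speed, this] with u hu hut hu'
      linarith [hu ⟨hu'.1, lt_of_le_of_ne hu'.2 hut⟩]
    have i0 : ∫ u in s..t, (l - F (X u, Y u) * Real.sqrt (deriv X u ^ 2 + deriv Y u ^ 2)) = 0 := by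
      apply le_antisymm
      · rw [intervalIntegral.integral_sub intervalIntegrable_const ig, intervalIntegral.integral_const,
          smul_eq_mul]
        linarith
      · rw [intervalIntegral.integral_of_le hst.le]
        exact setIntegral_nonneg_of_ae_restrict ((ae_restrict_iff' measurableSet_Ioc).2 nn)
    rw [intervalIntegral.integral_eq_zero_iff_of_nonneg_ae _ (intervalIntegrable_const.sub ig)] at i0
    · rw [Ioc_eq_empty_of_le hst.le, union_empty, EventuallyEq, ae_restrict_iff' measurableSet_Ioc] at i0
      have := eqOn_of_ae (s := s) (t := t) (f := fun u => F (X u, Y u) * Real.sqrt (p u ^ 2 + q u ^ 2))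
        (g := fun _ => l) (by
          filter_upwards [i0] with u hu hu'
          have := hu (Ioo_subset_Ioc_self hu')
          rw [(dX u hu').deriv, (dY u hu').deriv] at this
          simp only [Pi.zero_apply] at this
          linarith) ((hFc.comp cXY).mul (by fun_prop)).continuousOn continuousOn_const
      exact this
    · rw [Ioc_eq_empty_of_le hst.le, union_empty]
      exact (ae_restrict_iff' measurableSet_Ioc).2 nn


lemma cd_succ {f f' : ℝ → ℝ} {S : Set ℝ} (hS : IsOpen S) (n : ℕ) (h : ∀ u ∈ S, HasDerivAt f (f' u) u)
    (hf' : ContDiffOn ℝ n f' S) : ContDiffOn ℝ (n + 1 : ℕ) f S := by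
  push_cast
  rw [contDiffOn_succ_iff_deriv_of_isOpen hS]
  refine ⟨fun u hu => (h u hu).differentiableAt.differentiableWithinAt, ?_, ?_⟩
  · intro hn; exact absurd hn (by simp)
  · exact hf'.congr fun u hu => (h u hu).deriv

lemma Reg.smooth {W F : ℝ × ℝ → ℝ} (hW : ContDiff ℝ (⊤ : ℕ∞) W) {Γ : ℝ → ℝ × ℝ × ℝ} {l μ s t : ℝ}
    {X Y p q : ℝ → ℝ} (h : Reg W F Γ l μ s t X Y p q) : ContDiffOn ℝ (⊤ : ℕ∞) Γ (Ioo s t) := by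
  have hS : IsOpen (Ioo s t) := isOpen_Ioo
  have hWn : ∀ n : ℕ, ContDiff ℝ n W := fun n => hW.of_le (by exact_mod_cast le_top)
  have hD : ∀ (v : ℝ × ℝ) (n : ℕ), ContDiff ℝ n fun x => fderiv ℝ W x v := fun v n =>
    (hW.fderiv_right (m := n) (by exact_mod_cast le_top)).clm_apply contDiff_const
  have key : ∀ n : ℕ, ContDiffOn ℝ n X (Ioo s t) ∧ ContDiffOn ℝ n Y (Ioo s t) ∧
      ContDiffOn ℝ n p (Ioo s t) ∧ ContDiffOn ℝ n q (Ioo s t) := by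
    intro n
    induction n with
    | zero =>
      simp only [Nat.cast_zero, contDiffOn_zero]
      exact ⟨h.cX.continuousOn, h.cY.continuousOn, h.cp.continuousOn, h.cq.continuousOn⟩
    | succ n ih =>
      obtain ⟨iX, iY, ip, iq⟩ := ih
      have jX := cd_succ hS n h.dX ip
      have jY := cd_succ hS n h.dY iq
      have iXY := iX.prodMk iY
      have jω : ContDiffOn ℝ (n + 1 : ℕ) (fun u => 2 * W (X u, Y u)) (Ioo s t) :=
        contDiffOn_const.mul ((hWn (n + 1)).comp_contDiffOn (jX.prodMk jY))
      have sq : ContDiffOn ℝ n (fun u => p u ^ 2 + q u ^ 2) (Ioo s t) := (ip.pow 2).add (iq.pow 2)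
      have j1 := cd_succ hS n h.d1
        ((((hD (1, 0) n).comp_contDiffOn iXY).mul sq).sub (contDiffOn_const.mul iq))
      have j2 := cd_succ hS n h.d2
        ((((hD (0, 1) n).comp_contDiffOn iXY).mul sq).add (contDiffOn_const.mul ip))
      have ne : ∀ u ∈ Ioo s t, 2 * W (X u, Y u) ≠ 0 := fun u hu => by
        have := h.pos u hu; positivity
      refine ⟨jX, jY, (j1.div jω ne).congr fun u hu => ?_, (j2.div jω ne).congr fun u hu => ?_⟩
      · rw [Pi.div_apply]; exact (mul_div_cancel_left₀ _ (ne u hu)).symm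
      · rw [Pi.div_apply]; exact (mul_div_cancel_left₀ _ (ne u hu)).symm
  rw [contDiffOn_infty]
  intro n
  obtain ⟨iX, iY, ip, iq⟩ := key n
  have i3 : ContDiffOn ℝ n (fun v => (Γ v).2.2) (Ioo s t) :=
    (cd_succ hS n h.dZ (iX.mul iq)).of_le (by exact_mod_cast Nat.le_succ n)
  exact (iX.congr h.eX).prodMk ((iY.congr h.eY).prodMk i3)

lemma Reg.el {W F : ℝ × ℝ → ℝ} (hW : ContDiff ℝ 1 W)
    (hF : F = fun p => Real.sqrt (W p)) {Γ : ℝ → ℝ × ℝ × ℝ} {l μ s t : ℝ} (hl : 0 < l)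
    {X Y p q : ℝ → ℝ} (h : Reg W F Γ l μ s t X Y p q) {u : ℝ} (hu : u ∈ Ioo s t) :
    ELeq F (μ / (2 * l)) (projCurve Γ) u := by
  have ev : ∀ v ∈ Ioo s t, projCurve Γ =ᶠ[𝓝 v] fun w => (X w, Y w) := by
    intro v hv
    filter_upwards [Ioo_mem_nhds hv.1 hv.2] with w hw
    simp only [projCurve, h.eX w hw, h.eY w hw]
  have dγ : ∀ v ∈ Ioo s t, deriv (projCurve Γ) v = (p v, q v) := by
    intro v hv
    rw [(ev v hv).deriv_eq]
    exact ((h.dX v hv).prodMk (h.dY v hv)).deriv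
  have eγ : ∀ v ∈ Ioo s t, projCurve Γ v = (X v, Y v) := fun v hv => (ev v hv).eq_of_nhds
  have Fpos : ∀ v ∈ Ioo s t, 0 < F (X v, Y v) := fun v hv => by
    rw [hF]; exact Real.sqrt_pos.2 (h.pos v hv)
  have npos : ∀ v ∈ Ioo s t, 0 < Real.sqrt (p v ^ 2 + q v ^ 2) := fun v hv => by
    have h1 := h.sp v hv
    have h2 := Fpos v hv
    by_contra hn
    have h3 := Real.sqrt_nonneg (p v ^ 2 + q v ^ 2)
    have h4 : Real.sqrt (p v ^ 2 + q v ^ 2) = 0 := le_antisymm (not_lt.1 hn) h3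
    rw [h4, mul_zero] at h1
    linarith
  have Fsq : ∀ v ∈ Ioo s t, F (X v, Y v) ^ 2 = W (X v, Y v) := fun v hv => by
    rw [hF]; exact Real.sq_sqrt (h.pos v hv).le
  have e1 : (fun v => (F (projCurve Γ v) / enorm2 (deriv (projCurve Γ) v)) • deriv (projCurve Γ) v)
      =ᶠ[𝓝 u] fun v => ((2 * W (X v, Y v) * p v) / (2 * l), (2 * W (X v, Y v) * q v) / (2 * l)) := by
    filter_upwards [Ioo_mem_nhds hu.1 hu.2] with v hv
    rw [dγ v hv, eγ v hv]
    simp only [enorm2]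
    have h1 := h.sp v hv
    have h2 := Fpos v hv
    have h3 := npos v hv
    have h4 : F (X v, Y v) / Real.sqrt (p v ^ 2 + q v ^ 2) = W (X v, Y v) / l := by
      rw [div_eq_div_iff h3.ne' hl.ne', ← Fsq v hv, ← h1]; ring
    rw [h4]
    ext
    · simp; field_simp
    · simp; field_simp
  have D := ((h.d1 u hu).div_const (2 * l)).prodMk ((h.d2 u hu).div_const (2 * l))
  have gF : ∀ v, fderiv ℝ F (X u, Y u) v = fderiv ℝ W (X u, Y u) v / (2 * F (X u, Y u)) := by
    intro v
    have hd : DifferentiableAt ℝ W (X u, Y u) := (hW.differentiable one_ne_zero).differentiableAt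
    have := (hd.hasFDerivAt.sqrt (h.pos u hu).ne').fderiv
    have hF' : F (X u, Y u) = Real.sqrt (W (X u, Y u)) := by rw [hF]
    rw [hF']
    rw [hF, this]
    simp
    field_simp
  unfold ELeq
  rw [e1.deriv_eq, D.deriv, dγ u hu, eγ u hu]
  simp only [grad2, perp, enorm2, gF]
  have h1 := h.sp u hu
  have h2 := Fpos u hu
  have h3 := npos u hu
  have h4 : p u ^ 2 + q u ^ 2 = Real.sqrt (p u ^ 2 + q u ^ 2) ^ 2 := (Real.sq_sqrt (by positivity)).symm
  set N := Real.sqrt (p u ^ 2 + q u ^ 2) with hN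
  rw [h4, ← h1]
  ext
  · simp; field_simp; ring
  · simp; field_simp; ring

lemma local_main {W F : ℝ × ℝ → ℝ} (hW : ContDiff ℝ (⊤ : ℕ∞) W) (hW0 : ∀ p, 0 ≤ W p)
    (hF : F = fun p => Real.sqrt (W p)) {Γ : ℝ → ℝ × ℝ × ℝ} {l : ℝ} (hC : ConstSp F Γ l) :
    ∃ lam : ℝ, ∀ t ∈ Ioo (0:ℝ) 1, 0 < F (projCurve Γ t) → ContDiffAt ℝ (⊤ : ℕ∞) Γ t ∧
      deriv (fun s => (Γ s).2.2) t = (Γ t).1 * deriv (fun s => (Γ s).2.1) t ∧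
      ELeq F lam (projCurve Γ) t := by
  have hW1 : ContDiff ℝ 1 W := hW.of_le (by exact_mod_cast le_top)
  have hFc : Continuous F := by rw [hF]; exact hW.continuous.sqrt
  have h0 : ∀ p, 0 ≤ F p := fun p => by rw [hF]; exact Real.sqrt_nonneg _
  rcases hC.1.eq_or_lt with hl | hl
  · refine ⟨0, fun t ht hp => ?_⟩
    obtain ⟨δ, hδ, c, hc, -, -, hest⟩ := local_lip hFc h0 hC ht hp
    have ht' : t ∈ Icc (t - δ) (t + δ) := ⟨by linarith, by linarith⟩
    have ec : ∀ u ∈ Ioo (t - δ) (t + δ), Γ u = Γ t := by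
      intro u hu
      obtain ⟨h1, h2⟩ := hest t ht' u (Ioo_subset_Icc_self hu)
      rw [← hl] at h1 h2
      simp only [mul_zero, zero_div] at h1 h2
      have a1 := abs_nonpos_iff.1 ((abs_le_sqrt_l _ _).trans h1)
      have a2 := abs_nonpos_iff.1 ((abs_le_sqrt_r _ _).trans h1)
      rw [a2] at h2
      norm_num at h2
      refine Prod.ext (by linarith) (Prod.ext (by linarith) (by linarith))
    have ev : ∀ u ∈ Ioo (t - δ) (t + δ), Γ =ᶠ[𝓝 u] fun _ => Γ t := by
      intro u hu
      filter_upwards [Ioo_mem_nhds hu.1 hu.2] with w hw using ec w hw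
    have htI : t ∈ Ioo (t - δ) (t + δ) := ⟨by linarith, by linarith⟩
    have dz : ∀ u ∈ Ioo (t - δ) (t + δ), deriv (projCurve Γ) u = 0 := by
      intro u hu
      have : projCurve Γ =ᶠ[𝓝 u] fun _ => projCurve Γ t := by
        filter_upwards [ev u hu] with w hw
        simp only [projCurve, hw]
      rw [this.deriv_eq, deriv_const]
    refine ⟨contDiffAt_const.congr_of_eventuallyEq (ev t htI), ?_, ?_⟩
    · have e2 : (fun s => (Γ s).2.2) =ᶠ[𝓝 t] fun _ => (Γ t).2.2 := by
        filter_upwards [ev t htI] with w hw using by rw [hw]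
      have e3 : (fun s => (Γ s).2.1) =ᶠ[𝓝 t] fun _ => (Γ t).2.1 := by
        filter_upwards [ev t htI] with w hw using by rw [hw]
      rw [e2.deriv_eq, e3.deriv_eq]; simp
    · unfold ELeq
      have : (fun s => (F (projCurve Γ s) / enorm2 (deriv (projCurve Γ) s)) • deriv (projCurve Γ) s)
          =ᶠ[𝓝 t] fun _ => 0 := by
        filter_upwards [Ioo_mem_nhds htI.1 htI.2] with w hw
        rw [dz w hw, smul_zero]
      rw [this.deriv_eq, dz t htI]
      simp [enorm2]
  · obtain ⟨μ, hμ⟩ := mu_exists hW1 hW0 hF hC hl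
    refine ⟨μ / (2 * l), fun t ht hp => ?_⟩
    obtain ⟨δ, hδ, X, Y, hG, hv⟩ := hμ t ht hp
    obtain ⟨p, q, R⟩ := reg_exists hW1 hW0 hF hC hG hv
    have htI : t ∈ Ioo (t - δ) (t + δ) := ⟨by linarith, by linarith⟩
    refine ⟨(R.smooth hW).contDiffAt (Ioo_mem_nhds htI.1 htI.2), ?_, R.el hW1 hF hl htI⟩
    have e3 : (fun s => (Γ s).2.1) =ᶠ[𝓝 t] Y := by
      filter_upwards [Ioo_mem_nhds htI.1 htI.2] with w hw using R.eY w hw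
    rw [(R.dZ t htI).deriv, e3.deriv_eq, (R.dY t htI).deriv, R.eX t htI]


/-- on any parameter interval where its projection avoids the wells, a minimizing
geodesic is smooth and admissible, and its projection satisfies the Euler–Lagrange system
`−(F(γ)γ'/|γ'|)' + |γ'|∇F(γ) = −λ(γ')^⊥` for some constant `λ`; if the geodesic contains no
vertical segment over the wells, the system holds with one and the same `λ` on every such arc. -/
theorem geodesic_euler_lagrange
    (W : ℝ × ℝ → ℝ) (pm pp : ℝ × ℝ) (hW : TwoWell W pm pp)
    (F : ℝ × ℝ → ℝ) (hF : F = fun p => Real.sqrt (W p))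
    (P Q : ℝ × ℝ × ℝ) (Γ : ℝ → ℝ × ℝ × ℝ) (hΓ : IsMinGeodesic F P Q Γ)
    (a b : ℝ) (h0a : 0 ≤ a) (hab : a < b) (hb1 : b ≤ 1)
    (havoid : ∀ t ∈ Set.Ioo a b, projCurve Γ t ≠ pm ∧ projCurve Γ t ≠ pp) :
    (ContDiffOn ℝ (⊤ : ℕ∞) Γ (Set.Ioo a b) ∧
     (∀ t ∈ Set.Ioo a b,
        deriv (fun s => (Γ s).2.2) t = (Γ t).1 * deriv (fun s => (Γ s).2.1) t) ∧
     (∃ lam : ℝ, ∀ t ∈ Set.Ioo a b, ELeq F lam (projCurve Γ) t)) ∧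
    ((¬ ∃ s t : ℝ, s < t ∧
        Set.Icc s t ⊆ { u | u ∈ Set.Icc (0:ℝ) 1 ∧ (projCurve Γ u = pm ∨ projCurve Γ u = pp) }) →
      ∃ lam : ℝ, ∀ a' b' : ℝ, 0 ≤ a' → b' ≤ 1 →
        (∀ t ∈ Set.Ioo a' b', projCurve Γ t ≠ pm ∧ projCurve Γ t ≠ pp) →
        ∀ t ∈ Set.Ioo a' b', ELeq F lam (projCurve Γ) t) := by
  have hW0 := hW.nonneg
  have hFc : Continuous F := by rw [hF]; exact hW.smooth.continuous.sqrt
  have h0 : ∀ p, 0 ≤ F p := fun p => by rw [hF]; exact Real.sqrt_nonneg _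
  have hC : ConstSp F Γ (dCC F P Q) :=
    ⟨dCC_nonneg h0 P Q, fun s t hs hst ht => geod_dist hFc h0 hΓ hs hst ht⟩
  obtain ⟨lam, hlam⟩ := local_main hW.smooth hW0 hF hC
  have good : ∀ a' b' : ℝ, 0 ≤ a' → b' ≤ 1 →
      (∀ t ∈ Set.Ioo a' b', projCurve Γ t ≠ pm ∧ projCurve Γ t ≠ pp) →
      ∀ t ∈ Set.Ioo a' b', t ∈ Ioo (0:ℝ) 1 ∧ 0 < F (projCurve Γ t) := by
    intro a' b' ha hb hav t ht
    refine ⟨⟨ha.trans_lt ht.1, ht.2.trans_le hb⟩, ?_⟩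
    rw [hF]
    refine Real.sqrt_pos.2 (lt_of_le_of_ne (hW0 _) fun h => ?_)
    rcases (hW.zeroSet _).1 h.symm with h | h
    · exact (hav t ht).1 h
    · exact (hav t ht).2 h
  have g := good a b h0a hb1 havoid
  refine ⟨⟨fun t ht => ?_, fun t ht => ?_, lam, fun t ht => ?_⟩, fun _ => ⟨lam, ?_⟩⟩
  · exact (hlam t (g t ht).1 (g t ht).2).1.contDiffWithinAt
  · exact (hlam t (g t ht).1 (g t ht).2).2.1
  · exact (hlam t (g t ht).1 (g t ht).2).2.2
  · intro a' b' ha hb hav t ht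
    have g' := good a' b' ha hb hav t ht
    exact (hlam t g'.1 g'.2).2.2
end
end

section
/- For every A ∈ ℝ and every p₀ ∈ ℝ² ∖ {(0,0)}, the infimum of E_H(γ) over locally Lipschitz curves γ : [a,b] → ℝ² with γ(a) = p₀, γ(b) = (0,0) and 𝒜(γ) = A is attained; the minimizer is unique up to orientation-preserving reparametrization; the minimizing curve satisfies γ(t) ≠ (0,0) for all t < b (it meets the origin only at its terminal endpoint); and its Euclidean arclength is finite: ∫ₐᵇ |γ'(t)| dt ≤ C for a constant C depending only on λ₁, λ₂, p₀ and A. -/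
open MeasureTheory Set Filter Topology
open scoped ENNReal

noncomputable section

/-- The homogeneous conformal factor `F_H(p) = √(λ₁²p₁² + λ₂²p₂²)`. -/
def FH (l1 l2 : ℝ) (p : ℝ × ℝ) : ℝ := Real.sqrt (l1 ^ 2 * p.1 ^ 2 + l2 ^ 2 * p.2 ^ 2)

/-- Two curves are equal up to an orientation-preserving reparametrization. -/
def SameCurve (a1 b1 : ℝ) (γ1 : ℝ → ℝ × ℝ) (a2 b2 : ℝ) (γ2 : ℝ → ℝ × ℝ) : Prop :=
  ∃ φ : ℝ → ℝ, MonotoneOn φ (Set.Icc a1 b1) ∧ ContinuousOn φ (Set.Icc a1 b1) ∧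
    φ a1 = a2 ∧ φ b1 = b2 ∧ ∀ t ∈ Set.Icc a1 b1, γ1 t = γ2 (φ t)

lemma ac_of_ll {f : ℝ → ℝ} (hf : LocallyLipschitz f) (a b : ℝ) :
    AbsolutelyContinuousOnInterval f a b := by
  obtain ⟨K, hK⟩ := (hf.locallyLipschitzOn (s := uIcc a b)).exists_lipschitzOnWith_of_compact
    isCompact_uIcc
  exact hK.absolutelyContinuousOnInterval

lemma ll_fst {γ : ℝ → ℝ × ℝ} (h : LocallyLipschitz γ) : LocallyLipschitz (fun t => (γ t).1) :=
  (LipschitzWith.prod_fst.locallyLipschitz).comp h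

lemma ll_snd {γ : ℝ → ℝ × ℝ} (h : LocallyLipschitz γ) : LocallyLipschitz (fun t => (γ t).2) :=
  (LipschitzWith.prod_snd.locallyLipschitz).comp h

lemma ae_diff {γ : ℝ → ℝ × ℝ} (h : LocallyLipschitz γ) (a b : ℝ) :
    ∀ᵐ t, t ∈ uIcc a b → HasDerivAt (fun s => (γ s).1) (deriv γ t).1 t ∧
      HasDerivAt (fun s => (γ s).2) (deriv γ t).2 t := by
  filter_upwards [(ac_of_ll (ll_fst h) a b).ae_differentiableAt,
    (ac_of_ll (ll_snd h) a b).ae_differentiableAt] with t h1 h2 ht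
  have h3 := (h1 ht).hasDerivAt.prodMk (h2 ht).hasDerivAt
  have h4 : deriv γ t = _ := h3.deriv
  rw [h4]
  exact ⟨(h1 ht).hasDerivAt, (h2 ht).hasDerivAt⟩

lemma anti_of_ae {f : ℝ → ℝ} (hf : LocallyLipschitz f) {a b : ℝ} (hab : a ≤ b)
    (h : ∀ᵐ t, t ∈ Icc a b → ∃ d, d ≤ 0 ∧ HasDerivAt f d t) : f b ≤ f a := by
  have h1 := (ac_of_ll hf a b).integral_deriv_eq_sub
  have h2 : 0 ≤ ∫ t in a..b, - deriv f t := by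
    apply intervalIntegral.integral_nonneg_of_ae_restrict hab
    rw [Filter.EventuallyLE, ae_restrict_iff' measurableSet_Icc]
    filter_upwards [h] with t ht hm
    obtain ⟨d, hd, hh⟩ := ht hm
    rw [hh.deriv]; simpa using hd
  rw [intervalIntegral.integral_neg] at h2
  linarith

/-- The calibration defect. -/
def defW (l1 l2 T : ℝ) (p v : ℝ × ℝ) : ℝ :=
  Real.sqrt (1 + T ^ 2) * (FH l1 l2 p * enorm2 v) +
    ((l1 * p.1 - T * l2 * p.2) * v.1 + (T * l1 * p.1 + l2 * p.2) * v.2)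

lemma sq_nFH (l1 l2 T : ℝ) (p : ℝ × ℝ) :
    (Real.sqrt (1 + T ^ 2) * FH l1 l2 p) ^ 2
      = (l1 * p.1 - T * l2 * p.2) ^ 2 + (T * l1 * p.1 + l2 * p.2) ^ 2 := by
  rw [mul_pow, FH, Real.sq_sqrt (by positivity), Real.sq_sqrt (by positivity)]; ring

lemma defW_nonneg (l1 l2 T : ℝ) (p v : ℝ × ℝ) : 0 ≤ defW l1 l2 T p v := by
  have h1 := sq_nFH l1 l2 T p
  have h2 : enorm2 v ^ 2 = v.1 ^ 2 + v.2 ^ 2 := Real.sq_sqrt (by positivity)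
  have h3 : 0 ≤ enorm2 v := Real.sqrt_nonneg _
  have h4 : 0 ≤ Real.sqrt (1 + T ^ 2) * FH l1 l2 p :=
    mul_nonneg (Real.sqrt_nonneg _) (Real.sqrt_nonneg _)
  unfold defW
  rw [← mul_assoc]
  set n := Real.sqrt (1 + T ^ 2) * FH l1 l2 p
  set r := enorm2 v
  set u := l1 * p.1 - T * l2 * p.2
  set w := T * l1 * p.1 + l2 * p.2
  have h5 : |u * v.1 + w * v.2| ≤ n * r := by
    apply abs_le_of_sq_le_sq _ (by positivity)
    rw [mul_pow, h1, h2]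
    nlinarith [sq_nonneg (u * v.2 - w * v.1)]
  linarith [neg_abs_le (u * v.1 + w * v.2)]

lemma defW_zero {l1 l2 T : ℝ} {p v : ℝ × ℝ} (hW : defW l1 l2 T p v = 0)
    (hp : 0 < FH l1 l2 p) :
    v.1 = - (enorm2 v / (Real.sqrt (1 + T ^ 2) * FH l1 l2 p)) * (l1 * p.1 - T * l2 * p.2) ∧
    v.2 = - (enorm2 v / (Real.sqrt (1 + T ^ 2) * FH l1 l2 p)) * (T * l1 * p.1 + l2 * p.2) := by
  have h1 := sq_nFH l1 l2 T p
  have h2 : enorm2 v ^ 2 = v.1 ^ 2 + v.2 ^ 2 := Real.sq_sqrt (by positivity)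
  have h4 : 0 < Real.sqrt (1 + T ^ 2) * FH l1 l2 p :=
    mul_pos (Real.sqrt_pos.2 (by positivity)) hp
  unfold defW at hW
  rw [← mul_assoc] at hW
  set n := Real.sqrt (1 + T ^ 2) * FH l1 l2 p
  set r := enorm2 v
  set u := l1 * p.1 - T * l2 * p.2
  set w := T * l1 * p.1 + l2 * p.2
  have h6 : (n * v.1 + r * u) ^ 2 + (n * v.2 + r * w) ^ 2 = 0 := by
    have : (n * v.1 + r * u) ^ 2 + (n * v.2 + r * w) ^ 2
      = n ^ 2 * (v.1 ^ 2 + v.2 ^ 2) + 2 * n * r * (u * v.1 + w * v.2) + r ^ 2 * (u ^ 2 + w ^ 2) := by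
      ring
    rw [this, ← h1, ← h2]
    linear_combination 2 * n * r * hW
  have h7 : n * v.1 + r * u = 0 := by
    nlinarith [sq_nonneg (n * v.1 + r * u), sq_nonneg (n * v.2 + r * w)]
  have h8 : n * v.2 + r * w = 0 := by
    nlinarith [sq_nonneg (n * v.1 + r * u), sq_nonneg (n * v.2 + r * w)]
  constructor <;> field_simp <;> linarith

lemma defW_flow {l1 l2 T k : ℝ} {p v : ℝ × ℝ} (hk : 0 ≤ k)
    (h1 : v.1 = - k * (l1 * p.1 - T * l2 * p.2)) (h2 : v.2 = - k * (T * l1 * p.1 + l2 * p.2)) :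
    defW l1 l2 T p v = 0 := by
  have h3 := sq_nFH l1 l2 T p
  have h4 : 0 ≤ Real.sqrt (1 + T ^ 2) * FH l1 l2 p :=
    mul_nonneg (Real.sqrt_nonneg _) (Real.sqrt_nonneg _)
  have h5 : enorm2 v = k * (Real.sqrt (1 + T ^ 2) * FH l1 l2 p) := by
    unfold enorm2
    rw [Real.sqrt_eq_iff_mul_self_eq (by positivity) (by positivity), h1, h2]
    linear_combination -k ^ 2 * h3
  unfold defW
  rw [h5, h1, h2]
  linear_combination k * h3

lemma defect (l1 l2 T : ℝ) {a b : ℝ} {γ : ℝ → ℝ × ℝ} {p0 : ℝ × ℝ}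
    (hγ : IsCurve a b γ p0 (0, 0)) :
    IntervalIntegrable (fun t => defW l1 l2 T (γ t) (deriv γ t)) volume a b ∧
    ∫ t in a..b, defW l1 l2 T (γ t) (deriv γ t) =
      Real.sqrt (1 + T ^ 2) * degLen (FH l1 l2) a b γ + T * (l1 + l2) * sArea a b γ
        - (l1 * p0.1 ^ 2 / 2 + l2 * p0.2 ^ 2 / 2 - T * l2 * p0.1 * p0.2) := by
  obtain ⟨hab, hl, ha, hb⟩ := hγ
  have hc := hl.continuous
  have hx := ac_of_ll (ll_fst hl) a b
  have hy := ac_of_ll (ll_snd hl) a b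
  have hd := ae_diff hl a b
  have ix := hx.intervalIntegrable_deriv
  have iy := hy.intervalIntegrable_deriv
  have i1 : IntervalIntegrable (fun t => FH l1 l2 (γ t) * enorm2 (deriv γ t)) volume a b := by
    apply IntervalIntegrable.continuousOn_mul
    · apply (ix.abs.add iy.abs).mono_fun
      · apply Measurable.aestronglyMeasurable
        have := measurable_deriv γ
        unfold enorm2
        fun_prop
      · rw [Filter.EventuallyLE, ae_restrict_iff' measurableSet_uIoc]
        filter_upwards [hd] with t ht hm
        obtain ⟨h1, h2⟩ := ht (uIoc_subset_uIcc hm)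
        rw [h1.deriv, h2.deriv]
        unfold enorm2
        rw [Real.norm_of_nonneg (Real.sqrt_nonneg _), Real.norm_of_nonneg (by positivity)]
        apply Real.sqrt_le_iff.2 ⟨by positivity, _⟩
        nlinarith [sq_abs (deriv γ t).1, sq_abs (deriv γ t).2, abs_nonneg (deriv γ t).1,
          abs_nonneg (deriv γ t).2, mul_nonneg (abs_nonneg (deriv γ t).1) (abs_nonneg (deriv γ t).2)]
    · apply Continuous.continuousOn
      unfold FH
      fun_prop
  have i2 : IntervalIntegrable (fun t => (γ t).1 * deriv (fun s => (γ s).2) t) volume a b :=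
    iy.continuousOn_mul (by fun_prop)
  have lG : LocallyLipschitz (fun t => l1 * (γ t).1 ^ 2 / 2 + l2 * (γ t).2 ^ 2 / 2
      - T * l2 * (γ t).1 * (γ t).2) := by
    have : ContDiff ℝ 1 (fun p : ℝ × ℝ => l1 * p.1 ^ 2 / 2 + l2 * p.2 ^ 2 / 2
      - T * l2 * p.1 * p.2) := by fun_prop
    exact this.locallyLipschitz.comp hl
  have hG := ac_of_ll lG a b
  have i3 := hG.intervalIntegrable_deriv
  have e3 := hG.integral_deriv_eq_sub
  have key : ∀ᵐ t, t ∈ uIoc a b → (Real.sqrt (1 + T ^ 2) * (FH l1 l2 (γ t) * enorm2 (deriv γ t))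
      + T * (l1 + l2) * ((γ t).1 * deriv (fun s => (γ s).2) t))
      + deriv (fun t => l1 * (γ t).1 ^ 2 / 2 + l2 * (γ t).2 ^ 2 / 2
      - T * l2 * (γ t).1 * (γ t).2) t = defW l1 l2 T (γ t) (deriv γ t) := by
    filter_upwards [hd] with t ht hm
    obtain ⟨h1, h2⟩ := ht (uIoc_subset_uIcc hm)
    have h3 := ((((h1.pow 2).const_mul l1).div_const 2).add
      (((h2.pow 2).const_mul l2).div_const 2)).sub ((h1.const_mul (T * l2)).mul h2)
    have h4 : deriv (fun t => l1 * (γ t).1 ^ 2 / 2 + l2 * (γ t).2 ^ 2 / 2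
      - T * l2 * (γ t).1 * (γ t).2) t = _ := h3.deriv
    rw [h4, h2.deriv, defW]
    push_cast
    ring
  have i4 := ((i1.const_mul (Real.sqrt (1 + T ^ 2))).add (i2.const_mul (T * (l1 + l2)))).add i3
  refine ⟨i4.congr_ae ?_, ?_⟩
  · rw [Filter.EventuallyEq, ae_restrict_iff' measurableSet_uIoc]
    exact key
  · rw [← intervalIntegral.integral_congr_ae key, intervalIntegral.integral_add
      ((i1.const_mul (Real.sqrt (1 + T ^ 2))).add (i2.const_mul (T * (l1 + l2)))) i3,
      intervalIntegral.integral_add (i1.const_mul (Real.sqrt (1 + T ^ 2)))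
      (i2.const_mul (T * (l1 + l2))), e3, intervalIntegral.integral_const_mul,
      intervalIntegral.integral_const_mul, degLen, sArea, ha, hb]
    simp
    ring

lemma flow_exists (l1 l2 T : ℝ) (p0 : ℝ × ℝ) : ∃ X Y : ℝ → ℝ, X 0 = p0.1 ∧ Y 0 = p0.2 ∧
    (∀ t, HasDerivAt X (-(l1 * X t - T * l2 * Y t)) t) ∧
    (∀ t, HasDerivAt Y (-(T * l1 * X t + l2 * Y t)) t) := by
  let f1 := ContinuousLinearMap.fst ℝ ℝ ℝ
  let f2 := ContinuousLinearMap.snd ℝ ℝ ℝ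
  let N : (ℝ × ℝ) →L[ℝ] (ℝ × ℝ) :=
    (-(l1 • f1 - (T * l2) • f2)).prod (-((T * l1) • f1 + l2 • f2))
  let G : ℝ → ℝ × ℝ := fun t => NormedSpace.exp (t • N) p0
  have hG : ∀ t, HasDerivAt G (N (G t)) t := by
    intro t
    have := (hasDerivAt_exp_smul_const' (𝕂 := ℝ) N t).clm_apply (hasDerivAt_const t p0)
    simpa using this
  refine ⟨fun t => (G t).1, fun t => (G t).2, by simp [G], by simp [G], ?_, ?_⟩
  · intro t
    have := f1.hasFDerivAt.comp_hasDerivAt t (hG t)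
    simpa [f1, f2, N, Function.comp_def] using this
  · intro t
    have := f2.hasFDerivAt.comp_hasDerivAt t (hG t)
    simpa [f1, f2, N, Function.comp_def] using this

lemma flow_bounds {l1 l2 T : ℝ} (hl1 : 0 < l1) (hl2 : 0 < l2) {X Y : ℝ → ℝ}
    (hX : ∀ t, HasDerivAt X (-(l1 * X t - T * l2 * Y t)) t)
    (hY : ∀ t, HasDerivAt Y (-(T * l1 * X t + l2 * Y t)) t) {t : ℝ} (ht : 0 ≤ t) :
    l1 * X t ^ 2 + l2 * Y t ^ 2 ≤
      (l1 * X 0 ^ 2 + l2 * Y 0 ^ 2) * Real.exp (-(2 * min l1 l2 * t)) ∧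
    (l1 * X 0 ^ 2 + l2 * Y 0 ^ 2) * Real.exp (-(2 * max l1 l2 * t)) ≤
      l1 * X t ^ 2 + l2 * Y t ^ 2 := by
  have hd : ∀ c t, HasDerivAt (fun t => (l1 * X t ^ 2 + l2 * Y t ^ 2) * Real.exp (2 * c * t))
      ((2 * (l1 * (c - l1) * X t ^ 2 + l2 * (c - l2) * Y t ^ 2)) * Real.exp (2 * c * t)) t := by
    intro c t
    have h1 := ((((hX t).pow 2).const_mul l1).add (((hY t).pow 2).const_mul l2)).mul
      (((hasDerivAt_id t).const_mul (2 * c)).exp)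
    refine h1.congr_deriv ?_
    simp
    ring
  have e : ∀ c, Real.exp (-(2 * c * t)) * Real.exp (2 * c * t) = 1 := by
    intro c; rw [← Real.exp_add]; simp
  constructor
  · have := antitone_of_hasDerivAt_nonpos (hd (min l1 l2)) (fun t => by
      apply mul_nonpos_of_nonpos_of_nonneg _ (Real.exp_pos _).le
      have h1 : l1 * (min l1 l2 - l1) ≤ 0 := by
        nlinarith [min_le_left l1 l2]
      have h2 : l2 * (min l1 l2 - l2) ≤ 0 := by
        nlinarith [min_le_right l1 l2]
      nlinarith [mul_nonneg (neg_nonneg.2 h1) (sq_nonneg (X t)),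
        mul_nonneg (neg_nonneg.2 h2) (sq_nonneg (Y t))])
    have h := this ht
    simp only [mul_zero, Real.exp_zero, mul_one] at h
    have h' := mul_le_mul_of_nonneg_right h (Real.exp_pos (-(2 * min l1 l2 * t))).le
    rwa [mul_assoc, mul_comm (Real.exp _), e, mul_one] at h'
  · have := monotone_of_hasDerivAt_nonneg (hd (max l1 l2)) (fun t => by
      apply mul_nonneg _ (Real.exp_pos _).le
      have h1 : 0 ≤ l1 * (max l1 l2 - l1) := by
        nlinarith [le_max_left l1 l2]
      have h2 : 0 ≤ l2 * (max l1 l2 - l2) := by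
        nlinarith [le_max_right l1 l2]
      positivity)
    have h := this ht
    simp only [mul_zero, Real.exp_zero, mul_one] at h
    have h' := mul_le_mul_of_nonneg_right h (Real.exp_pos (-(2 * max l1 l2 * t))).le
    rwa [mul_assoc (l1 * X t ^ 2 + l2 * Y t ^ 2), mul_comm (Real.exp (2 * _ * t)), e, mul_one] at h'

lemma ext_hasDeriv {g h : ℝ → ℝ} {C : ℝ}
    (hg : ∀ t, t < 1 → HasDerivAt g (h t) t) (hg1 : ∀ t, 1 ≤ t → g t = 0)
    (hgb : ∀ t, 0 ≤ t → t < 1 → |g t| ≤ C * (1 - t) ^ 2) (hh1 : ∀ t, 1 ≤ t → h t = 0) (t : ℝ) :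
    HasDerivAt g (h t) t := by
  rcases lt_trichotomy t 1 with ht | ht | ht
  · exact hg t ht
  · subst ht
    rw [hh1 1 le_rfl, hasDerivAt_iff_isLittleO]
    have hO : (fun x' => g x' - g 1 - (x' - 1) • (0 : ℝ)) =O[𝓝 1] fun x' => (x' - 1) ^ 2 := by
      apply Asymptotics.IsBigO.of_bound |C|
      filter_upwards [lt_mem_nhds (zero_lt_one : (0 : ℝ) < 1)] with x hx
      rw [hg1 1 le_rfl]
      simp only [smul_eq_mul, mul_zero, sub_zero, Real.norm_eq_abs, abs_pow, sq_abs]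
      rcases lt_or_ge x 1 with h1 | h1
      · have := hgb x hx.le h1
        nlinarith [le_abs_self C, sq_nonneg (x - 1)]
      · rw [hg1 x h1]; simp; positivity
    apply hO.trans_isLittleO
    have : (fun x' : ℝ => (x' - 1) ^ 2) = fun x' => (x' - 1) * (x' - 1) := by ext; ring
    rw [this]
    have h0 : (fun x' : ℝ => x' - 1) =o[𝓝 1] (fun _ => (1 : ℝ)) := by
      rw [Asymptotics.isLittleO_one_iff]
      have : Tendsto (fun x' : ℝ => x' - 1) (𝓝 1) (𝓝 (1 - 1)) :=
        (continuous_id.sub continuous_const).tendsto 1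
      simpa using this
    simpa using h0.mul_isBigO (Asymptotics.isBigO_refl (fun x' : ℝ => x' - 1) (𝓝 1))
  · rw [hh1 t ht.le]
    apply (hasDerivAt_const t (0 : ℝ)).congr_of_eventuallyEq
    filter_upwards [lt_mem_nhds ht] with x hx using hg1 x hx.le

lemma ext_cont {h : ℝ → ℝ} {C : ℝ}
    (hc : ∀ t, t < 1 → ContinuousAt h t) (hh1 : ∀ t, 1 ≤ t → h t = 0)
    (hb : ∀ t, 0 ≤ t → t < 1 → |h t| ≤ C * (1 - t)) : Continuous h := by
  rw [continuous_iff_continuousAt]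
  intro t
  rcases lt_trichotomy t 1 with ht | ht | ht
  · exact hc t ht
  · subst ht
    rw [ContinuousAt, hh1 1 le_rfl]
    apply squeeze_zero_norm' (a := fun t => |C| * |1 - t|)
    · filter_upwards [lt_mem_nhds (zero_lt_one : (0 : ℝ) < 1)] with x hx
      rcases lt_or_ge x 1 with h1 | h1
      · refine (hb x hx.le h1).trans ?_
        rw [← abs_mul]; exact le_abs_self _
      · rw [hh1 x h1]; simp; positivity
    · have : Tendsto (fun t : ℝ => |C| * |1 - t|) (𝓝 1) (𝓝 (|C| * |1 - 1|)) :=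
        (by fun_prop : Continuous (fun t : ℝ => |C| * |1 - t|)).tendsto 1
      simpa using this
  · apply (continuousAt_const (y := (0 : ℝ))).congr
    filter_upwards [lt_mem_nhds ht] with x hx using (hh1 x hx.le).symm

lemma curve_exists {l1 l2 : ℝ} (T : ℝ) (hl1 : 0 < l1) (hl2 : 0 < l2) {p0 : ℝ × ℝ}
    (hp0 : p0 ≠ (0, 0)) {X Y : ℝ → ℝ} (hX0 : X 0 = p0.1) (hY0 : Y 0 = p0.2)
    (hX : ∀ t, HasDerivAt X (-(l1 * X t - T * l2 * Y t)) t)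
    (hY : ∀ t, HasDerivAt Y (-(T * l1 * X t + l2 * Y t)) t) :
    ∃ x y k : ℝ → ℝ, ContDiff ℝ 1 x ∧ ContDiff ℝ 1 y ∧ x 0 = p0.1 ∧ y 0 = p0.2 ∧
      x 1 = 0 ∧ y 1 = 0 ∧ (∀ t, 0 ≤ k t) ∧ (∀ t, t < 1 → 0 < k t) ∧
      (∀ t, 0 ≤ t → t < 1 → 0 < l1 * x t ^ 2 + l2 * y t ^ 2) ∧
      (∀ t, HasDerivAt x (-k t * (l1 * x t - T * l2 * y t)) t) ∧
      (∀ t, HasDerivAt y (-k t * (T * l1 * x t + l2 * y t)) t) ∧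
      (∀ s, 0 ≤ s → ∃ u, 0 ≤ u ∧ u < 1 ∧ x u = X s ∧ y u = Y s) := by
  have hm : 0 < min l1 l2 := lt_min hl1 hl2
  set m := min l1 l2 with hmdef
  set K := 2 / m with hK
  have hKpos : 0 < K := by positivity
  have hQ0 : 0 < l1 * X 0 ^ 2 + l2 * Y 0 ^ 2 := by
    rw [hX0, hY0]
    by_contra hcon
    apply hp0
    have h1 : 0 ≤ l1 * p0.1 ^ 2 := by positivity
    have h2 : 0 ≤ l2 * p0.2 ^ 2 := by positivity
    have h3 : l1 * p0.1 ^ 2 = 0 := by linarith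
    have h4 : l2 * p0.2 ^ 2 = 0 := by linarith
    ext
    · simpa [hl1.ne'] using h3
    · simpa [hl2.ne'] using h4
  let τ : ℝ → ℝ := fun t => -K * Real.log (1 - t)
  let k : ℝ → ℝ := fun t => if t < 1 then K / (1 - t) else 0
  let x : ℝ → ℝ := fun t => if t < 1 then X (τ t) else 0
  let y : ℝ → ℝ := fun t => if t < 1 then Y (τ t) else 0
  have x_lt : ∀ t, t < 1 → x t = X (τ t) := fun t h => if_pos h
  have y_lt : ∀ t, t < 1 → y t = Y (τ t) := fun t h => if_pos h
  have k_lt : ∀ t, t < 1 → k t = K / (1 - t) := fun t h => if_pos h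
  have x_ge : ∀ t, 1 ≤ t → x t = 0 := fun t h => if_neg (not_lt.2 h)
  have y_ge : ∀ t, 1 ≤ t → y t = 0 := fun t h => if_neg (not_lt.2 h)
  have k_ge : ∀ t, 1 ≤ t → k t = 0 := fun t h => if_neg (not_lt.2 h)
  have hτ : ∀ t, t < 1 → HasDerivAt τ (k t) t := by
    intro t ht
    have h1 : HasDerivAt (fun t : ℝ => 1 - t) (-1) t := by
      simpa using (hasDerivAt_id t).const_sub 1
    have := (h1.log (by linarith)).const_mul (-K)
    refine this.congr_deriv ?_
    rw [k_lt t ht]; ring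
  have hτ0 : ∀ t, 0 ≤ t → t < 1 → 0 ≤ τ t := by
    intro t h0 h1
    have : Real.log (1 - t) ≤ 0 := Real.log_nonpos (by linarith) (by linarith)
    have := mul_nonneg hKpos.le (neg_nonneg.2 this)
    simp only [τ]; linarith
  have hdx : ∀ t, t < 1 → HasDerivAt x (-k t * (l1 * x t - T * l2 * y t)) t := by
    intro t ht
    have h1 := (hX (τ t)).comp t (hτ t ht)
    rw [x_lt t ht, y_lt t ht]
    refine (h1.congr_deriv (by ring)).congr_of_eventuallyEq ?_
    filter_upwards [gt_mem_nhds ht] with z hz using x_lt z hz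
  have hdy : ∀ t, t < 1 → HasDerivAt y (-k t * (T * l1 * x t + l2 * y t)) t := by
    intro t ht
    have h1 := (hY (τ t)).comp t (hτ t ht)
    rw [x_lt t ht, y_lt t ht]
    refine (h1.congr_deriv (by ring)).congr_of_eventuallyEq ?_
    filter_upwards [gt_mem_nhds ht] with z hz using y_lt z hz
  set Q0 := l1 * X 0 ^ 2 + l2 * Y 0 ^ 2 with hQ0def
  have hQ : ∀ t, 0 ≤ t → t < 1 → l1 * x t ^ 2 + l2 * y t ^ 2 ≤ Q0 * (1 - t) ^ 4 := by
    intro t h0 h1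
    have h := (flow_bounds hl1 hl2 hX hY (hτ0 t h0 h1)).1
    have e : Real.exp (-(2 * min l1 l2 * τ t)) = (1 - t) ^ 4 := by
      have : -(2 * min l1 l2 * τ t) = (4 : ℕ) * Real.log (1 - t) := by
        simp only [τ, hK, ← hmdef]; field_simp; norm_num; ring
      rw [this, Real.exp_nat_mul, Real.exp_log (by linarith)]
    rw [e] at h
    rw [x_lt t h1, y_lt t h1]; exact h
  have hbd : ∀ l z q : ℝ, ∀ t, 0 < l → 0 ≤ q → 0 ≤ t → t < 1 → l * z ^ 2 + q ≤ Q0 * (1 - t) ^ 4 →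
      |z| ≤ Real.sqrt (Q0 / l) * (1 - t) ^ 2 := by
    intro l z q t hl hq h0 h1 h
    apply abs_le_of_sq_le_sq _ (by positivity)
    rw [mul_pow, Real.sq_sqrt (by positivity)]
    rw [div_mul_eq_mul_div, le_div_iff₀ hl]
    nlinarith
  have hxb : ∀ t, 0 ≤ t → t < 1 → |x t| ≤ Real.sqrt (Q0 / l1) * (1 - t) ^ 2 := by
    intro t h0 h1
    exact hbd l1 _ (l2 * y t ^ 2) t hl1 (by positivity) h0 h1 (hQ t h0 h1)
  have hyb : ∀ t, 0 ≤ t → t < 1 → |y t| ≤ Real.sqrt (Q0 / l2) * (1 - t) ^ 2 := by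
    intro t h0 h1
    exact hbd l2 _ (l1 * x t ^ 2) t hl2 (by positivity) h0 h1 (by linarith [hQ t h0 h1])
  have hdx' := ext_hasDeriv hdx x_ge hxb (fun t ht => by rw [k_ge t ht]; simp)
  have hdy' := ext_hasDeriv hdy y_ge hyb (fun t ht => by rw [k_ge t ht]; simp)
  have hkc : ∀ t, t < 1 → ContinuousAt k t := by
    intro t ht
    have : ContinuousAt (fun t : ℝ => K / (1 - t)) t :=
      continuousAt_const.div (by fun_prop) (by linarith)
    apply this.congr
    filter_upwards [gt_mem_nhds ht] with z hz using (k_lt z hz).symm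
  have xc : ∀ t, ContinuousAt x t := fun t => (hdx' t).continuousAt
  have yc : ∀ t, ContinuousAt y t := fun t => (hdy' t).continuousAt
  have hlin : ∀ c d : ℝ, Continuous (fun t => -k t * (c * x t + d * y t)) := by
    intro c d
    apply ext_cont (C := K * (|c| * Real.sqrt (Q0 / l1) + |d| * Real.sqrt (Q0 / l2)))
    · intro t ht
      exact (hkc t ht).neg.mul ((continuousAt_const.mul (xc t)).add (continuousAt_const.mul (yc t)))
    · intro t ht; rw [k_ge t ht]; simp
    · intro t h0 h1
      have h2 : |c * x t + d * y t| ≤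
          (|c| * Real.sqrt (Q0 / l1) + |d| * Real.sqrt (Q0 / l2)) * (1 - t) ^ 2 := by
        calc |c * x t + d * y t| ≤ |c| * |x t| + |d| * |y t| := by
              rw [← abs_mul, ← abs_mul]; exact abs_add_le _ _
          _ ≤ |c| * (Real.sqrt (Q0 / l1) * (1 - t) ^ 2) +
                |d| * (Real.sqrt (Q0 / l2) * (1 - t) ^ 2) := by
              gcongr
              · exact hxb t h0 h1
              · exact hyb t h0 h1
          _ = _ := by ring
      have h3 : 0 < 1 - t := by linarith
      rw [abs_mul, abs_neg, k_lt t h1, abs_of_pos (by positivity)]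
      calc _ ≤ K / (1 - t) * ((|c| * Real.sqrt (Q0 / l1) + |d| * Real.sqrt (Q0 / l2))
              * (1 - t) ^ 2) := by gcongr
        _ = _ := by field_simp
  refine ⟨x, y, k, ?_, ?_, ?_, ?_, x_ge 1 le_rfl, y_ge 1 le_rfl, ?_, ?_, ?_, hdx', hdy', ?_⟩
  · rw [contDiff_one_iff_deriv]
    refine ⟨fun t => (hdx' t).differentiableAt, ?_⟩
    have : deriv x = fun t => -k t * (l1 * x t + (-(T * l2)) * y t) := by
      ext t; rw [(hdx' t).deriv]; ring
    rw [this]; exact hlin _ _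
  · rw [contDiff_one_iff_deriv]
    refine ⟨fun t => (hdy' t).differentiableAt, ?_⟩
    have : deriv y = fun t => -k t * (T * l1 * x t + l2 * y t) := by
      ext t; rw [(hdy' t).deriv]
    rw [this]; exact hlin _ _
  · rw [x_lt 0 one_pos, ← hX0]; simp [τ]
  · rw [y_lt 0 one_pos, ← hY0]; simp [τ]
  · intro t
    rcases lt_or_ge t 1 with h | h
    · rw [k_lt t h]; have : 0 < 1 - t := by linarith
      positivity
    · rw [k_ge t h]
  · intro t h
    rw [k_lt t h]; have : 0 < 1 - t := by linarith
    positivity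
  · intro t h0 h1
    rw [x_lt t h1, y_lt t h1]
    exact lt_of_lt_of_le (by positivity) (flow_bounds hl1 hl2 hX hY (hτ0 t h0 h1)).2
  · intro s hs
    have h1 : 1 - Real.exp (-s / K) < 1 := by linarith [Real.exp_pos (-s / K)]
    have h2 : τ (1 - Real.exp (-s / K)) = s := by
      simp only [τ, sub_sub_cancel, Real.log_exp]; field_simp
    refine ⟨1 - Real.exp (-s / K), ?_, h1, ?_, ?_⟩
    · have : Real.exp (-s / K) ≤ 1 := by
        rw [Real.exp_le_one_iff]; apply div_nonpos_of_nonpos_of_nonneg <;> linarith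
      linarith
    · rw [x_lt _ h1, h2]
    · rw [y_lt _ h1, h2]

lemma defW_ae_zero {l1 l2 T a b : ℝ} {γ : ℝ → ℝ × ℝ} (hab : a ≤ b)
    (hi : IntervalIntegrable (fun t => defW l1 l2 T (γ t) (deriv γ t)) volume a b)
    (h : ∫ t in a..b, defW l1 l2 T (γ t) (deriv γ t) ≤ 0) :
    ∀ᵐ t, t ∈ Icc a b → defW l1 l2 T (γ t) (deriv γ t) = 0 := by
  have h0 : ∫ t in a..b, defW l1 l2 T (γ t) (deriv γ t) = 0 :=
    le_antisymm h (intervalIntegral.integral_nonneg hab (fun t _ => defW_nonneg _ _ _ _ _))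
  rw [intervalIntegral.integral_eq_zero_iff_of_le_of_nonneg_ae hab
    (Eventually.of_forall (fun t => defW_nonneg _ _ _ _ _)) hi] at h0
  rw [Measure.restrict_congr_set Ioc_ae_eq_Icc, Filter.EventuallyEq,
    ae_restrict_iff' measurableSet_Icc] at h0
  exact h0

lemma FH_sq (l1 l2 : ℝ) (p : ℝ × ℝ) : FH l1 l2 p ^ 2 = l1 ^ 2 * p.1 ^ 2 + l2 ^ 2 * p.2 ^ 2 :=
  Real.sq_sqrt (by positivity)

lemma Q_anti {l1 l2 T a b : ℝ} (hl1 : 0 < l1) (hl2 : 0 < l2) {γ : ℝ → ℝ × ℝ}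
    (hl : LocallyLipschitz γ) (hab : a ≤ b)
    (hW : ∀ᵐ t, t ∈ Icc a b → defW l1 l2 T (γ t) (deriv γ t) = 0) :
    l1 * (γ b).1 ^ 2 + l2 * (γ b).2 ^ 2 ≤ l1 * (γ a).1 ^ 2 + l2 * (γ a).2 ^ 2 := by
  have lG : LocallyLipschitz (fun t => l1 * (γ t).1 ^ 2 + l2 * (γ t).2 ^ 2) := by
    have : ContDiff ℝ 1 (fun p : ℝ × ℝ => l1 * p.1 ^ 2 + l2 * p.2 ^ 2) := by fun_prop
    exact this.locallyLipschitz.comp hl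
  refine anti_of_ae lG hab ?_
  filter_upwards [hW, ae_diff hl a b] with t h1 h2 ht
  obtain ⟨h3, h4⟩ := h2 (by rwa [uIcc_of_le hab])
  refine ⟨_, ?_, ((h3.pow 2).const_mul l1).add ((h4.pow 2).const_mul l2)⟩
  have hs := FH_sq l1 l2 (γ t)
  have h0 : 0 ≤ FH l1 l2 (γ t) := Real.sqrt_nonneg _
  rcases h0.eq_or_lt with h | h
  · rw [← h] at hs
    have e1 : (γ t).1 = 0 := by
      have : l1 ^ 2 * (γ t).1 ^ 2 = 0 := by
        have : 0 ≤ l1 ^ 2 * (γ t).1 ^ 2 := by positivity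
        have : 0 ≤ l2 ^ 2 * (γ t).2 ^ 2 := by positivity
        linarith
      simpa [hl1.ne'] using this
    have e2 : (γ t).2 = 0 := by
      have : l2 ^ 2 * (γ t).2 ^ 2 = 0 := by
        have : 0 ≤ l1 ^ 2 * (γ t).1 ^ 2 := by positivity
        have : 0 ≤ l2 ^ 2 * (γ t).2 ^ 2 := by positivity
        linarith
      simpa [hl2.ne'] using this
    simp [e1, e2]
  · obtain ⟨e1, e2⟩ := defW_zero (h1 ht) h
    have hsn : 0 ≤ enorm2 (deriv γ t) / (Real.sqrt (1 + T ^ 2) * FH l1 l2 (γ t)) := by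
      have : 0 ≤ enorm2 (deriv γ t) := Real.sqrt_nonneg _
      positivity
    set σ := enorm2 (deriv γ t) / (Real.sqrt (1 + T ^ 2) * FH l1 l2 (γ t))
    rw [e1, e2]
    have : 0 ≤ σ * (2 * FH l1 l2 (γ t) ^ 2) := by positivity
    rw [hs] at this
    push_cast
    linarith

set_option maxHeartbeats 1000000 in
lemma on_flow {l1 l2 T a b : ℝ} (hl1 : 0 < l1) (hl2 : 0 < l2) {γ : ℝ → ℝ × ℝ}
    (hl : LocallyLipschitz γ) (hab : a ≤ b)
    (hW : ∀ᵐ t, t ∈ Icc a b → defW l1 l2 T (γ t) (deriv γ t) = 0)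
    (hpos : ∀ t ∈ Icc a b, 0 < FH l1 l2 (γ t)) {X Y : ℝ → ℝ}
    (hX : ∀ t, HasDerivAt X (-(l1 * X t - T * l2 * Y t)) t)
    (hY : ∀ t, HasDerivAt Y (-(T * l1 * X t + l2 * Y t)) t)
    (hX0 : X 0 = (γ a).1) (hY0 : Y 0 = (γ a).2) :
    ∃ s, 0 ≤ s ∧ (γ b).1 = X s ∧ (γ b).2 = Y s := by
  have hc := hl.continuous
  have hFc : Continuous (fun t => FH l1 l2 (γ t)) := by unfold FH; fun_prop
  have hdm := measurable_deriv γ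
  have hem : Measurable (fun t => enorm2 (deriv γ t)) := by unfold enorm2; fun_prop
  -- bound on derivative
  obtain ⟨L, hL⟩ := (hl.locallyLipschitzOn (s := Icc (a - 1) (b + 1))
    ).exists_lipschitzOnWith_of_compact isCompact_Icc
  have hdb : ∀ t ∈ Icc a b, enorm2 (deriv γ t) ≤ 2 * L := by
    intro t ht
    have h1 : ‖deriv γ t‖ ≤ L :=
      norm_deriv_le_of_lipschitzOn (Icc_mem_nhds (by linarith [ht.1]) (by linarith [ht.2])) hL
    have h2 : |(deriv γ t).1| ≤ L := (norm_fst_le (deriv γ t)).trans h1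
    have h3 : |(deriv γ t).2| ≤ L := (norm_snd_le (deriv γ t)).trans h1
    unfold enorm2
    apply Real.sqrt_le_iff.2 ⟨by positivity, _⟩
    nlinarith [sq_abs (deriv γ t).1, sq_abs (deriv γ t).2, abs_nonneg (deriv γ t).1,
      abs_nonneg (deriv γ t).2]
  obtain ⟨t0, ht0, hmin⟩ := isCompact_Icc.exists_isMinOn (nonempty_Icc.2 hab) hFc.continuousOn
  have hc0 := hpos t0 ht0
  set c0 := FH l1 l2 (γ t0) with hc0def
  have hq : 1 ≤ Real.sqrt (1 + T ^ 2) := by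
    rw [Real.one_le_sqrt]; nlinarith [sq_nonneg T]
  let σ : ℝ → ℝ := (Icc a b).indicator
    (fun t => enorm2 (deriv γ t) / (Real.sqrt (1 + T ^ 2) * FH l1 l2 (γ t)))
  have σm : Measurable σ := by
    apply Measurable.indicator _ measurableSet_Icc
    exact hem.div (measurable_const.mul hFc.measurable)
  have σ0 : ∀ t, 0 ≤ σ t := by
    intro t
    apply indicator_nonneg
    intro t _
    exact div_nonneg (Real.sqrt_nonneg _) (mul_nonneg (Real.sqrt_nonneg _) (Real.sqrt_nonneg _))
  have σb : ∀ t, ‖σ t‖ ≤ 2 * L / c0 := by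
    intro t
    rw [Real.norm_of_nonneg (σ0 t)]
    by_cases ht : t ∈ Icc a b
    · simp only [σ, indicator_of_mem ht]
      have h1 : c0 ≤ FH l1 l2 (γ t) := hmin ht
      apply div_le_div₀ (by positivity) (hdb t ht) hc0
      nlinarith
    · simp only [σ, indicator_of_notMem ht]
      positivity
  have σi : ∀ u v, IntervalIntegrable σ volume u v := by
    intro u v
    refine (intervalIntegrable_const (c := 2 * L / c0)).mono_fun σm.aestronglyMeasurable ?_
    refine Eventually.of_forall (fun t => (σb t).trans (le_abs_self _))
  let τ : ℝ → ℝ := fun t => ∫ u in a..t, σ u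
  have τl : LocallyLipschitz τ := by
    apply LipschitzWith.locallyLipschitz (K := Real.toNNReal (2 * L / c0))
    apply LipschitzWith.of_dist_le_mul
    intro u v
    rw [Real.coe_toNNReal _ (by positivity), Real.dist_eq, Real.dist_eq]
    simp only [τ]
    rw [intervalIntegral.integral_interval_sub_left (σi _ _) (σi _ _)]
    exact intervalIntegral.norm_integral_le_of_norm_le_const (fun t _ => σb t)
  have τd : ∀ᵐ t, t ∈ uIcc a b → HasDerivAt τ (σ t) t := by
    filter_upwards [(σi a b).ae_hasDerivAt_integral] with t ht hm
    exact ht hm a (by simp)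
  have hτa : τ a = 0 := by simp [τ]
  have hτb : 0 ≤ τ b := intervalIntegral.integral_nonneg hab (fun t _ => σ0 t)
  have es : ∀ t ∈ Icc a b,
      σ t = enorm2 (deriv γ t) / (Real.sqrt (1 + T ^ 2) * FH l1 l2 (γ t)) :=
    fun t ht => indicator_of_mem ht _
  clear_value τ σ
  have Xd : ContDiff ℝ 1 X := by
    rw [contDiff_one_iff_deriv]
    refine ⟨fun t => (hX t).differentiableAt, ?_⟩
    have : deriv X = fun t => -(l1 * X t - T * l2 * Y t) := funext fun t => (hX t).deriv
    rw [this]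
    have h1 : Continuous X := continuous_iff_continuousAt.2 fun t => (hX t).continuousAt
    have h2 : Continuous Y := continuous_iff_continuousAt.2 fun t => (hY t).continuousAt
    fun_prop
  have Yd : ContDiff ℝ 1 Y := by
    rw [contDiff_one_iff_deriv]
    refine ⟨fun t => (hY t).differentiableAt, ?_⟩
    have : deriv Y = fun t => -(T * l1 * X t + l2 * Y t) := funext fun t => (hY t).deriv
    rw [this]
    have h1 : Continuous X := continuous_iff_continuousAt.2 fun t => (hX t).continuousAt
    have h2 : Continuous Y := continuous_iff_continuousAt.2 fun t => (hY t).continuousAt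
    fun_prop
  have Dl : LocallyLipschitz (fun t => l1 * ((γ t).1 - X (τ t)) ^ 2
      + l2 * ((γ t).2 - Y (τ t)) ^ 2) := by
    have hu : LocallyLipschitz (fun t => (γ t).1 - X (τ t)) :=
      (ll_fst hl).sub (Xd.locallyLipschitz.comp τl)
    have hv : LocallyLipschitz (fun t => (γ t).2 - Y (τ t)) :=
      (ll_snd hl).sub (Yd.locallyLipschitz.comp τl)
    have : ContDiff ℝ 1 (fun p : ℝ × ℝ => l1 * p.1 ^ 2 + l2 * p.2 ^ 2) := by fun_prop
    exact this.locallyLipschitz.comp (hu.prodMk hv)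
  have hD := anti_of_ae Dl hab (by
    filter_upwards [hW, ae_diff hl a b, τd] with t h1 h2 h3 ht
    have ht' : t ∈ uIcc a b := by rwa [uIcc_of_le hab]
    obtain ⟨e1, e2⟩ := defW_zero (h1 ht) (hpos t ht)
    obtain ⟨d1, d2⟩ := h2 ht'
    have d3 : HasDerivAt τ (σ t) t := h3 ht'
    rw [← es t ht] at e1 e2
    have d4 := (hX (τ t)).comp t d3
    have d5 := (hY (τ t)).comp t d3
    refine ⟨_, ?_, (((d1.sub d4).pow 2).const_mul l1).add (((d2.sub d5).pow 2).const_mul l2)⟩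
    rw [e1, e2]
    have : 0 ≤ σ t * (2 * ((l1 * ((γ t).1 - X (τ t))) ^ 2 + (l2 * ((γ t).2 - Y (τ t))) ^ 2)) :=
      mul_nonneg (σ0 t) (by positivity)
    simp
    linarith)
  rw [hτa, hX0, hY0] at hD
  simp only [sub_self] at hD
  have n1 : 0 ≤ l1 * ((γ b).1 - X (τ b)) ^ 2 := by positivity
  have n2 : 0 ≤ l2 * ((γ b).2 - Y (τ b)) ^ 2 := by positivity
  refine ⟨τ b, hτb, ?_, ?_⟩
  · have : l1 * ((γ b).1 - X (τ b)) ^ 2 = 0 := by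
      norm_num at hD; linarith
    have : (γ b).1 - X (τ b) = 0 := by simpa [hl1.ne'] using this
    linarith
  · have : l2 * ((γ b).2 - Y (τ b)) ^ 2 = 0 := by
      norm_num at hD; linarith
    have : (γ b).2 - Y (τ b) = 0 := by simpa [hl2.ne'] using this
    linarith

lemma Q_pos {l1 l2 : ℝ} (hl1 : 0 < l1) (hl2 : 0 < l2) {p : ℝ × ℝ} (hp : p ≠ (0, 0)) :
    0 < l1 * p.1 ^ 2 + l2 * p.2 ^ 2 := by
  by_contra hcon
  apply hp
  have h1 : 0 ≤ l1 * p.1 ^ 2 := by positivity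
  have h2 : 0 ≤ l2 * p.2 ^ 2 := by positivity
  have h3 : l1 * p.1 ^ 2 = 0 := by linarith
  have h4 : l2 * p.2 ^ 2 = 0 := by linarith
  ext
  · simpa [hl1.ne'] using h3
  · simpa [hl2.ne'] using h4

lemma reparam {a b : ℝ} (hab : a ≤ b) {g f : ℝ → ℝ} (hg : ContinuousOn g (Icc 0 1))
    (hga : StrictAntiOn g (Icc 0 1)) (hf : ContinuousOn f (Icc a b))
    (hfa : AntitoneOn f (Icc a b)) (h0 : f a = g 0) (h1 : f b = g 1) :
    ∃ φ : ℝ → ℝ, MonotoneOn φ (Icc a b) ∧ ContinuousOn φ (Icc a b) ∧ φ a = 0 ∧ φ b = 1 ∧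
      ∀ t ∈ Icc a b, φ t ∈ Icc (0 : ℝ) 1 ∧ g (φ t) = f t := by
  have ha : a ∈ Icc a b := left_mem_Icc.2 hab
  have hb : b ∈ Icc a b := right_mem_Icc.2 hab
  have hex : ∀ t : ℝ, ∃ u : Icc (0 : ℝ) 1, t ∈ Icc a b → g u = f t := by
    intro t
    by_cases ht : t ∈ Icc a b
    · have : f t ∈ Icc (g 1) (g 0) :=
        ⟨h1 ▸ hfa ht hb ht.2, h0 ▸ hfa ha ht ht.1⟩
      obtain ⟨u, hu, hu'⟩ := intermediate_value_Icc' zero_le_one hg this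
      exact ⟨⟨u, hu⟩, fun _ => hu'⟩
    · exact ⟨⟨0, by simp⟩, fun h => absurd h ht⟩
  choose ψ hψ using hex
  have hinj := hga.injOn
  refine ⟨fun t => ψ t, ?_, ?_, ?_, ?_, fun t ht => ⟨(ψ t).2, hψ t ht⟩⟩
  · intro s hs t ht hst
    have := hfa hs ht hst
    rw [← hψ s hs, ← hψ t ht] at this
    exact (hga.le_iff_ge (ψ t).2 (ψ s).2).1 this
  · have hemb : IsClosedEmbedding (fun u : Icc (0 : ℝ) 1 => g u) := by
      apply Continuous.isClosedEmbedding
      · exact continuousOn_iff_continuous_domRestrict.1 hg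
      · intro u v huv
        exact Subtype.ext (hinj u.2 v.2 huv)
    rw [continuousOn_iff_continuous_domRestrict]
    have h3 : Continuous (fun t : Icc a b => ψ t) := by
      rw [hemb.isEmbedding.continuous_iff]
      have : ((fun u : Icc (0 : ℝ) 1 => g u) ∘ fun t : Icc a b => ψ t) = (Icc a b).domRestrict f := by
        ext t; exact hψ t t.2
      rw [this]
      exact continuousOn_iff_continuous_domRestrict.1 hf
    exact continuous_subtype_val.comp h3
  · exact hinj (ψ a).2 (by simp) (by rw [hψ a ha, h0])
  · exact hinj (ψ b).2 (by simp) (by rw [hψ b hb, h1])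

/-- for the homogeneous factor `F_H` and any `A ∈ ℝ`, `p₀ ≠ (0,0)`, the
isoperimetric problem from `p₀` to the origin has a minimizer, unique up to
orientation-preserving reparametrization, which meets the origin only at its terminal endpoint
and has finite Euclidean arclength bounded by a constant. -/
theorem quadratic_one_well_minimizer (l1 l2 : ℝ) (hl1 : 0 < l1) (hl2 : 0 < l2)
    (A : ℝ) (p0 : ℝ × ℝ) (hp0 : p0 ≠ (0, 0)) :
    ∃ a b γ, IsCurve a b γ p0 (0, 0) ∧ sArea a b γ = A ∧
      (∀ a' b' γ', IsCurve a' b' γ' p0 (0, 0) → sArea a' b' γ' = A →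
        degLen (FH l1 l2) a b γ ≤ degLen (FH l1 l2) a' b' γ') ∧
      (∀ a' b' γ', IsCurve a' b' γ' p0 (0, 0) → sArea a' b' γ' = A →
        degLen (FH l1 l2) a' b' γ' ≤ degLen (FH l1 l2) a b γ →
        SameCurve a' b' γ' a b γ) ∧
      (∀ t : ℝ, a ≤ t → t < b → γ t ≠ (0, 0)) ∧
      (∃ C : ℝ, (∫ t in a..b, enorm2 (deriv γ t)) ≤ C) := by
  have hQ0 := Q_pos hl1 hl2 hp0
  obtain ⟨T, hT⟩ : ∃ T : ℝ, -(T * (l1 * p0.1 ^ 2 + l2 * p0.2 ^ 2) + 2 * l2 * p0.1 * p0.2)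
      / (2 * (l1 + l2)) = A := by
    refine ⟨-(2 * (l1 + l2) * A + 2 * l2 * p0.1 * p0.2) / (l1 * p0.1 ^ 2 + l2 * p0.2 ^ 2), ?_⟩
    rw [div_mul_cancel₀ _ hQ0.ne']
    field_simp
    ring
  obtain ⟨X, Y, hX0, hY0, hX, hY⟩ := flow_exists l1 l2 T p0
  obtain ⟨x, y, k, cx, cy, x0, y0, x1, y1, k0, kpos, Qpos, dx, dy, hon⟩ :=
    curve_exists T hl1 hl2 hp0 hX0 hY0 hX hY
  have hγd : ∀ t, HasDerivAt (fun t => (x t, y t))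
      (-k t * (l1 * x t - T * l2 * y t), -k t * (T * l1 * x t + l2 * y t)) t :=
    fun t => (dx t).prodMk (dy t)
  have hcurve : IsCurve 0 1 (fun t => (x t, y t)) p0 (0, 0) :=
    ⟨zero_le_one, (cx.prodMk cy).locallyLipschitz, by ext <;> simp [x0, y0], by simp [x1, y1]⟩
  have harea : sArea 0 1 (fun t => (x t, y t)) = A := by
    unfold sArea
    have hB : ∀ t, HasDerivAt (fun t => (T * (l1 * x t ^ 2 + l2 * y t ^ 2)
        + 2 * l2 * x t * y t) / (2 * (l1 + l2))) (x t * deriv y t) t := by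
      intro t
      have := ((((((dx t).pow 2).const_mul l1).add (((dy t).pow 2).const_mul l2)).const_mul T).add
        (((dx t).const_mul (2 * l2)).mul (dy t))).div_const (2 * (l1 + l2))
      refine this.congr_deriv ?_
      rw [(dy t).deriv]
      push_cast
      field_simp
      ring
    have hi : IntervalIntegrable (fun t => x t * deriv y t) volume 0 1 := by
      apply Continuous.intervalIntegrable
      exact cx.continuous.mul (contDiff_one_iff_deriv.1 cy).2
    have := intervalIntegral.integral_eq_sub_of_hasDerivAt (fun t _ => hB t) hi
    rw [x1, y1, x0, y0] at this
    change ∫ t in (0 : ℝ)..1, x t * deriv y t = A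
    rw [this, ← hT]
    ring
  have hopt : ∫ t in (0 : ℝ)..1, defW l1 l2 T ((fun t => (x t, y t)) t)
      (deriv (fun t => (x t, y t)) t) = 0 := by
    have : ∀ t, defW l1 l2 T ((fun t => (x t, y t)) t) (deriv (fun t => (x t, y t)) t) = 0 := by
      intro t
      rw [(hγd t).deriv]
      exact defW_flow (k0 t) rfl rfl
    simp only [this, intervalIntegral.integral_zero]
  rw [(defect l1 l2 T hcurve).2, harea] at hopt
  have hq : 0 < Real.sqrt (1 + T ^ 2) := Real.sqrt_pos.2 (by positivity)
  have hQd : ∀ t, HasDerivAt (fun t => l1 * x t ^ 2 + l2 * y t ^ 2)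
      (-(2 * k t * ((l1 * x t) ^ 2 + (l2 * y t) ^ 2))) t := by
    intro t
    refine ((((dx t).pow 2).const_mul l1).add (((dy t).pow 2).const_mul l2)).congr_deriv ?_
    push_cast
    ring
  refine ⟨0, 1, fun t => (x t, y t), hcurve, harea, ?_, ?_, ?_, ⟨_, le_rfl⟩⟩
  · intro a' b' η hη hA
    have h1 := (defect l1 l2 T hη).2
    have h2 := intervalIntegral.integral_nonneg (μ := volume) hη.1
      (fun t _ => defW_nonneg l1 l2 T (η t) (deriv η t))
    rw [h1, hA] at h2
    nlinarith
  · intro a' b' η hη hA hle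
    obtain ⟨i1, h1⟩ := defect l1 l2 T hη
    rw [hA] at h1
    have hW := defW_ae_zero hη.1 i1 (by rw [h1]; nlinarith)
    obtain ⟨hab, hl, ha, hb⟩ := hη
    have hc := hl.continuous
    have hanti : AntitoneOn (fun t => l1 * (η t).1 ^ 2 + l2 * (η t).2 ^ 2) (Icc a' b') := by
      intro s hs t ht hst
      refine Q_anti (T := T) hl1 hl2 hl hst ?_
      filter_upwards [hW] with u hu hm
      exact hu ⟨hs.1.trans hm.1, hm.2.trans ht.2⟩
    have hstrict : StrictAntiOn (fun t => l1 * x t ^ 2 + l2 * y t ^ 2) (Icc 0 1) := by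
      apply strictAntiOn_of_deriv_neg (convex_Icc 0 1)
      · exact (continuous_iff_continuousAt.2 fun t => (hQd t).continuousAt).continuousOn
      · intro t ht
        rw [interior_Icc] at ht
        rw [(hQd t).deriv, neg_lt_zero]
        have h2 := Qpos t ht.1.le ht.2
        have h3 : 0 < (l1 * x t) ^ 2 + (l2 * y t) ^ 2 := by
          have h4 : (x t, y t) ≠ (0, 0) := by
            intro h; simp only [Prod.mk.injEq] at h; rw [h.1, h.2] at h2; simp at h2
          have := Q_pos (sq_pos_of_pos hl1) (sq_pos_of_pos hl2) h4
          simp only at this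
          linarith
        have := kpos t ht.2
        positivity
    obtain ⟨φ, φm, φc, φa, φb, hφ⟩ := reparam hab
      (continuous_iff_continuousAt.2 fun t => (hQd t).continuousAt).continuousOn hstrict
      (f := fun t => l1 * (η t).1 ^ 2 + l2 * (η t).2 ^ 2)
      (by fun_prop) hanti (by simp [ha, x0, y0]) (by simp [hb, x1, y1])
    refine ⟨φ, φm, φc, φa, φb, fun t ht => ?_⟩
    obtain ⟨m, e⟩ := hφ t ht
    by_cases h0 : η t = (0, 0)
    · rw [h0] at e
      have : ¬ ((x (φ t), y (φ t)) ≠ (0, 0)) := by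
        intro h
        have := Q_pos hl1 hl2 h
        simp at this e
        linarith
      rw [h0]; exact (not_not.1 this).symm
    · have hpos : ∀ u ∈ Icc a' t, 0 < FH l1 l2 (η u) := by
        intro u hu
        have h2 := hanti ⟨hu.1, hu.2.trans ht.2⟩ ht hu.2
        simp only at h2
        have h3 := Q_pos hl1 hl2 h0
        have h4 : η u ≠ (0, 0) := by
          intro h; rw [h] at h2; simp at h2; linarith
        unfold FH
        exact Real.sqrt_pos.2 (Q_pos (sq_pos_of_pos hl1) (sq_pos_of_pos hl2) h4)
      obtain ⟨s, hs, e1, e2⟩ := on_flow hl1 hl2 hl ht.1 (by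
        filter_upwards [hW] with u hu hm
        exact hu ⟨hm.1, hm.2.trans ht.2⟩) hpos hX hY (by rw [ha, hX0]) (by rw [ha, hY0])
      obtain ⟨u, u0, u1, e3, e4⟩ := hon s hs
      have : u = φ t := by
        apply hstrict.injOn ⟨u0, u1.le⟩ m
        simp only [e]
        rw [e1, e2, e3, e4]
      rw [← this]
      ext
      · rw [e1, ← e3]
      · rw [e2, ← e4]
  · intro t h0 h1 h
    simp only [Prod.mk.injEq] at h
    have := Qpos t h0 h1
    rw [h.1, h.2] at this
    simp at this
end
end
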